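/- arXiv:2402.18939 — 3 statements merged into one kernel-verified Lean document; each statement's English description precedes it below -/
import Mathlib

section
/- Theorem 7: With the reduced form Q and parameters as in the context but with d = ((32/3)·|D|)^{1/5} (so d⁵ = (8/3)aAt), and with m, K defined from this d, suppose the reals c_1, …, c_5 satisfy c_2 ∈ ℤ, and suppose a < 1/2, d ≤ 1, a + d ≤ 1, and (m, K) = (1,2). Then there exist x_1, …, x_5 with x_i − c_i ∈ ℤ for every i such that 0 < Q(x_1,…,x_5) < d. -/
/-- The positive definite ternary form of the Birch reduction. -/
noncomputable def redPhi (a A t lam h₄ h₅ : ℝ) (u v w : ℝ) : ℝ :=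
  a * (u + h₄*v + h₅*w)^2 + A * (v + lam*w)^2 + t * w^2

/-- The Birch-reduced indefinite quadratic form of type (1,4). -/
noncomputable def redQ (a A t lam h₄ h₅ a₂ a₃ a₄ a₅ : ℝ) (x₁ x₂ x₃ x₄ x₅ : ℝ) : ℝ :=
  (x₁ + a₂*x₂ + a₃*x₃ + a₄*x₄ + a₅*x₅) * x₂ - redPhi a A t lam h₄ h₅ x₃ x₄ x₅

/-!
Suppose that no point with `x₂ ∈ {1, -1, 2}` gives a value in `(0, d)`. Completing squares, for each
of these `x₂` the ternary form, scaled by `1 / d`, has no value on a translate of `ℤ³` in any of the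
open unit intervals of an arithmetic progression, of difference `1 / d` for `x₂ = ±1` and `2 / d`
for `x₂ = 2`. For `x₂ = ±1` take the first interval that has a value below it, and cut the lattice
into planes and the planes into rows. A row of a binary form reveals, by how many of its points lie
below the gap, how its nearest point sits; combining rows and using that the determinant fixes
`κ α τ` in terms of `d`, the lattice near the origin must look like a right prism or like a
face-centred arrangement, in the same way for `x₂ = 1` and `x₂ = -1`. The corresponding intervals
have lower ends `r` and `r'`, and the linear term of `Q` ties these to an interval avoided at
`x₂ = 2`, whose lower end `3 r + r' + 3` is moved by `3 M` or `4 M`, `M = 1 / d`, according to a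
parity. In each of the four cases some point of the translated lattice falls into the gap.
-/

/-- The distance from `x` to the nearest integer. -/
noncomputable def distInt (x : ℝ) : ℝ := |x - round x|

theorem distInt_nonneg (x : ℝ) : 0 ≤ distInt x := abs_nonneg _

theorem distInt_le_half (x : ℝ) : distInt x ≤ 1 / 2 := abs_sub_round x

theorem distInt_le (x : ℝ) (n : ℤ) : distInt x ≤ |x - n| := round_le x n

theorem distInt_eq_abs {x : ℝ} (hx : |x| ≤ 1 / 2) : distInt x = |x| := by
  refine le_antisymm (by simpa using distInt_le x 0) ?_
  rcases eq_or_ne (round x) 0 with h | h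
  · simp [distInt, h]
  · have h1 : (1 : ℝ) ≤ |(round x : ℝ)| := by exact_mod_cast Int.one_le_abs h
    have h2 := abs_sub_abs_le_abs_sub (round x : ℝ) x
    rw [abs_sub_comm] at h2
    unfold distInt
    linarith

theorem exists_eq_add_abs_eq_distInt (x : ℝ) : ∃ (n : ℤ) (z : ℝ), x = n + z ∧ |z| = distInt x :=
  ⟨round x, x - round x, by ring, rfl⟩

theorem mul_add_distInt_sq_mem {κ k : ℝ} (hκ : 0 ≤ κ) (x : ℝ) (hk : 0 ≤ k) :
    κ * (k + distInt x) ^ 2 ∈ Set.Icc (κ * k ^ 2) (κ * (k + 1 / 2) ^ 2) := by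
  have h0 := distInt_nonneg x
  have h1 := distInt_le_half x
  constructor <;> gcongr
  linarith

theorem mul_distInt_sq_le {κ : ℝ} (hκ : 0 ≤ κ) (x : ℝ) : κ * distInt x ^ 2 ≤ κ / 4 := by
  have := (mul_add_distInt_sq_mem hκ x le_rfl).2
  simp only [zero_add] at this
  linarith

theorem mul_sub_distInt_sq_mem {κ k : ℝ} (hκ : 0 ≤ κ) (x : ℝ) (hk : 1 / 2 ≤ k) :
    κ * (k - distInt x) ^ 2 ∈ Set.Icc (κ * (k - 1 / 2) ^ 2) (κ * k ^ 2) := by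
  have h0 := distInt_nonneg x
  have h1 := distInt_le_half x
  constructor <;> gcongr <;> linarith

/-- The points `κ (x + i)²`, `i ∈ ℤ`, of a row avoid the open unit interval `(p, p + 1)`. -/
def RowAvoids (κ x p : ℝ) : Prop :=
  ∀ i : ℤ, κ * (x + i) ^ 2 ≤ p ∨ p + 1 ≤ κ * (x + i) ^ 2

/-- All points of the row lie above the gap. -/
structure RowEmpty (κ x p : ℝ) : Prop where
  upper : p + 1 ≤ κ / 4
  outer : ∀ i : ℤ, p + 1 ≤ κ * (x + i) ^ 2

/-- Exactly two points of the row lie below the gap. -/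
structure RowTwo (κ x p : ℝ) : Prop where
  lower : κ / 4 ≤ p
  upper : p + 1 ≤ 9 / 4 * κ
  offset : 1 ≤ 4 * κ * distInt x
  inner : κ * (1 - distInt x) ^ 2 ≤ p
  outer : p + 1 ≤ κ * (1 + distInt x) ^ 2

/-- Exactly three points of the row lie below the gap. -/
structure RowThree (κ x p : ℝ) : Prop where
  lower : κ ≤ p
  upper : p + 1 ≤ 4 * κ
  offset : 6 * κ * distInt x ≤ 3 * κ - 1
  inner : κ * (1 + distInt x) ^ 2 ≤ p
  outer : p + 1 ≤ κ * (2 - distInt x) ^ 2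

/-- Exactly four points of the row lie below the gap. -/
structure RowFour (κ x p : ℝ) : Prop where
  lower : 9 / 4 * κ ≤ p
  upper : p + 1 ≤ 25 / 4 * κ
  offset : 1 ≤ 8 * κ * distInt x
  inner : κ * (2 - distInt x) ^ 2 ≤ p
  outer : p + 1 ≤ κ * (2 + distInt x) ^ 2

namespace RowAvoids

variable {κ x p : ℝ}

theorem shell (H : RowAvoids κ x p) (k : ℤ) :
    κ * (k + distInt x) ^ 2 ≤ p ∨ p + 1 ≤ κ * (k + distInt x) ^ 2 := by
  rcases abs_cases (x - round x) with ⟨hx, -⟩ | ⟨hx, -⟩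
  · convert H (k - round x) using 3 <;> simp only [distInt, hx] <;> push_cast <;> ring
  · convert H (-k - round x) using 3 <;> simp only [distInt, hx] <;> push_cast <;> ring

theorem empty (H : RowAvoids κ x p) (hκ : 0 < κ) (hκ' : κ < 1) (hp : p < κ / 4) :
    RowEmpty κ x p := by
  have near := H.shell 0
  have far := H.shell (-1)
  push_cast at near far
  have ⟨hd, hd'⟩ := mul_add_distInt_sq_mem hκ.le x le_rfl
  have ⟨hs, _⟩ := mul_sub_distInt_sq_mem hκ.le x (k := 1) (by norm_num)
  have nearest : p + 1 ≤ κ * distInt x ^ 2 := by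
    rcases near with near | near
    · rcases far with far | far <;> linarith
    · linarith
  refine ⟨by linarith, fun i => nearest.trans ?_⟩
  have hi : distInt x ≤ |x + i| := by simpa using distInt_le x (-i)
  have := distInt_nonneg x
  rw [← sq_abs (x + i)]
  gcongr

theorem two (H : RowAvoids κ x p) (hκ : 0 < κ) (hκ' : κ < 1) (hp : κ / 4 - 1 < p) (hp' : p < κ) :
    RowTwo κ x p := by
  have h0 := H.shell 0
  have h1 := H.shell (-1)
  have h2 := H.shell 1
  push_cast at h0 h1 h2
  have ⟨_, b0⟩ := mul_add_distInt_sq_mem hκ.le x le_rfl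
  have ⟨b1, _⟩ := mul_sub_distInt_sq_mem hκ.le x (k := 1) (by norm_num)
  have nearest : κ * distInt x ^ 2 ≤ p := by rcases h0 with h | h <;> linarith
  have inner : κ * (1 - distInt x) ^ 2 ≤ p := by rcases h1 with h | h <;> linarith
  have outer : p + 1 ≤ κ * (1 + distInt x) ^ 2 := by rcases h2 with h | h <;> linarith
  exact ⟨by linarith, by linarith, by linarith, inner, outer⟩

theorem three (H : RowAvoids κ x p) (hκ : 0 < κ) (hp : 9 / 4 * κ - 1 < p) (hp' : p < 9 / 4 * κ) :
    RowThree κ x p := by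
  have h2 := H.shell 1
  have h3 := H.shell (-2)
  push_cast at h2 h3
  have ⟨b2, b2'⟩ := mul_add_distInt_sq_mem hκ.le x zero_le_one
  have ⟨b3, b3'⟩ := mul_sub_distInt_sq_mem hκ.le x (k := 2) (by norm_num)
  have inner : κ * (1 + distInt x) ^ 2 ≤ p := by rcases h2 with h | h <;> linarith
  have outer : p + 1 ≤ κ * (2 - distInt x) ^ 2 := by rcases h3 with h | h <;> linarith
  exact ⟨by linarith, by linarith, by linarith, inner, outer⟩

theorem four (H : RowAvoids κ x p) (hκ : 0 < κ) (hp : 4 * κ - 1 < p) (hp' : p < 4 * κ) :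
    RowFour κ x p := by
  have h3 := H.shell (-2)
  have h4 := H.shell 2
  push_cast at h3 h4
  have ⟨b3, b3'⟩ := mul_sub_distInt_sq_mem hκ.le x (k := 2) (by norm_num)
  have ⟨b4, b4'⟩ := mul_add_distInt_sq_mem hκ.le x zero_le_two
  have inner : κ * (2 - distInt x) ^ 2 ≤ p := by rcases h3 with h | h <;> linarith
  have outer : p + 1 ≤ κ * (2 + distInt x) ^ 2 := by rcases h4 with h | h <;> linarith
  exact ⟨by linarith, by linarith, by linarith, inner, outer⟩

/-- No row has exactly one point below the gap, since its two nearest points differ by less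
than `1`. -/
theorem quarter_le (H : RowAvoids κ x p) (hκ : 0 < κ) (hκ' : κ < 1) (hp : κ / 4 - 1 < p) :
    κ / 4 ≤ p := by
  by_contra! h
  linarith [(H.empty hκ hκ' h).upper]

end RowAvoids

theorem RowTwo.exists_eq_add_half_add {κ x p : ℝ} (H : RowTwo κ x p) (hκ : 1 / 2 ≤ κ)
    (hκ' : κ < 2 / 3) :
    ∃ (n : ℤ) (e : ℝ), x = n + 1 / 2 + e ∧ |e| < 1 / 8 ∧ |4 * κ * e| ≤ 2 * κ - 1 := by
  have hd : 3 / 8 < distInt x := by nlinarith [H.offset, distInt_nonneg x]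
  have hd' := distInt_le_half x
  have hκd := mul_nonneg (by linarith : 0 ≤ κ) (sub_nonneg.2 hd')
  have offset := H.offset
  obtain ⟨n, z, hx, hz⟩ := exists_eq_add_abs_eq_distInt x
  rw [← hz] at hd hd' hκd offset
  rcases abs_cases z with ⟨hz, -⟩ | ⟨hz, -⟩ <;> rw [hz] at hd hd' hκd offset
  · exact ⟨n, z - 1 / 2, by linarith, abs_lt.2 ⟨by linarith, by linarith⟩,
      abs_le.2 ⟨by linarith, by linarith⟩⟩
  · exact ⟨n - 1, z + 1 / 2, by push_cast; linarith, abs_lt.2 ⟨by linarith, by linarith⟩,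
      abs_le.2 ⟨by linarith, by linarith⟩⟩

theorem RowThree.exists_eq_add {κ x p : ℝ} (H : RowThree κ x p) (hκ : 0 < κ) (hκ' : κ < 2 / 3) :
    ∃ (n : ℤ) (z : ℝ), x = n + z ∧ |z| = distInt x ∧ |z| < 1 / 4 := by
  obtain ⟨n, z, hx, hz⟩ := exists_eq_add_abs_eq_distInt x
  exact ⟨n, z, hx, hz, by rw [hz]; nlinarith [H.offset]⟩

/-! ### Avoided gaps in a plane -/

/-- The coefficient region for the binary form `κ (x + h y)² + α y²` that the case `(m, K) = (1, 2)`
leads to, with all coefficients divided by `d`. -/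
structure ReducedBinary (κ α h : ℝ) : Prop where
  half_le : 1 / 2 ≤ κ
  lt_two_thirds : κ < 2 / 3
  three_quarters_le : 3 / 4 * κ ≤ α
  lt_half : α < 1 / 2
  reduced : κ * (1 - h ^ 2) ≤ α
  abs_le_half : |h| ≤ 1 / 2

/-- The values of `κ (x + h y)² + α y²` on the translated lattice `(u, v) + ℤ²` avoid the open unit
interval `(ρ, ρ + 1)`. -/
def PlaneAvoids (κ α h u v ρ : ℝ) : Prop := ∀ i j : ℤ,
  κ * (u + i + h * j) ^ 2 + α * (v + j) ^ 2 ≤ ρ ∨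
    ρ + 1 ≤ κ * (u + i + h * j) ^ 2 + α * (v + j) ^ 2

/-- An avoided gap around the four points nearest to a point that almost lies in the lattice. -/
structure CentredPlane (κ α h u v ρ : ℝ) : Prop where
  slope : 1 ≤ 4 * κ * |h|
  offset : 4 * α * distInt v ≤ 2 * κ - 1
  centre : ∃ i j : ℤ, |v + j| = distInt v ∧ 4 * κ * |u + i + h * j| ≤ 2 * κ - 1
  inner : α * (1 + distInt v) ^ 2 + κ / 4 ≤ ρ
  outer : ρ + 1 ≤ α * (2 - distInt v) ^ 2 + (2 * κ - 1) ^ 2 / 2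

/-- An avoided gap for which the fourth row contains at least three points below the gap; `v` is the
distance of the origin to the nearest row. -/
def WidePlane (κ α v ρ : ℝ) : Prop := α * (2 - v) ^ 2 + κ ≤ ρ

/-- An avoided gap for which the fourth row contains exactly two points below the gap; `v` is the
distance of the origin to the nearest row. -/
structure NarrowPlane (κ α v ρ : ℝ) : Prop where
  fourth_row : α * (2 - v) ^ 2 + κ / 4 ≤ ρ
  third_row : α * (1 + v) ^ 2 + κ ≤ ρ
  outer : ρ + 1 ≤ α * (2 - v) ^ 2 + 9 / 4 * κ

/-- A plane avoiding a gap, reflected and translated so that `h` and `v` are nonnegative and the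
row `y = v` is the one nearest to the origin. -/
structure NormalPlane (κ α h u v ρ : ℝ) : Prop extends ReducedBinary κ α h where
  slope_nonneg : 0 ≤ h
  offset_nonneg : 0 ≤ v
  offset_le_half : v ≤ 1 / 2
  gap_nonneg : 0 ≤ ρ
  avoids : PlaneAvoids κ α h u v ρ

namespace ReducedBinary

variable {κ α h : ℝ}

theorem kappa_pos (P : ReducedBinary κ α h) : 0 < κ := one_half_pos.trans_le P.half_le

theorem kappa_lt_one (P : ReducedBinary κ α h) : κ < 1 := P.lt_two_thirds.trans (by norm_num)

theorem alpha_pos (P : ReducedBinary κ α h) : 0 < α := by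
  linarith [P.kappa_pos, P.three_quarters_le]

theorem lt_slope (P : ReducedBinary κ α h) : 2 * κ - 1 < 4 * κ * |h| := by
  have hκ := P.half_le
  by_contra! hc
  have hsq : (4 * κ * |h|) ^ 2 ≤ (2 * κ - 1) ^ 2 := by
    have := P.kappa_pos
    gcongr
  have hred := mul_le_mul_of_nonneg_left P.reduced P.kappa_pos.le
  have hα := mul_lt_mul_of_pos_left P.lt_half P.kappa_pos
  rw [← sq_abs h] at hred
  nlinarith only [hsq, hred, hα, hκ]

end ReducedBinary

theorem PlaneAvoids.row {κ α h u v ρ x p : ℝ} (H : PlaneAvoids κ α h u v ρ) (j : ℤ)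
    (hx : x = u + h * j) (hp : p = ρ - α * (v + j) ^ 2) : RowAvoids κ x p := by
  intro i
  rw [hx, hp, add_right_comm, le_sub_iff_add_le, sub_add_eq_add_sub, sub_le_iff_le_add]
  exact H i j

namespace NormalPlane

variable {κ α h u v ρ : ℝ}

theorem row_zero (N : NormalPlane κ α h u v ρ) : RowAvoids κ u (ρ - α * v ^ 2) :=
  N.avoids.row 0 (by simp) (by simp)

theorem row_one (N : NormalPlane κ α h u v ρ) : RowAvoids κ (u + h) (ρ - α * (1 + v) ^ 2) :=
  N.avoids.row 1 (by simp) (by push_cast; ring)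

theorem row_neg_one (N : NormalPlane κ α h u v ρ) : RowAvoids κ (u - h) (ρ - α * (1 - v) ^ 2) :=
  N.avoids.row (-1) (by push_cast; ring) (by push_cast; ring)

theorem row_two (N : NormalPlane κ α h u v ρ) :
    RowAvoids κ (u + 2 * h) (ρ - α * (2 + v) ^ 2) :=
  N.avoids.row 2 (by push_cast; ring) (by push_cast; ring)

theorem row_neg_two (N : NormalPlane κ α h u v ρ) :
    RowAvoids κ (u - 2 * h) (ρ - α * (2 - v) ^ 2) :=
  N.avoids.row (-2) (by push_cast; ring) (by push_cast; ring)

theorem slope_le_half (N : NormalPlane κ α h u v ρ) : h ≤ 1 / 2 :=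
  (le_abs_self h).trans N.abs_le_half

theorem mul_offset_nonneg (N : NormalPlane κ α h u v ρ) : 0 ≤ α * v :=
  mul_nonneg N.alpha_pos.le N.offset_nonneg

theorem mul_offset_le (N : NormalPlane κ α h u v ρ) : α * v ≤ α * (1 / 2) :=
  mul_le_mul_of_nonneg_left N.offset_le_half N.alpha_pos.le

theorem mul_offset_sq_le (N : NormalPlane κ α h u v ρ) : α * v ^ 2 ≤ α * v * (1 / 2) := by
  rw [sq, ← mul_assoc]
  exact mul_le_mul_of_nonneg_left N.offset_le_half N.mul_offset_nonneg

theorem distInt_offset (N : NormalPlane κ α h u v ρ) : distInt v = v := by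
  rw [distInt_eq_abs] <;> rw [abs_of_nonneg N.offset_nonneg]
  exact N.offset_le_half

/-- The offsets of the rows `±1` are both close to `1/2`, so row `0` is almost centred. -/
theorem exists_centre (N : NormalPlane κ α h u v ρ) (H₁ : RowTwo κ (u + h) (ρ - α * (1 + v) ^ 2))
    (H₂ : RowTwo κ (u - h) (ρ - α * (1 - v) ^ 2)) :
    ∃ (n : ℤ) (e e' : ℝ), u = n + (e + e') / 2 ∧ 2 * h = 1 + e - e' ∧
      |4 * κ * e| ≤ 2 * κ - 1 ∧ |4 * κ * e'| ≤ 2 * κ - 1 := by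
  have hslope := N.lt_slope
  rw [abs_of_nonneg N.slope_nonneg] at hslope
  have hh := N.slope_le_half
  have h0 := N.slope_nonneg
  obtain ⟨n, e, hn, he, he'⟩ := H₁.exists_eq_add_half_add N.half_le N.lt_two_thirds
  obtain ⟨m, f, hm, hf, hf'⟩ := H₂.exists_eq_add_half_add N.half_le N.lt_two_thirds
  refine ⟨n, e, f, ?_⟩
  have ⟨he₁, he₂⟩ := abs_lt.1 he
  have ⟨hf₁, hf₂⟩ := abs_lt.1 hf
  have h2 : 2 * h = (n - m : ℤ) + e - f := by push_cast; linarith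
  have hnm : n - m = 1 := by
    have hlt : n - m < 2 := by exact_mod_cast (by linarith : ((n - m : ℤ) : ℝ) < 2)
    have hgt : -1 < n - m := by exact_mod_cast (by linarith : (-1 : ℝ) < (n - m : ℤ))
    have hne : n - m ≠ 0 := fun h0 => by
      rw [h0, Int.cast_zero, zero_add] at h2
      linarith [(abs_le.1 he').2, (abs_le.1 hf').1, congrArg (κ * ·) h2]
    omega
  rw [hnm, Int.cast_one] at h2
  exact ⟨by linarith, h2, he', hf'⟩

theorem centredPlane_of_two_two (N : NormalPlane κ α h u v ρ)
    (H₁ : RowTwo κ (u + h) (ρ - α * (1 + v) ^ 2)) (H₂ : RowTwo κ (u - h) (ρ - α * (1 - v) ^ 2))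
    (H₃ : RowEmpty κ (u - 2 * h) (ρ - α * (2 - v) ^ 2)) : CentredPlane κ α h u v ρ := by
  have hκ := N.half_le
  obtain ⟨n, e, f, hu, hh, he, hf⟩ := N.exists_centre H₁ H₂
  have ⟨he₁, he₂⟩ := abs_le.1 he
  have ⟨hf₁, hf₂⟩ := abs_le.1 hf
  have hlower := H₁.lower
  have hupper := H₂.upper
  have hκh := congrArg (κ * ·) hh
  have houter := H₃.outer (1 - n)
  rw [show u - 2 * h + ((1 - n : ℤ) : ℝ) = (3 * f - e) / 2 by push_cast; linarith] at houter
  have hfar : κ * ((3 * f - e) / 2) ^ 2 ≤ (2 * κ - 1) ^ 2 / 2 := by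
    have hsq : (2 * κ * ((3 * f - e) / 2)) ^ 2 ≤ (2 * κ - 1) ^ 2 :=
      sq_le_sq' (by linarith) (by linarith)
    nlinarith only [hsq, hκ, mul_nonneg N.kappa_pos.le (sq_nonneg ((3 * f - e) / 2))]
  constructor
  · rw [abs_of_nonneg N.slope_nonneg]; linarith
  · rw [N.distInt_offset]; linarith
  · refine ⟨-n, 0, by simp [N.distInt_offset, abs_of_nonneg N.offset_nonneg], ?_⟩
    rw [show u + ((-n : ℤ) : ℝ) + h * ((0 : ℤ) : ℝ) = (e + f) / 2 by push_cast; linarith,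
      ← abs_of_nonneg (by linarith : 0 ≤ 4 * κ), ← abs_mul, abs_le]
    constructor <;> linarith
  · rw [N.distInt_offset]; linarith
  · rw [N.distInt_offset]; linarith

theorem not_three_three_three (N : NormalPlane κ α h u v ρ) (H₀ : RowThree κ u (ρ - α * v ^ 2))
    (H₁ : RowThree κ (u + h) (ρ - α * (1 + v) ^ 2)) (H₂ : RowThree κ (u - h) (ρ - α * (1 - v) ^ 2))
    (H₃ : RowEmpty κ (u - 2 * h) (ρ - α * (2 - v) ^ 2)) : False := by
  have hκ := N.kappa_pos
  have h0 := N.slope_nonneg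
  have hh := N.slope_le_half
  obtain ⟨k, z, hk, -, hz⟩ := H₀.exists_eq_add hκ N.lt_two_thirds
  obtain ⟨m, x, hm, hxd, hx⟩ := H₁.exists_eq_add hκ N.lt_two_thirds
  obtain ⟨n, y, hn, hyd, hy⟩ := H₂.exists_eq_add hκ N.lt_two_thirds
  have ⟨hz₁, hz₂⟩ := abs_lt.1 hz
  have ⟨hx₁, hx₂⟩ := abs_lt.1 hx
  have ⟨hy₁, hy₂⟩ := abs_lt.1 hy
  obtain rfl : m = k := by
    have : m - k < 1 := by exact_mod_cast (by push_cast; linarith : ((m - k : ℤ) : ℝ) < 1)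
    have : -1 < m - k := by exact_mod_cast (by push_cast; linarith : (-1 : ℝ) < (m - k : ℤ))
    omega
  obtain rfl : n = m := by
    have : n - m < 1 := by exact_mod_cast (by push_cast; linarith : ((n - m : ℤ) : ℝ) < 1)
    have : -1 < n - m := by exact_mod_cast (by push_cast; linarith : (-1 : ℝ) < (n - m : ℤ))
    omega
  obtain rfl : x = z + h := by linarith
  obtain rfl : y = z - h := by linarith
  have inner₁ := H₁.inner
  have inner₂ := H₂.inner
  rw [← hxd, add_sq, sq_abs] at inner₁
  rw [← hyd, add_sq, sq_abs] at inner₂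
  have outer := H₃.outer (-n)
  rw [show u - 2 * h + ((-n : ℤ) : ℝ) = z - 2 * h by push_cast; linarith] at outer
  have outer' : ρ + 1 ≤ α * (2 + v) ^ 2 + κ * (z + 2 * h) ^ 2 := by
    have hrow := N.row_two (-n)
    rw [show u + 2 * h + ((-n : ℤ) : ℝ) = z + 2 * h by push_cast; linarith] at hrow
    have hsq := mul_nonneg hκ.le (sq_nonneg (z + 2 * h))
    rcases hrow with hrow | hrow <;>
      linarith [H₃.upper, N.mul_offset_nonneg, N.lt_half, N.kappa_lt_one]
  have hsum : 2 * h ≤ |z + h| + |z - h| := by linarith [le_abs_self (z + h), neg_abs_le (z - h)]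
  have hκsum := mul_le_mul_of_nonneg_left hsum hκ.le
  have hκh : 0 ≤ κ * (h * (2 - 3 * h)) := mul_nonneg hκ.le (mul_nonneg h0 (by linarith))
  linarith [N.half_le, N.lt_half]

theorem centredPlane_of_empty (N : NormalPlane κ α h u v ρ)
    (H : ρ - α * (2 - v) ^ 2 < κ / 4) : CentredPlane κ α h u v ρ := by
  have hκ := N.half_le
  have hα := N.three_quarters_le
  have hα' := N.lt_half
  have hρ := N.gap_nonneg
  have hv0 := N.mul_offset_nonneg
  have hv2 := N.mul_offset_sq_le
  have empty := N.row_neg_two.empty N.kappa_pos N.kappa_lt_one H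
  have hempty := empty.upper
  have neg_one_lower := N.row_neg_one.quarter_le N.kappa_pos N.kappa_lt_one (by linarith)
  rcases lt_or_ge (ρ - α * (1 + v) ^ 2) κ with h₁ | h₁
  · have two := N.row_one.two N.kappa_pos N.kappa_lt_one (by linarith) h₁
    have hupper := two.upper
    exact N.centredPlane_of_two_two two
      (N.row_neg_one.two N.kappa_pos N.kappa_lt_one (by linarith) (by linarith)) empty
  · exact (N.not_three_three_three (N.row_zero.three N.kappa_pos (by linarith) (by linarith))
      (N.row_one.three N.kappa_pos (by linarith) (by linarith))
      (N.row_neg_one.three N.kappa_pos (by linarith) (by linarith)) empty).elim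

theorem slope_bounds_of_two_three_two (N : NormalPlane κ α h u v ρ)
    (H₁ : RowTwo κ (u + h) (ρ - α * (1 + v) ^ 2)) (H₀ : RowThree κ u (ρ - α * v ^ 2))
    (H₂ : RowTwo κ (u - 2 * h) (ρ - α * (2 - v) ^ 2)) : 1 / 4 < h ∧ h < 5 / 12 := by
  have h0 := N.slope_nonneg
  have hh := N.slope_le_half
  obtain ⟨n, e, hn, he, -⟩ := H₁.exists_eq_add_half_add N.half_le N.lt_two_thirds
  obtain ⟨m, f, hm, hf, -⟩ := H₂.exists_eq_add_half_add N.half_le N.lt_two_thirds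
  obtain ⟨k, z, hk, -, hz⟩ := H₀.exists_eq_add N.kappa_pos N.lt_two_thirds
  have ⟨he₁, he₂⟩ := abs_lt.1 he
  have ⟨hf₁, hf₂⟩ := abs_lt.1 hf
  have ⟨hz₁, hz₂⟩ := abs_lt.1 hz
  have hnm : 3 * h = (n - m : ℤ) + e - f := by push_cast; linarith
  have hlt : n - m < 2 := by exact_mod_cast (by linarith : ((n - m : ℤ) : ℝ) < 2)
  have hgt : -1 < n - m := by exact_mod_cast (by linarith : (-1 : ℝ) < (n - m : ℤ))
  obtain h1 | h1 : n - m = 0 ∨ n - m = 1 := by omega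
  · rw [h1, Int.cast_zero] at hnm
    have : k - n < 1 := by exact_mod_cast (by push_cast; linarith : ((k - n : ℤ) : ℝ) < 1)
    have : 0 < k - n := by exact_mod_cast (by push_cast; linarith : (0 : ℝ) < (k - n : ℤ))
    omega
  · rw [h1, Int.cast_one] at hnm
    constructor <;> linarith

theorem not_two_three_three_two (N : NormalPlane κ α h u v ρ)
    (H₁ : RowTwo κ (u + h) (ρ - α * (1 + v) ^ 2)) (H₀ : RowThree κ u (ρ - α * v ^ 2))
    (H₂ : RowThree κ (u - h) (ρ - α * (1 - v) ^ 2))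
    (H₃ : RowTwo κ (u - 2 * h) (ρ - α * (2 - v) ^ 2)) : False := by
  have ⟨h0, hh⟩ := N.slope_bounds_of_two_three_two H₁ H₀ H₃
  obtain ⟨m, z, hm, hzd, hz⟩ := H₀.exists_eq_add N.kappa_pos N.lt_two_thirds
  obtain ⟨n, y, hn, hyd, hy⟩ := H₂.exists_eq_add N.kappa_pos N.lt_two_thirds
  have ⟨hz₁, hz₂⟩ := abs_lt.1 hz
  have ⟨hy₁, hy₂⟩ := abs_lt.1 hy
  obtain rfl : n = m := by
    have : n - m < 1 := by exact_mod_cast (by push_cast; linarith : ((n - m : ℤ) : ℝ) < 1)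
    have : -1 < n - m := by exact_mod_cast (by push_cast; linarith : (-1 : ℝ) < (n - m : ℤ))
    omega
  have hsum : h ≤ |z| + |y| := by linarith [le_abs_self z, neg_abs_le y]
  have outer₀ := H₀.outer
  have outer₁ := H₂.outer
  rw [← hzd] at outer₀
  rw [← hyd] at outer₁
  have houter : κ * ((2 - |z|) ^ 2 + (2 - |y|) ^ 2) ≤ κ * (8 - 4 * h + h ^ 2) := by
    apply mul_le_mul_of_nonneg_left _ N.kappa_pos.le
    nlinarith only [mul_nonneg (abs_nonneg z) (abs_nonneg y),
      mul_nonneg (sub_nonneg.2 hsum) (by linarith : 0 ≤ 4 - h - (|z| + |y|))]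
  have hcoeff : 2 ≤ κ * (7 / 2 - 4 * h + 5 * h ^ 2) := by
    linarith [N.reduced, H₁.lower, H₃.lower]
  nlinarith only [h0, hh, hcoeff, N.lt_two_thirds, N.kappa_pos]

theorem narrowPlane_of_two (N : NormalPlane κ α h u v ρ) (hρ : κ / 4 ≤ ρ - α * (2 - v) ^ 2)
    (hρ' : ρ - α * (2 - v) ^ 2 < κ) : NarrowPlane κ α v ρ := by
  have hκ := N.half_le
  have hα := N.three_quarters_le
  have hα' := N.lt_half
  have hv1 := N.mul_offset_le
  have two := N.row_neg_two.two N.kappa_pos N.kappa_lt_one (by linarith) hρ'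
  have hupper := two.upper
  refine ⟨by linarith, ?_, by linarith⟩
  by_contra! hc
  have two' := N.row_one.two N.kappa_pos N.kappa_lt_one (by linarith) (by linarith)
  have hupper' := two'.upper
  exact N.not_two_three_three_two two' (N.row_zero.three N.kappa_pos (by linarith) (by linarith))
    (N.row_neg_one.three N.kappa_pos (by linarith) (by linarith)) two

theorem centred_or_wide_or_narrow (N : NormalPlane κ α h u v ρ) :
    CentredPlane κ α h u v ρ ∨ WidePlane κ α v ρ ∨ NarrowPlane κ α v ρ := by
  rcases lt_or_ge (ρ - α * (2 - v) ^ 2) (κ / 4) with h₁ | h₁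
  · exact .inl (N.centredPlane_of_empty h₁)
  rcases lt_or_ge (ρ - α * (2 - v) ^ 2) κ with h₂ | h₂
  · exact .inr (.inr (N.narrowPlane_of_two h₁ h₂))
  · exact .inr (.inl (by unfold WidePlane; linarith))

end NormalPlane

/-- A normal plane in which `ρ + 1 - M` is a lower bound for the values of the form, together with
the planar consequence of the determinant condition. -/
structure ShellPlane (κ α h u v ρ M : ℝ) : Prop extends NormalPlane κ α h u v ρ where
  volume : 2 * M ^ 2 * κ * α ^ 2 ≤ 1
  bound : ∀ i j : ℤ, ρ ≤ κ * (u + i + h * j) ^ 2 + α * (v + j) ^ 2 + M - 1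

/-- The coefficient bounds that `WidePlane` forces on a `ShellPlane`. -/
structure WideBounds (κ α h v M : ℝ) : Prop where
  offset : 1 ≤ 8 * α * v
  slope : 4 * κ * |h| < 1
  lt : κ < 54 / 100
  le_mul : 96 / 100 ≤ α * M

/-- The bounds that `NarrowPlane` forces on a `ShellPlane`. -/
structure NarrowBounds (κ α v ρ : ℝ) : Prop extends NarrowPlane κ α v ρ where
  le_offset : 28 / 100 ≤ v
  offset_le : v ≤ 41 / 100
  outer_second_row : ρ + 1 ≤ α * (1 - v) ^ 2 + 4 * κ

namespace ShellPlane

variable {κ α h u v ρ M : ℝ}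

theorem volume_absurd (S : ShellPlane κ α h u v ρ M) (m k a : ℝ) (hm : m ≤ M := by linarith)
    (hk : k ≤ κ := by linarith) (ha : a ≤ α := by linarith) (hm0 : 0 ≤ m := by norm_num)
    (hk0 : 0 ≤ k := by norm_num) (ha0 : 0 ≤ a := by norm_num)
    (hlt : 1 < 2 * m ^ 2 * k * a ^ 2 := by norm_num) : False := by
  have := hm0.trans hm
  have := hk0.trans hk
  have : 2 * m ^ 2 * k * a ^ 2 ≤ 2 * M ^ 2 * κ * α ^ 2 := by gcongr
  linarith [S.volume]

theorem le_row {x : ℝ} (S : ShellPlane κ α h u v ρ M) (j : ℤ) (hx : x = u + h * j) :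
    ρ ≤ κ * distInt x ^ 2 + α * (v + j) ^ 2 + M - 1 := by
  have := S.bound (-round x) j
  rw [add_right_comm u, ← hx, Int.cast_neg, ← sub_eq_add_neg, ← sq_abs (x - round x)] at this
  exact this

theorem le_row_zero (S : ShellPlane κ α h u v ρ M) :
    ρ ≤ κ * distInt u ^ 2 + α * v ^ 2 + M - 1 := by
  simpa using S.le_row 0 (x := u) (by simp)

theorem le_row_neg_one (S : ShellPlane κ α h u v ρ M) :
    ρ ≤ κ * distInt (u - h) ^ 2 + α * (1 - v) ^ 2 + M - 1 := by
  have := S.le_row (-1) (x := u - h) (by push_cast; ring)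
  push_cast at this
  linarith

theorem le_quarter_add (S : ShellPlane κ α h u v ρ M) : ρ ≤ κ / 4 + α * v ^ 2 + M - 1 := by
  linarith [S.le_row_zero, mul_distInt_sq_le S.kappa_pos.le u]

theorem mul_slope_sq_le (S : ShellPlane κ α h u v ρ M) {b : ℝ} (hb : h ≤ b) :
    κ * h ^ 2 ≤ κ * b ^ 2 :=
  mul_le_mul_of_nonneg_left (pow_le_pow_left₀ S.slope_nonneg hb 2) S.kappa_pos.le

theorem two_of_narrow (S : ShellPlane κ α h u v ρ M) (N : NarrowPlane κ α v ρ) :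
    RowTwo κ (u - 2 * h) (ρ - α * (2 - v) ^ 2) :=
  S.row_neg_two.two S.kappa_pos S.kappa_lt_one (by linarith [N.fourth_row, S.kappa_pos])
    (by linarith [N.outer, S.lt_two_thirds])

/-- If row `-1` is nearly centred, it cannot have four points below the gap. -/
theorem outer_second_row_of_distInt_lt (S : ShellPlane κ α h u v ρ M) (N : NarrowPlane κ α v ρ)
    (hd : distInt (u - h) < 3 / 16) : ρ + 1 ≤ α * (1 - v) ^ 2 + 4 * κ := by
  by_contra! hc
  have four := S.row_neg_one.four S.kappa_pos (by linarith)
    (by linarith [N.outer, S.mul_offset_nonneg, S.half_le, S.lt_half])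
  have offset := four.offset
  nlinarith [mul_lt_mul_of_pos_left hd S.kappa_pos, S.lt_two_thirds]

theorem one_le_mul_offset_of_narrow (S : ShellPlane κ α h u v ρ M) (N : NarrowPlane κ α v ρ) :
    1 ≤ 8 * α * v := by
  by_contra! hc
  have hκ := S.half_le
  have hκ' := S.lt_two_thirds
  have hα := S.three_quarters_le
  have hα' := S.lt_half
  have hv0 := S.mul_offset_nonneg
  have hh := S.slope_le_half
  have hred := S.reduced
  have hfourth := N.fourth_row
  have houter := N.outer
  have lower := S.row_two.quarter_le S.kappa_pos S.kappa_lt_one (by linarith)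
  have hM := S.le_quarter_add
  have hslope : 5 / 16 < h := by
    by_contra! hc
    have := S.mul_slope_sq_le hc
    exact S.volume_absurd (28 / 10) (1 / 2) (45 / 100)
  have two := S.row_two.two S.kappa_pos S.kappa_lt_one (by linarith) (by linarith)
  obtain ⟨m, e, hm, he, -⟩ := two.exists_eq_add_half_add hκ hκ'
  obtain ⟨n, f, hn, hf, -⟩ := (S.two_of_narrow N).exists_eq_add_half_add hκ hκ'
  have ⟨he₁, he₂⟩ := abs_lt.1 he
  have ⟨hf₁, hf₂⟩ := abs_lt.1 hf
  obtain rfl : m = n + 2 := by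
    have : m - n < 3 := by exact_mod_cast (by push_cast; linarith : ((m - n : ℤ) : ℝ) < 3)
    have : 1 < m - n := by exact_mod_cast (by push_cast; linarith : (1 : ℝ) < (m - n : ℤ))
    omega
  push_cast at hm
  have hd : distInt (u - h) < 3 / 16 := by
    refine (distInt_le (u - h) (n + 1)).trans_lt (abs_lt.2 ?_)
    push_cast
    constructor <;> linarith
  linarith [S.outer_second_row_of_distInt_lt N hd]

theorem three_of_narrow (S : ShellPlane κ α h u v ρ M) (N : NarrowPlane κ α v ρ) :
    RowThree κ (u + h) (ρ - α * (1 + v) ^ 2) :=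
  S.row_one.three S.kappa_pos (by linarith [N.third_row, S.lt_two_thirds])
    (by linarith [N.outer, S.one_le_mul_offset_of_narrow N, S.lt_half])

theorem le_of_narrow (S : ShellPlane κ α h u v ρ M) (N : NarrowPlane κ α v ρ) :
    1 + 2 * α + κ / 2 ≤ M := by
  linarith [N.third_row, N.fourth_row, S.le_quarter_add]

theorem lt_of_narrow (S : ShellPlane κ α h u v ρ M) (N : NarrowPlane κ α v ρ) : κ < 58 / 100 := by
  by_contra! hc
  have hα := S.three_quarters_le
  have hM := S.le_of_narrow N
  exact S.volume_absurd (216 / 100) (58 / 100) (435 / 1000)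

/-- The small value of `h` compatible with the offsets of the rows `1` and `-2` is excluded by the
determinant. -/
theorem lt_mul_slope_of_narrow (S : ShellPlane κ α h u v ρ M) (N : NarrowPlane κ α v ρ) :
    3 / 2 * κ - 5 / 12 < 3 * (κ * h) := by
  by_contra! hc
  have hκ := S.half_le
  have hκ' := S.lt_of_narrow N
  have hM := S.le_of_narrow N
  have hred := S.reduced
  rcases le_or_gt (53 / 100) κ with hlarge | hsmall
  · have hb : h ≤ 2917 / 10000 := by
      by_contra! hc
      linarith [mul_lt_mul_of_pos_left hc S.kappa_pos]
    have := S.mul_slope_sq_le hb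
    exact S.volume_absurd (223 / 100) (53 / 100) (484 / 1000)
  · have hb : h ≤ 238 / 1000 := by
      by_contra! hc
      linarith [mul_lt_mul_of_pos_left hc S.kappa_pos]
    have := S.mul_slope_sq_le hb
    exact S.volume_absurd (219 / 100) (1 / 2) (471 / 1000)

theorem distInt_lt_of_narrow (S : ShellPlane κ α h u v ρ M) (N : NarrowPlane κ α v ρ) :
    distInt (u - h) < 3 / 16 := by
  have hh := S.slope_le_half
  have hslope := S.lt_mul_slope_of_narrow N
  have three := S.three_of_narrow N
  have offset := three.offset
  obtain ⟨m, z, hm, hzd, hz⟩ := three.exists_eq_add S.kappa_pos S.lt_two_thirds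
  obtain ⟨n, e, hn, he, he'⟩ :=
    (S.two_of_narrow N).exists_eq_add_half_add S.half_le S.lt_two_thirds
  have ⟨hz₁, hz₂⟩ := abs_lt.1 hz
  have ⟨he₁, he₂⟩ := abs_lt.1 he
  rw [← hzd] at offset
  obtain rfl : m = n + 2 := by
    have hκz := mul_le_mul_of_nonneg_left (le_abs_self z) S.kappa_pos.le
    have h3 : 3 * h = (m - n : ℤ) - 1 / 2 + z - e := by push_cast; linarith
    have : m - n < 3 := by exact_mod_cast (by linarith : ((m - n : ℤ) : ℝ) < 3)
    have : 1 < m - n := by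
      by_contra! hle
      have hle' : ((m - n : ℤ) : ℝ) ≤ 1 := by exact_mod_cast hle
      linarith [mul_le_mul_of_nonneg_left hle' S.kappa_pos.le, congrArg (κ * ·) h3,
        (abs_le.1 he').1]
    omega
  push_cast at hm
  refine (distInt_le (u - h) (n + 1)).trans_lt (abs_lt.2 ?_)
  push_cast
  constructor <;> linarith

theorem narrowBounds (S : ShellPlane κ α h u v ρ M) (N : NarrowPlane κ α v ρ) :
    NarrowBounds κ α v ρ := by
  have hκ := S.half_le
  have hκ' := S.lt_of_narrow N
  have hα := S.lt_half
  have hthird := N.third_row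
  have hfourth := N.fourth_row
  have houter := N.outer
  have hoffset := S.one_le_mul_offset_of_narrow N
  have hM := S.le_quarter_add
  refine ⟨N, ?_, ?_, S.outer_second_row_of_distInt_lt N (S.distInt_lt_of_narrow N)⟩
  · by_contra! hc
    have := mul_lt_mul_of_pos_left hc S.alpha_pos
    exact S.volume_absurd (2285 / 1000) (1 / 2) (446 / 1000)
  · by_contra! hc
    linarith [mul_lt_mul_of_pos_left hc S.alpha_pos]

theorem four_zero_of_wide (S : ShellPlane κ α h u v ρ M) (W : WidePlane κ α v ρ) :
    RowFour κ u (ρ - α * v ^ 2) := by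
  unfold WidePlane at W
  have hκ := S.half_le
  have hα := S.three_quarters_le
  have hv := S.mul_offset_le
  have hM := S.le_quarter_add
  refine S.row_zero.four S.kappa_pos (by linarith [S.lt_two_thirds]) (lt_of_not_ge fun hge => ?_)
  exact S.volume_absurd (2875 / 1000) (1 / 2) (375 / 1000)

theorem four_neg_one_of_wide (S : ShellPlane κ α h u v ρ M) (W : WidePlane κ α v ρ) :
    RowFour κ (u - h) (ρ - α * (1 - v) ^ 2) := by
  unfold WidePlane at W
  have hκ := S.half_le
  have hα := S.three_quarters_le
  have hv := S.mul_offset_le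
  have hM := S.le_quarter_add
  refine S.row_neg_one.four S.kappa_pos (by linarith [S.lt_two_thirds]) (lt_of_not_ge fun hge => ?_)
  exact S.volume_absurd (2875 / 1000) (1 / 2) (375 / 1000)

theorem three_neg_two_of_wide (S : ShellPlane κ α h u v ρ M) (W : WidePlane κ α v ρ) :
    RowThree κ (u - 2 * h) (ρ - α * (2 - v) ^ 2) := by
  unfold WidePlane at W
  have hκ := S.half_le
  have hα := S.three_quarters_le
  have hv := S.mul_offset_le
  have hM := S.le_quarter_add
  refine S.row_neg_two.three S.kappa_pos (by linarith [S.lt_two_thirds])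
    (lt_of_not_ge fun hge => ?_)
  exact S.volume_absurd (275 / 100) (1 / 2) (375 / 1000)

end ShellPlane

theorem RowFour.lt_distInt {κ x p : ℝ} (H : RowFour κ x p) (hκ : 0 < κ) (hκ' : κ < 52 / 100) :
    24 / 100 < distInt x := by
  have offset := H.offset
  by_contra! hc
  linarith [mul_le_mul_of_nonneg_left hc hκ.le]

theorem RowThree.distInt_lt {κ x p : ℝ} (H : RowThree κ x p) {k b : ℝ} (hκ : 0 < κ) (hκ' : κ < k)
    (hk : k * (3 - 6 * b) ≤ 1) (hb : b ≤ 1 / 2) : distInt x < b := by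
  have offset := H.offset
  by_contra! hc
  have := mul_le_mul_of_nonneg_right hκ'.le (by linarith : 0 ≤ 3 - 6 * b)
  nlinarith [mul_le_mul_of_nonneg_left hc hκ.le]

namespace ShellPlane

variable {κ α h u v ρ M : ℝ}

theorem slope_le_of_four (S : ShellPlane κ α h u v ρ M) (W : WidePlane κ α v ρ)
    (hκ' : κ < 52 / 100) (four : RowFour κ (u + h) (ρ - α * (1 + v) ^ 2)) : h ≤ 314 / 1000 := by
  by_contra! hc
  have hh := S.slope_le_half
  have four₀ := (S.four_zero_of_wide W).lt_distInt S.kappa_pos hκ'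
  have four₁ := four.lt_distInt S.kappa_pos hκ'
  have three := (S.three_neg_two_of_wide W).distInt_lt (b := 18 / 100) S.kappa_pos hκ' (by norm_num)
    (by norm_num)
  obtain ⟨n, z, hn, hz⟩ := exists_eq_add_abs_eq_distInt (u - 2 * h)
  have ⟨hz₁, hz₂⟩ := abs_lt.1 (hz.trans_lt three)
  have far₀ := four₀.trans_le (distInt_le u (n + 1))
  have far₁ := four₁.trans_le (distInt_le (u + h) (n + 1))
  push_cast at far₀ far₁
  rcases lt_abs.1 far₀ with _ | _ <;> rcases lt_abs.1 far₁ with _ | _ <;> linarith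

theorem three_one_of_wide (S : ShellPlane κ α h u v ρ M) (W : WidePlane κ α v ρ) :
    RowThree κ (u + h) (ρ - α * (1 + v) ^ 2) := by
  have hgap : α * (2 - v) ^ 2 + κ ≤ ρ := W
  have hκ := S.half_le
  have hα := S.three_quarters_le
  have hv := S.mul_offset_le
  have hM := S.le_quarter_add
  have hred := S.reduced
  refine S.row_one.three S.kappa_pos (by linarith [S.lt_two_thirds]) (lt_of_not_ge fun hge => ?_)
  have hlt : κ < 52 / 100 := by
    by_contra! hc
    exact S.volume_absurd (26 / 10) (52 / 100) (39 / 100)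
  have four := S.row_one.four S.kappa_pos (by linarith) (lt_of_not_ge fun hge => by
    exact S.volume_absurd (2875 / 1000) (1 / 2) (375 / 1000))
  have := S.mul_slope_sq_le (S.slope_le_of_four W hlt four)
  exact S.volume_absurd (269 / 100) (1 / 2) (45 / 100)

theorem le_of_wide (S : ShellPlane κ α h u v ρ M) (W : WidePlane κ α v ρ) :
    1 + 2 * α + 3 / 4 * κ ≤ M := by
  have hgap : α * (2 - v) ^ 2 + κ ≤ ρ := W
  linarith [S.le_quarter_add, S.mul_offset_le]

theorem lt_of_wide (S : ShellPlane κ α h u v ρ M) (W : WidePlane κ α v ρ) : κ < 565 / 1000 := by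
  by_contra! hc
  have hα := S.three_quarters_le
  have hM := S.le_of_wide W
  exact S.volume_absurd (227 / 100) (565 / 1000) (423 / 1000)

/-- The rows `1` and `-2` are both nearly centred, and hence `3 h` is close to `1`. -/
theorem exists_eq_add_of_wide (S : ShellPlane κ α h u v ρ M) (W : WidePlane κ α v ρ) :
    ∃ (n : ℤ) (y z : ℝ), u + h = n + 1 + y ∧ u - 2 * h = n + z ∧
      |y| = distInt (u + h) ∧ |z| = distInt (u - 2 * h) := by
  have hκ := S.half_le
  have hh := S.slope_le_half
  have h0 := S.slope_nonneg
  have hM := S.le_of_wide W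
  have hred := S.reduced
  have near {x p : ℝ} (three : RowThree κ x p) : distInt x < 206 / 1000 :=
    three.distInt_lt S.kappa_pos (S.lt_of_wide W) (by norm_num) (by norm_num)
  obtain ⟨m, y, hm, hy⟩ := exists_eq_add_abs_eq_distInt (u + h)
  obtain ⟨n, z, hn, hz⟩ := exists_eq_add_abs_eq_distInt (u - 2 * h)
  have ⟨hy₁, hy₂⟩ := abs_lt.1 (hy.trans_lt (near (S.three_one_of_wide W)))
  have ⟨hz₁, hz₂⟩ := abs_lt.1 (hz.trans_lt (near (S.three_neg_two_of_wide W)))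
  have : m - n < 2 := by exact_mod_cast (by push_cast; linarith : ((m - n : ℤ) : ℝ) < 2)
  have : -1 < m - n := by exact_mod_cast (by push_cast; linarith : (-1 : ℝ) < (m - n : ℤ))
  obtain rfl | rfl : m = n ∨ m = n + 1 := by omega
  · have := S.mul_slope_sq_le (by linarith : h ≤ 14 / 100)
    exact (S.volume_absurd (235 / 100) (1 / 2) (49 / 100)).elim
  · exact ⟨n, y, z, by push_cast at hm; exact hm, hn, hy, hz⟩

theorem slope_of_wide (S : ShellPlane κ α h u v ρ M) (W : WidePlane κ α v ρ) :
    3 * (κ * h) ≤ 2 * κ - 1 / 3 ∧ 19 / 100 ≤ h ∧ h ≤ 471 / 1000 := by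
  have hκ' := S.lt_of_wide W
  have three₁ := S.three_one_of_wide W
  have three₂ := S.three_neg_two_of_wide W
  have near₁ := three₁.distInt_lt (b := 206 / 1000) S.kappa_pos hκ' (by norm_num) (by norm_num)
  have near₂ := three₂.distInt_lt (b := 206 / 1000) S.kappa_pos hκ' (by norm_num) (by norm_num)
  have offset₁ := three₁.offset
  have offset₂ := three₂.offset
  obtain ⟨n, y, z, hy, hz, hyd, hzd⟩ := S.exists_eq_add_of_wide W
  rw [← hyd] at near₁ offset₁
  rw [← hzd] at near₂ offset₂
  refine ⟨?_, by linarith [neg_abs_le y, le_abs_self z], by linarith [le_abs_self y, neg_abs_le z]⟩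
  have hκy := mul_le_mul_of_nonneg_left (le_abs_self y) S.kappa_pos.le
  have hκz := mul_le_mul_of_nonneg_left (neg_abs_le z) S.kappa_pos.le
  have : 3 * (κ * h) = κ * y - κ * z + κ := by linear_combination κ * (hy - hz)
  linarith

theorem distInt_add_distInt_le_of_wide (S : ShellPlane κ α h u v ρ M) (W : WidePlane κ α v ρ) :
    distInt u + distInt (u - h) ≤ 1 - h := by
  have hκ' := S.lt_of_wide W
  have near₁ := (S.three_one_of_wide W).distInt_lt (b := 206 / 1000) S.kappa_pos hκ'
    (by norm_num) (by norm_num)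
  have near₂ := (S.three_neg_two_of_wide W).distInt_lt (b := 206 / 1000) S.kappa_pos hκ'
    (by norm_num) (by norm_num)
  obtain ⟨n, y, z, hy, hz, hyd, hzd⟩ := S.exists_eq_add_of_wide W
  have ⟨hy₁, hy₂⟩ := abs_lt.1 (hyd.trans_lt near₁)
  have ⟨hz₁, hz₂⟩ := abs_lt.1 (hzd.trans_lt near₂)
  have near₀ := distInt_le u (n + 1)
  have near₃ := distInt_le (u - h) n
  push_cast at near₀
  rcases abs_cases (u - (n + 1)) with ⟨h₀, -⟩ | ⟨h₀, -⟩ <;>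
    rcases abs_cases (u - h - n) with ⟨h₁, -⟩ | ⟨h₁, -⟩ <;> linarith

/-- The rows `0` and `-1` both contain four points below the gap; as their nearest points cannot
both be far away, the determinant bound applies. -/
theorem le_mul_of_wide (S : ShellPlane κ α h u v ρ M) (W : WidePlane κ α v ρ) {k : ℝ} (hk : 0 ≤ k)
    (hkκ : k ≤ κ) : k * (1 - h ^ 2) * (1 + k * (2 + 2 * h)) ≤ α * M := by
  have h0 := S.slope_nonneg
  have hsum := mul_le_mul_of_nonneg_left (S.distInt_add_distInt_le_of_wide W) S.kappa_pos.le
  have inner₀ := (S.four_zero_of_wide W).inner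
  have inner₁ := (S.four_neg_one_of_wide W).inner
  have hM : 1 + κ * (2 + 2 * h) ≤ M := by linarith [S.le_row_zero, S.le_row_neg_one]
  have hh : 0 ≤ 1 - h ^ 2 := by nlinarith only [h0, S.slope_le_half]
  calc k * (1 - h ^ 2) * (1 + k * (2 + 2 * h))
      ≤ κ * (1 - h ^ 2) * (1 + κ * (2 + 2 * h)) := by
        have := mul_nonneg S.kappa_pos.le hh
        gcongr
    _ ≤ α * M := by
      have := S.alpha_pos
      have := mul_nonneg S.kappa_pos.le h0
      gcongr
      · linarith [S.half_le]
      · exact S.reduced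

theorem wideBounds (S : ShellPlane κ α h u v ρ M) (W : WidePlane κ α v ρ) :
    WideBounds κ α h v M := by
  have hgap : α * (2 - v) ^ 2 + κ ≤ ρ := W
  have hκ := S.half_le
  have hred := S.reduced
  have ⟨hslope, hlow, hhigh⟩ := S.slope_of_wide W
  have hquad : 0 ≤ (h - 19 / 100) * (471 / 1000 - h) := mul_nonneg (by linarith) (by linarith)
  have hcub := mul_nonneg S.slope_nonneg hquad
  have hlt : κ < 54 / 100 := by
    by_contra! hc
    have hprod := S.le_mul_of_wide W (by norm_num) hc
    have hone : 1 ≤ α * M := by nlinarith only [hprod, hquad, hcub, hlow, hhigh]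
    nlinarith only [one_le_pow₀ hone (n := 2), S.volume, hc]
  refine ⟨?_, ?_, hlt, ?_⟩
  · by_contra! hc
    have := S.row_two.quarter_le S.kappa_pos S.kappa_lt_one (by linarith)
    have hb : h ≤ 461 / 1000 := by
      by_contra! hc
      linarith [mul_le_mul_of_nonneg_left hc.le S.kappa_pos.le]
    have := S.mul_slope_sq_le hb
    have := S.le_quarter_add
    exact S.volume_absurd (2574 / 1000) (1 / 2) (3935 / 10000)
  · rw [abs_of_nonneg S.slope_nonneg]
    linarith
  · have hprod := S.le_mul_of_wide W (by norm_num) hκ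
    nlinarith only [hprod, hquad, hcub, hlow, hhigh]

theorem centred_or_wide_or_narrow (S : ShellPlane κ α h u v ρ M) :
    CentredPlane κ α h u v ρ ∨ (WideBounds κ α h v M ∧ WidePlane κ α v ρ) ∨
      NarrowBounds κ α v ρ := by
  rcases S.toNormalPlane.centred_or_wide_or_narrow with C | W | N
  · exact .inl C
  · exact .inr (.inl ⟨S.wideBounds W, W⟩)
  · exact .inr (.inr (S.narrowBounds N))

end ShellPlane

theorem exists_normal_translate (h u v : ℝ) : ∃ u' : ℝ, ∀ i j : ℤ, ∃ i' j' : ℤ,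
    |u' + i + |h| * j| = |u + i' + h * j'| ∧ |distInt v + j| = |v + j'| := by
  have exists_sign (x : ℝ) : ∃ s : ℤ, |(s : ℝ)| = 1 ∧ (s : ℝ) ^ 2 = 1 ∧ |x| = s * x := by
    rcases abs_choice x with hx | hx
    · exact ⟨1, by simp, by simp, by simp [hx]⟩
    · exact ⟨-1, by simp, by simp, by simp [hx]⟩
  obtain ⟨s, hs, hs', hh⟩ := exists_sign h
  obtain ⟨t, ht, ht', hv⟩ := exists_sign (v - round v)
  refine ⟨s * t * (u - h * round v), fun i j => ⟨s * t * i, t * j - round v, ?_, ?_⟩⟩ <;>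
    push_cast
  · rw [← one_mul |u + _ + _|, ← hs, ← one_mul |(s : ℝ)|, ← ht, ← abs_mul, ← abs_mul, hh]
    congr 1
    linear_combination -(i * t ^ 2 * hs') - (i + s * h * j) * ht'
  · rw [← one_mul |v + _|, ← ht, ← abs_mul, distInt, hv]
    congr 1
    linear_combination -(j * ht')

theorem distInt_distInt (x : ℝ) : distInt (distInt x) = distInt x := by
  rw [distInt_eq_abs] <;> rw [abs_of_nonneg (distInt_nonneg x)]
  exact distInt_le_half x

theorem ReducedBinary.abs {κ α h : ℝ} (P : ReducedBinary κ α h) : ReducedBinary κ α |h| :=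
  { P with
    reduced := by rw [sq_abs]; exact P.reduced
    abs_le_half := by rw [abs_abs]; exact P.abs_le_half }

theorem CentredPlane.add_one_le {κ α h u v ρ : ℝ} (C : CentredPlane κ α h u v ρ) (hα : 0 ≤ α) :
    ρ + 1 ≤ 4 * α + (2 * κ - 1) ^ 2 / 2 := by
  have hd := distInt_nonneg v
  have := mul_nonneg (mul_nonneg hα hd) (by linarith [distInt_le_half v] : 0 ≤ 4 - distInt v)
  linarith [C.outer]

theorem CentredPlane.le {κ α h u v ρ : ℝ} (C : CentredPlane κ α h u v ρ) (hα : 0 ≤ α) :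
    α + κ / 4 ≤ ρ := by
  have hd := distInt_nonneg v
  have := mul_nonneg (mul_nonneg hα hd) (by linarith : 0 ≤ 2 + distInt v)
  linarith [C.inner]

theorem WidePlane.le {κ α v ρ : ℝ} (W : WidePlane κ α (distInt v) ρ) (hκ : 0 ≤ κ) (hα : 0 ≤ α) :
    9 / 4 * α + 5 / 8 * κ ≤ ρ := by
  have hgap : α * (2 - distInt v) ^ 2 + κ ≤ ρ := W
  linarith [(mul_sub_distInt_sq_mem hα v (k := 2) (by norm_num)).1]

theorem NarrowPlane.le {κ α v ρ : ℝ} (N : NarrowPlane κ α v ρ) (hα : 0 ≤ α) :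
    9 / 4 * α + 5 / 8 * κ ≤ ρ := by
  linarith [N.fourth_row, N.third_row, mul_nonneg hα (sq_nonneg (1 / 2 - v))]

theorem CentredPlane.of_normal {κ α h u v ρ u' : ℝ} (C : CentredPlane κ α |h| u' (distInt v) ρ)
    (hu' : ∀ i j : ℤ, ∃ i' j' : ℤ,
      |u' + i + |h| * j| = |u + i' + h * j'| ∧ |distInt v + j| = |v + j'|) :
    CentredPlane κ α h u v ρ := by
  obtain ⟨slope, offset, ⟨i, j, hv, hu⟩, inner, outer⟩ := C
  obtain ⟨i', j', hi, hj⟩ := hu' i j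
  rw [distInt_distInt] at offset hv inner outer
  rw [abs_abs] at slope
  exact ⟨slope, offset, ⟨i', j', hj ▸ hv, hi ▸ hu⟩, inner, outer⟩

theorem exists_plane_le {κ : ℝ} (hκ : 0 ≤ κ) (α h u v : ℝ) : ∃ i j : ℤ,
    κ * (u + i + h * j) ^ 2 + α * (v + j) ^ 2 ≤ κ / 4 + α * distInt v ^ 2 := by
  obtain ⟨m, y, hm, hy⟩ := exists_eq_add_abs_eq_distInt v
  obtain ⟨n, z, hn, hz⟩ := exists_eq_add_abs_eq_distInt (u + h * (-m : ℤ))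
  have hu : u + (-n : ℤ) + h * (-m : ℤ) = z := by rw [add_right_comm, hn]; push_cast; ring
  have hv : v + (-m : ℤ) = y := by rw [hm]; push_cast; ring
  refine ⟨-n, -m, ?_⟩
  rw [hu, hv, ← hy, sq_abs, ← sq_abs z, hz]
  gcongr
  exact mul_distInt_sq_le hκ _

namespace PlaneAvoids

variable {κ α h u v ρ : ℝ}

theorem exists_normalPlane (H : PlaneAvoids κ α h u v ρ) (P : ReducedBinary κ α h) (hρ : 0 ≤ ρ) :
    ∃ u' : ℝ, NormalPlane κ α |h| u' (distInt v) ρ ∧ ∀ i j : ℤ, ∃ i' j' : ℤ,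
      |u' + i + |h| * j| = |u + i' + h * j'| ∧ |distInt v + j| = |v + j'| := by
  obtain ⟨u', hu'⟩ := exists_normal_translate h u v
  refine ⟨u', { P.abs with
    slope_nonneg := abs_nonneg h
    offset_nonneg := distInt_nonneg v
    offset_le_half := distInt_le_half v
    gap_nonneg := hρ
    avoids := fun i j => ?_ }, hu'⟩
  obtain ⟨i', j', hi, hj⟩ := hu' i j
  rw [← sq_abs, hi, sq_abs, ← sq_abs (distInt v + j), hj, sq_abs]
  exact H i' j'

theorem centred_or_wide_or_narrow (H : PlaneAvoids κ α h u v ρ) (P : ReducedBinary κ α h)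
    (hρ : 0 ≤ ρ) : CentredPlane κ α h u v ρ ∨ WidePlane κ α (distInt v) ρ ∨
      NarrowPlane κ α (distInt v) ρ := by
  obtain ⟨u', N, hu'⟩ := H.exists_normalPlane P hρ
  exact N.centred_or_wide_or_narrow.imp_left (·.of_normal hu')

theorem centred_or_wideBounds_or_narrowBounds {M : ℝ} (H : PlaneAvoids κ α h u v ρ)
    (P : ReducedBinary κ α h) (hρ : 0 ≤ ρ) (volume : 2 * M ^ 2 * κ * α ^ 2 ≤ 1)
    (bound : ∀ i j : ℤ, ρ ≤ κ * (u + i + h * j) ^ 2 + α * (v + j) ^ 2 + M - 1) :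
    CentredPlane κ α h u v ρ ∨ (WideBounds κ α h (distInt v) M ∧ WidePlane κ α (distInt v) ρ) ∨
      NarrowBounds κ α (distInt v) ρ := by
  obtain ⟨u', N, hu'⟩ := H.exists_normalPlane P hρ
  have S : ShellPlane κ α |h| u' (distInt v) ρ M := ⟨N, volume, fun i j => by
    obtain ⟨i', j', hi, hj⟩ := hu' i j
    rw [← sq_abs, hi, sq_abs, ← sq_abs (distInt v + j), hj, sq_abs]
    exact bound i' j'⟩
  rcases S.centred_or_wide_or_narrow with C | ⟨B, W⟩ | B
  · exact .inl (C.of_normal hu')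
  · exact .inr (.inl ⟨{ B with slope := by simpa using B.slope }, W⟩)
  · exact .inr (.inr B)

theorem centred (H : PlaneAvoids κ α h u v ρ) (P : ReducedBinary κ α h) (hρ : 0 ≤ ρ)
    (hρ' : ρ < 9 / 4 * α + 5 / 8 * κ) : CentredPlane κ α h u v ρ := by
  rcases H.centred_or_wide_or_narrow P hρ with C | W | N
  · exact C
  · linarith [W.le P.kappa_pos.le P.alpha_pos.le]
  · linarith [N.le P.alpha_pos.le]

theorem le (H : PlaneAvoids κ α h u v ρ) (P : ReducedBinary κ α h) (hρ : 0 ≤ ρ) :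
    α + κ / 4 ≤ ρ := by
  by_contra! hlt
  linarith [(H.centred P hρ (by linarith [P.kappa_pos, P.alpha_pos])).le P.alpha_pos.le]

theorem add_one_le (H : PlaneAvoids κ α h u v ρ) (hκ : 0 ≤ κ) (hα : 0 ≤ α) (hρ : ρ < 0)
    (i j : ℤ) : ρ + 1 ≤ κ * (u + i + h * j) ^ 2 + α * (v + j) ^ 2 := by
  refine (H i j).resolve_left (not_le.2 (hρ.trans_le ?_))
  positivity

theorem nonneg (H : PlaneAvoids κ α h u v ρ) (hκ : 0 ≤ κ) (hα : 0 ≤ α)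
    (hρ : (κ + α) / 4 < ρ + 1) : 0 ≤ ρ := by
  by_contra! hneg
  obtain ⟨i, j, hij⟩ := exists_plane_le hκ α h u v
  linarith [H.add_one_le hκ hα hneg i j, mul_distInt_sq_le hα v]

end PlaneAvoids

/-! ### Avoided gaps in space -/

/-- The coefficients of a ternary form `κ (x + h y + g z)² + α (y + l z)² + τ z²` that arise, after
division by `d`, from the reduced quinary form; `M` stands for `1 / d`. -/
structure ReducedTernary (κ α τ h l M : ℝ) : Prop extends ReducedBinary κ α h where
  shear_nonneg : 0 ≤ l
  shear_le_half : l ≤ 1 / 2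
  reduced_shear : α * (1 - l ^ 2) ≤ τ
  volume : 8 / 3 * M ^ 2 * κ * α * τ = 1
  one_add_le : 1 + κ ≤ M

/-- The values of `κ (x + h y + g z)² + α (y + l z)² + τ z²` on the translated lattice
`(u, v, w) + ℤ³` avoid the open unit interval `(ρ, ρ + 1)`, stated plane by plane. -/
def SpaceAvoids (κ α τ h g l u v w ρ : ℝ) : Prop := ∀ n : ℤ,
  PlaneAvoids κ α h (u + g * n) (v + l * n) (ρ - τ * (w + n) ^ 2)

/-- Two consecutive avoided gaps at distance `M`, the lower of which is the least one that has a
lattice value below it. -/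
structure LeastShell (κ α τ h g l M u v w r : ℝ) : Prop where
  avoids : SpaceAvoids κ α τ h g l u v w r
  avoids_next : SpaceAvoids κ α τ h g l u v w (r + M)
  bound : ∀ n i j : ℤ, r - τ * (w + n) ^ 2 ≤
    κ * (u + g * n + i + h * j) ^ 2 + α * (v + l * n + j) ^ 2 + M - 1
  exists_le : ∃ n i j : ℤ,
    κ * (u + g * n + i + h * j) ^ 2 + α * (v + l * n + j) ^ 2 + τ * (w + n) ^ 2 ≤ r

/-- A least shell of a reduced form, reflected and translated so that the layer `n = 0` is the one
nearest to the origin. -/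
structure NormalShell (κ α τ h g l M u v w r : ℝ) : Prop extends
    ReducedTernary κ α τ h l M, LeastShell κ α τ h g l M u v w r where
  height_nonneg : 0 ≤ w
  height_le_half : w ≤ 1 / 2

/-- The configuration in which the lattice points near the origin form an almost right prism; the
gap then has lower end `r`. -/
structure Prism (κ α τ h g l M r : ℝ) : Prop where
  lt : κ < 54 / 100
  height : 1 + α + κ / 4 - 21 / 16 * ((2 * κ - 1) ^ 2 / κ) ≤ 2 * τ
  slope : 1 ≤ 4 * κ * |h|
  shear : 4 * α * l ≤ 2 * (2 * κ - 1)
  exists_shear : ∃ k : ℤ, 4 * κ * |g + k| ≤ 2 * (2 * κ - 1)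
  lower : τ / 4 + α + κ / 4 ≤ r
  upper : r ≤ τ / 4 + M - 1 + 7 / 48 * ((2 * κ - 1) ^ 2 / κ)

namespace ReducedTernary

variable {κ α τ h l M : ℝ}

theorem volume_absurd (P : ReducedTernary κ α τ h l M) (m k a t : ℝ)
    (hm : m ≤ M := by linarith) (hk : k ≤ κ := by linarith) (ha : a ≤ α := by linarith)
    (ht : t ≤ τ := by linarith) (hm0 : 0 ≤ m := by norm_num) (hk0 : 0 ≤ k := by norm_num)
    (ha0 : 0 ≤ a := by norm_num) (ht0 : 0 ≤ t := by norm_num)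
    (hlt : 1 < 8 / 3 * m ^ 2 * k * a * t := by norm_num) : False := by
  have hκ := hk0.trans hk
  have hα := ha0.trans ha
  have hle : 8 / 3 * m ^ 2 * k * a * t ≤ 8 / 3 * M ^ 2 * κ * α * τ := by gcongr
  linarith [P.volume]

theorem le_height (P : ReducedTernary κ α τ h l M) : 3 / 4 * α ≤ τ := by
  have hl : l ^ 2 ≤ (1 / 2) ^ 2 := pow_le_pow_left₀ P.shear_nonneg P.shear_le_half 2
  linarith [P.reduced_shear, mul_le_mul_of_nonneg_left hl P.alpha_pos.le]

theorem height_pos (P : ReducedTernary κ α τ h l M) : 0 < τ := by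
  linarith [P.le_height, P.alpha_pos]

theorem height_lt (P : ReducedTernary κ α τ h l M) : τ < 889 / 1000 := by
  by_contra! hτ
  have hκ := P.half_le
  have hα := P.three_quarters_le
  have hM := P.one_add_le
  exact P.volume_absurd (3 / 2) (1 / 2) (3 / 8) (889 / 1000)

end ReducedTernary

namespace SpaceAvoids

variable {κ α τ h g l u v w ρ : ℝ}

theorem layer_zero (H : SpaceAvoids κ α τ h g l u v w ρ) :
    PlaneAvoids κ α h u v (ρ - τ * w ^ 2) := by
  simpa using H 0

theorem layer_one (H : SpaceAvoids κ α τ h g l u v w ρ) :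
    PlaneAvoids κ α h (u + g) (v + l) (ρ - τ * (1 + w) ^ 2) := by
  simpa [add_comm w] using H 1

theorem layer_neg_one (H : SpaceAvoids κ α τ h g l u v w ρ) :
    PlaneAvoids κ α h (u - g) (v - l) (ρ - τ * (1 - w) ^ 2) := by
  convert H (-1) using 1 <;> push_cast
  all_goals ring

end SpaceAvoids

theorem CentredPlane.lt {κ α h u v ρ : ℝ} (C : CentredPlane κ α h u v ρ)
    (P : ReducedBinary κ α h) : ρ < 9 / 4 * α + 5 / 8 * κ := by
  have hκ := P.half_le
  have hκ' := P.lt_two_thirds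
  nlinarith only [hκ, hκ', P.lt_half, C.add_one_le P.alpha_pos.le]

theorem CentredPlane.distInt_le_sixth {κ α h u v ρ : ℝ} (C : CentredPlane κ α h u v ρ)
    (P : ReducedBinary κ α h) : distInt v ≤ 1 / 6 := by
  by_contra! hv
  linarith [C.offset, mul_lt_mul_of_pos_left hv P.alpha_pos, P.three_quarters_le, P.lt_two_thirds]

theorem CentredPlane.exists_shear {κ α h g l u v ρ ρ' : ℝ} (C : CentredPlane κ α h u v ρ)
    (C' : CentredPlane κ α h (u - g) (v - l) ρ') (P : ReducedBinary κ α h) (hl : 0 ≤ l)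
    (hl' : l ≤ 1 / 2) : ∃ i j k : ℤ, 4 * α * |v + j| ≤ 2 * κ - 1 ∧
      4 * κ * |u + i + h * j| ≤ 2 * κ - 1 ∧ 4 * α * l ≤ 2 * (2 * κ - 1) ∧
      4 * κ * |g + k| ≤ 2 * (2 * κ - 1) := by
  obtain ⟨i, j, hj, hi⟩ := C.centre
  obtain ⟨i', j', hj', hi'⟩ := C'.centre
  have offset := C.offset
  have offset' := C'.offset
  rw [← hj] at offset
  rw [← hj'] at offset'
  have hv := abs_le.1 (hj.trans_le (C.distInt_le_sixth P))
  have hv' := abs_le.1 (hj'.trans_le (C'.distInt_le_sixth P))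
  obtain rfl : j' = j := by
    have hlo : j' - j < 1 := by exact_mod_cast (by linarith : (j' - j : ℝ) < 1)
    have hhi : j - j' < 1 := by exact_mod_cast (by linarith : (j - j' : ℝ) < 1)
    omega
  refine ⟨i, j', i - i', offset, hi, ?_, ?_⟩
  · have : l ≤ |v + j'| + |v - l + j'| := by
      linarith [le_abs_self (v + j'), neg_abs_le (v - l + j')]
    linarith [mul_le_mul_of_nonneg_left this P.alpha_pos.le]
  · have hg : g + (i - i' : ℤ) = (u + i + h * j') - (u - g + i' + h * j') := by push_cast; ring
    have := abs_sub (u + i + h * j') (u - g + i' + h * j')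
    rw [hg]
    linarith [mul_le_mul_of_nonneg_left this P.kappa_pos.le]

theorem mul_sq_le_of_four_mul_abs_le {κ x b : ℝ} (hκ : 0 < κ) (h : 4 * κ * |x| ≤ b) :
    κ * x ^ 2 ≤ b ^ 2 / (16 * κ) := by
  rw [le_div_iff₀ (by positivity)]
  calc κ * x ^ 2 * (16 * κ) = (4 * κ * |x|) ^ 2 := by rw [mul_pow, sq_abs]; ring
    _ ≤ b ^ 2 := pow_le_pow_left₀ (by positivity) h 2

theorem form_le_of_four_mul_abs_le {κ α x y c : ℝ} (hκ : 0 < κ) (hα : 3 / 4 * κ ≤ α)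
    (hy : 4 * α * |y| ≤ c * (2 * κ - 1)) (hx : 4 * κ * |x| ≤ c * (2 * κ - 1)) :
    κ * x ^ 2 + α * y ^ 2 ≤ 7 / 48 * c ^ 2 * ((2 * κ - 1) ^ 2 / κ) := by
  calc κ * x ^ 2 + α * y ^ 2
    _ ≤ (c * (2 * κ - 1)) ^ 2 / (16 * κ) + (c * (2 * κ - 1)) ^ 2 / (16 * (3 / 4 * κ)) := by
      gcongr
      · exact mul_sq_le_of_four_mul_abs_le hκ hx
      · exact (mul_sq_le_of_four_mul_abs_le (by linarith) hy).trans (by gcongr)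
    _ = 7 / 48 * c ^ 2 * ((2 * κ - 1) ^ 2 / κ) := by field_simp; ring

namespace NormalShell

variable {κ α τ h g l M u v w r : ℝ}

theorem mul_height_le (N : NormalShell κ α τ h g l M u v w r) : τ * w ≤ τ / 2 := by
  linarith [mul_le_mul_of_nonneg_left N.height_le_half N.height_pos.le]

theorem mul_height_nonneg (N : NormalShell κ α τ h g l M u v w r) : 0 ≤ τ * w :=
  mul_nonneg N.height_pos.le N.height_nonneg

theorem layer_neg_one_centred (N : NormalShell κ α τ h g l M u v w r)
    (C : CentredPlane κ α h u v (r - τ * w ^ 2)) :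
    CentredPlane κ α h (u - g) (v - l) (r - τ * (1 - w) ^ 2) := by
  have hL := N.avoids.layer_neg_one
  refine hL.centred N.toReducedBinary (hL.nonneg N.kappa_pos.le N.alpha_pos.le ?_) ?_
  · linarith [C.le N.alpha_pos.le, N.height_lt, N.mul_height_nonneg, N.alpha_pos]
  · linarith [C.lt N.toReducedBinary, N.mul_height_le]

theorem layer_one_neg (N : NormalShell κ α τ h g l M u v w r)
    (C : CentredPlane κ α h u v (r - τ * w ^ 2)) (hshear : 4 * α * l ≤ 2 * (2 * κ - 1)) :
    r - τ * (1 + w) ^ 2 < 0 := by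
  by_contra! hr
  have hκ := N.half_le
  have hα := N.three_quarters_le
  have hα' := N.lt_half
  have hl : l ≤ 1 / 3 := by
    by_contra! hl
    linarith [mul_lt_mul_of_pos_left hl N.alpha_pos]
  have hl2 := pow_le_pow_left₀ N.shear_nonneg hl 2
  have hτ : 8 / 9 * α ≤ τ := by
    linarith [N.reduced_shear, mul_le_mul_of_nonneg_left hl2 N.alpha_pos.le]
  have hq : (2 * κ - 1) ^ 2 ≤ (1 / 3) ^ 2 := pow_le_pow_left₀ (by linarith) (by linarith) 2
  linarith [N.avoids.layer_one.le N.toReducedBinary hr, C.add_one_le N.alpha_pos.le,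
    N.mul_height_nonneg]

theorem le_two_mul_height (N : NormalShell κ α τ h g l M u v w r)
    (C : CentredPlane κ α h u v (r - τ * w ^ 2)) {i j k : ℤ} (hj : 4 * α * |v + j| ≤ 2 * κ - 1)
    (hi : 4 * κ * |u + i + h * j| ≤ 2 * κ - 1) (hl : 4 * α * l ≤ 2 * (2 * κ - 1))
    (hk : 4 * κ * |g + k| ≤ 2 * (2 * κ - 1)) :
    1 + α + κ / 4 - 21 / 16 * ((2 * κ - 1) ^ 2 / κ) ≤ 2 * τ := by
  have hv : 4 * α * |v + l + j| ≤ 3 * (2 * κ - 1) := by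
    rw [add_right_comm]
    have := abs_add_le (v + j) l
    rw [abs_of_nonneg N.shear_nonneg] at this
    linarith [mul_le_mul_of_nonneg_left this N.alpha_pos.le]
  have hu : 4 * κ * |u + g + (i + k : ℤ) + h * j| ≤ 3 * (2 * κ - 1) := by
    have : u + g + (i + k : ℤ) + h * j = u + i + h * j + (g + k) := by push_cast; ring
    rw [this]
    linarith [mul_le_mul_of_nonneg_left (abs_add_le (u + i + h * j) (g + k)) N.kappa_pos.le]
  have hout := N.avoids.layer_one.add_one_le N.kappa_pos.le N.alpha_pos.le (N.layer_one_neg C hl)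
    (i + k) j
  have hin := (N.layer_neg_one_centred C).le N.alpha_pos.le
  linarith [form_le_of_four_mul_abs_le N.kappa_pos N.three_quarters_le hv hu, N.mul_height_le]

theorem prism (N : NormalShell κ α τ h g l M u v w r)
    (C : CentredPlane κ α h u v (r - τ * w ^ 2)) : Prism κ α τ h g l M r := by
  have C' := N.layer_neg_one_centred C
  obtain ⟨i, j, k, hj, hi, hl, hk⟩ :=
    C.exists_shear C' N.toReducedBinary N.shear_nonneg N.shear_le_half
  have hτ := N.le_two_mul_height C hj hi hl hk
  have hκ' := N.lt_two_thirds
  have hα := N.three_quarters_le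
  have hM := N.one_add_le
  have hκ₆₀ : κ < 60 / 100 := by
    by_contra! hlt
    have : (2 * κ - 1) ^ 2 / κ ≤ 1 / 6 := by
      rw [div_le_iff₀ N.kappa_pos]
      nlinarith only [hlt, hκ']
    exact N.volume_absurd (16 / 10) (6 / 10) (45 / 100) (69 / 100)
  have hκ₅₄ : κ < 54 / 100 := by
    by_contra! hlt
    have : (2 * κ - 1) ^ 2 / κ ≤ 667 / 10000 := by
      rw [div_le_iff₀ N.kappa_pos]
      nlinarith only [hlt, hκ₆₀]
    exact N.volume_absurd (154 / 100) (54 / 100) (405 / 1000) (726 / 1000)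
  refine ⟨hκ₅₄, hτ, C.slope, hl, ⟨k, hk⟩, ?_, ?_⟩
  · linarith [N.mul_height_le, C'.le N.alpha_pos.le,
      mul_nonneg N.height_pos.le (sq_nonneg (1 / 2 - w))]
  · have hcentre := form_le_of_four_mul_abs_le (c := 1) N.kappa_pos N.three_quarters_le
      (by rwa [one_mul]) (by rwa [one_mul])
    have hbound := N.bound 0 i j
    simp only [Int.cast_zero, mul_zero, add_zero] at hbound
    have hw := mul_le_mul_of_nonneg_left N.height_le_half N.mul_height_nonneg
    linarith [N.mul_height_le]

end NormalShell

theorem distInt_add_intCast (x : ℝ) (n : ℤ) : distInt (x + n) = distInt x := by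
  simp [distInt, round_add_intCast]

theorem lt_distInt_iff {c x : ℝ} : c < distInt x ↔ ∃ k : ℤ, c < x + k ∧ x + k < 1 - c := by
  constructor
  · intro hc
    have hfloor := hc.trans_le (distInt_le x ⌊x⌋)
    have hceil := hc.trans_le (distInt_le x (⌊x⌋ + 1))
    rw [abs_of_nonneg (by linarith [Int.floor_le x])] at hfloor
    rw [abs_of_nonpos (by push_cast; linarith [Int.lt_floor_add_one x])] at hceil
    push_cast at hceil
    exact ⟨-⌊x⌋, by push_cast; linarith, by push_cast; linarith⟩
  · rintro ⟨k, hk, hk'⟩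
    obtain ⟨n, z, rfl, hz⟩ := exists_eq_add_abs_eq_distInt x
    rw [← hz, lt_abs]
    rcases le_or_gt (n + k) 0 with hn | hn
    · have : (n + k : ℝ) ≤ 0 := by exact_mod_cast hn
      exact .inl (by linarith)
    · have : (1 : ℝ) ≤ n + k := by exact_mod_cast hn
      exact .inr (by linarith)

theorem add_lt_distInt {v l c : ℝ} (hl : 0 ≤ l) (hl' : l ≤ 1 / 2) (hc : 1 / 4 ≤ c)
    (h₀ : c < distInt (v - l)) (h₁ : c < distInt v) (h₂ : c < distInt (v + l)) :
    l + c < distInt v := by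
  obtain ⟨i, hi, hi'⟩ := lt_distInt_iff.1 h₀
  obtain ⟨j, hj, hj'⟩ := lt_distInt_iff.1 h₁
  obtain ⟨k, hk, hk'⟩ := lt_distInt_iff.1 h₂
  have hij : i - j < 1 := by exact_mod_cast (by linarith : (i - j : ℝ) < 1)
  have hji : j - i < 1 := by exact_mod_cast (by linarith : (j - i : ℝ) < 1)
  have hjk : j - k < 1 := by exact_mod_cast (by linarith : (j - k : ℝ) < 1)
  have hkj : k - j < 1 := by exact_mod_cast (by linarith : (k - j : ℝ) < 1)
  obtain rfl : i = j := by omega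
  obtain rfl : k = i := by omega
  exact lt_distInt_iff.2 ⟨k, by linarith, by linarith⟩

/-- A normal shell whose layer nearest to the origin is not centred. -/
structure OffCentreShell (κ α τ h g l M u v w r : ℝ) : Prop extends
    NormalShell κ α τ h g l M u v w r where
  not_centred : ¬CentredPlane κ α h u v (r - τ * w ^ 2)

theorem SpaceAvoids.layer_two {κ α τ h g l u v w ρ : ℝ} (H : SpaceAvoids κ α τ h g l u v w ρ) :
    PlaneAvoids κ α h (u + 2 * g) (v + 2 * l) (ρ - τ * (2 + w) ^ 2) := by
  convert H 2 using 1 <;> push_cast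
  all_goals ring

theorem SpaceAvoids.layer_neg_two {κ α τ h g l u v w ρ : ℝ}
    (H : SpaceAvoids κ α τ h g l u v w ρ) :
    PlaneAvoids κ α h (u - 2 * g) (v - 2 * l) (ρ - τ * (2 - w) ^ 2) := by
  convert H (-2) using 1 <;> push_cast
  all_goals ring

theorem ReducedTernary.volume_plane {κ α τ h l M : ℝ} (P : ReducedTernary κ α τ h l M) :
    2 * M ^ 2 * κ * α ^ 2 ≤ 1 := by
  have hκ := P.kappa_pos
  have hα := P.alpha_pos
  have : M ^ 2 * κ * α * (3 / 4 * α) ≤ M ^ 2 * κ * α * τ := by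
    gcongr
    exact P.le_height
  linarith [P.volume]

theorem ReducedTernary.volume_plane_absurd {κ α τ h l M : ℝ} (P : ReducedTernary κ α τ h l M)
    (m k a : ℝ) (hm : m ≤ M := by linarith) (hk : k ≤ κ := by linarith)
    (ha : a ≤ α := by linarith) (hm0 : 0 ≤ m := by norm_num) (hk0 : 0 ≤ k := by norm_num)
    (ha0 : 0 ≤ a := by norm_num) (hlt : 1 < 2 * m ^ 2 * k * a ^ 2 := by norm_num) : False := by
  have hκ := hk0.trans hk
  have hle : 2 * m ^ 2 * k * a ^ 2 ≤ 2 * M ^ 2 * κ * α ^ 2 := by gcongr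
  linarith [P.volume_plane]

namespace NormalShell

variable {κ α τ h g l M u v w r : ℝ}

theorem gap_nonneg (N : NormalShell κ α τ h g l M u v w r) : 0 ≤ r - τ * w ^ 2 := by
  obtain ⟨n, i, j, hle⟩ := N.exists_le
  have hw : w ^ 2 ≤ (w + n) ^ 2 := by
    rw [sq_le_sq, abs_of_nonneg N.height_nonneg, le_abs]
    rcases le_or_gt 0 n with hn | hn
    · have : (0 : ℝ) ≤ n := by exact_mod_cast hn
      exact .inl (by linarith)
    · have : (n : ℝ) ≤ -1 := by exact_mod_cast Int.le_sub_one_of_lt hn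
      exact .inr (by linarith [N.height_le_half])
  linarith [mul_le_mul_of_nonneg_left hw N.height_pos.le,
    mul_nonneg N.kappa_pos.le (sq_nonneg (u + g * n + i + h * j)),
    mul_nonneg N.alpha_pos.le (sq_nonneg (v + l * n + j))]

theorem gap_le (N : NormalShell κ α τ h g l M u v w r) (n : ℤ) :
    r - τ * (w + n) ^ 2 ≤ κ / 4 + α * distInt (v + l * n) ^ 2 + M - 1 := by
  obtain ⟨i, j, hij⟩ := exists_plane_le N.kappa_pos.le α h (u + g * n) (v + l * n)
  linarith [N.bound n i j]

theorem gap_zero_le (N : NormalShell κ α τ h g l M u v w r) :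
    r - τ * w ^ 2 ≤ κ / 4 + α * distInt v ^ 2 + M - 1 := by
  simpa using N.gap_le 0

theorem gap_neg_one_le (N : NormalShell κ α τ h g l M u v w r) :
    r - τ * (1 - w) ^ 2 ≤ κ / 4 + α * distInt (v - l) ^ 2 + M - 1 := by
  have hw : (w + (-1 : ℤ)) ^ 2 = (1 - w) ^ 2 := by push_cast; ring
  have := N.gap_le (-1)
  rw [hw] at this
  simpa [← sub_eq_add_neg] using this

theorem layer_centred_or_wide_or_narrow (N : NormalShell κ α τ h g l M u v w r) (n : ℤ)
    (hn : 0 ≤ r - τ * (w + n) ^ 2) :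
    CentredPlane κ α h (u + g * n) (v + l * n) (r - τ * (w + n) ^ 2) ∨
      WideBounds κ α h (distInt (v + l * n)) M ∨
      NarrowBounds κ α (distInt (v + l * n)) (r - τ * (w + n) ^ 2) :=
  ((N.avoids n).centred_or_wideBounds_or_narrowBounds N.toReducedBinary hn N.volume_plane
    (N.bound n)).imp_right (.imp_left And.left)

end NormalShell

theorem WideBounds.quarter_lt {κ α h v M : ℝ} (W : WideBounds κ α h v M) (hα : 0 < α)
    (hα' : α < 1 / 2) : 1 / 4 < v := by
  by_contra! hv
  linarith [W.offset, mul_le_mul_of_nonneg_left hv hα.le]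

namespace OffCentreShell

variable {κ α τ h g l M u v w r : ℝ}

theorem wide_or_narrow (N : OffCentreShell κ α τ h g l M u v w r) :
    WidePlane κ α (distInt v) (r - τ * w ^ 2) ∨ NarrowPlane κ α (distInt v) (r - τ * w ^ 2) :=
  (N.avoids.layer_zero.centred_or_wide_or_narrow N.toReducedBinary N.gap_nonneg).resolve_left
    N.not_centred

theorem le_gap (N : OffCentreShell κ α τ h g l M u v w r) :
    9 / 4 * α + 5 / 8 * κ ≤ r - τ * w ^ 2 := by
  rcases N.wide_or_narrow with W | W
  · exact W.le N.kappa_pos.le N.alpha_pos.le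
  · exact W.le N.alpha_pos.le

theorem one_add_two_mul_le (N : OffCentreShell κ α τ h g l M u v w r) :
    1 + 2 * α + κ / 2 ≤ M := by
  have hv := mul_le_mul_of_nonneg_left (distInt_le_half v) N.alpha_pos.le
  rcases N.wide_or_narrow with W | W
  · have hW : α * (2 - distInt v) ^ 2 + κ ≤ r - τ * w ^ 2 := W
    linarith [N.gap_zero_le, N.kappa_pos]
  · linarith [N.gap_zero_le, W.fourth_row, W.third_row, N.kappa_pos]

theorem kappa_lt (N : OffCentreShell κ α τ h g l M u v w r) : κ < 578 / 1000 := by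
  by_contra! hκ
  have hα := N.three_quarters_le
  have hM := N.one_add_two_mul_le
  exact N.volume_plane_absurd (2156 / 1000) (578 / 1000) (4335 / 10000)

theorem alpha_lt (N : OffCentreShell κ α τ h g l M u v w r) : α < 47 / 100 := by
  by_contra! hα
  have hκ := N.half_le
  have hM := N.one_add_two_mul_le
  exact N.volume_plane_absurd (219 / 100) (1 / 2) (47 / 100)

theorem gap_one_nonneg (N : OffCentreShell κ α τ h g l M u v w r) :
    0 ≤ r - τ * (1 + w) ^ 2 := by
  refine N.avoids.layer_one.nonneg N.kappa_pos.le N.alpha_pos.le ?_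
  linarith [N.le_gap, N.mul_height_le, N.height_lt, N.three_quarters_le, N.half_le]

theorem gap_neg_one_nonneg (N : OffCentreShell κ α τ h g l M u v w r) :
    0 ≤ r - τ * (1 - w) ^ 2 := by
  linarith [N.gap_one_nonneg, N.mul_height_nonneg]

theorem quarter_lt_distInt (N : OffCentreShell κ α τ h g l M u v w r)
    (hslope : 4 * κ * |h| < 1) (n : ℤ) (hn : 0 ≤ r - τ * (w + n) ^ 2) :
    1 / 4 < distInt (v + l * n) := by
  rcases N.layer_centred_or_wide_or_narrow n hn with C | W | W
  · linarith [C.slope]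
  · exact W.quarter_lt N.alpha_pos N.lt_half
  · linarith [W.le_offset]

theorem not_wide (N : OffCentreShell κ α τ h g l M u v w r) (hslope : 4 * κ * |h| < 1)
    (hαM : 96 / 100 ≤ α * M) : False := by
  have hl : l + 1 / 4 < distInt v := by
    refine add_lt_distInt N.shear_nonneg N.shear_le_half le_rfl ?_ ?_ ?_
    · convert N.quarter_lt_distInt hslope (-1) (N.gap_neg_one_nonneg.trans_eq ?_) using 2 <;>
        push_cast <;> ring
    · simpa using N.quarter_lt_distInt hslope 0 (by simpa using N.gap_nonneg)
    · simpa using N.quarter_lt_distInt hslope 1 (by simpa [add_comm w] using N.gap_one_nonneg)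
  have hl2 : l ^ 2 ≤ (1 / 4) ^ 2 :=
    pow_le_pow_left₀ N.shear_nonneg (by linarith [distInt_le_half v]) 2
  have hτ : 15 / 16 * α ≤ τ := by
    linarith [N.reduced_shear, mul_le_mul_of_nonneg_left hl2 N.alpha_pos.le]
  have hκ := N.half_le
  have hα := N.alpha_pos
  have : 8 / 3 * (1 / 2) * (15 / 16) * (96 / 100) ^ 2 ≤ 8 / 3 * M ^ 2 * κ * α * τ := calc
    8 / 3 * (1 / 2) * (15 / 16) * (96 / 100) ^ 2 ≤ 8 / 3 * κ * (15 / 16) * (α * M) ^ 2 := by gcongr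
    _ = 8 / 3 * M ^ 2 * κ * α * (15 / 16 * α) := by ring
    _ ≤ 8 / 3 * M ^ 2 * κ * α * τ := by gcongr
  norm_num at this
  linarith [N.volume]

theorem centred_or_narrow (N : OffCentreShell κ α τ h g l M u v w r) (n : ℤ)
    (hn : 0 ≤ r - τ * (w + n) ^ 2) :
    CentredPlane κ α h (u + g * n) (v + l * n) (r - τ * (w + n) ^ 2) ∨
      NarrowBounds κ α (distInt (v + l * n)) (r - τ * (w + n) ^ 2) :=
  (N.layer_centred_or_wide_or_narrow n hn).imp_right
    fun H => H.resolve_left fun W => N.not_wide W.slope W.le_mul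

theorem narrow_zero (N : OffCentreShell κ α τ h g l M u v w r) :
    NarrowBounds κ α (distInt v) (r - τ * w ^ 2) := by
  have := N.centred_or_narrow 0
  simp only [Int.cast_zero, mul_zero, add_zero] at this
  exact (this N.gap_nonneg).resolve_left N.not_centred

theorem centred_or_narrow_one (N : OffCentreShell κ α τ h g l M u v w r) :
    CentredPlane κ α h (u + g) (v + l) (r - τ * (1 + w) ^ 2) ∨
      NarrowBounds κ α (distInt (v + l)) (r - τ * (1 + w) ^ 2) := by
  simpa [add_comm w] using N.centred_or_narrow 1 (by simpa [add_comm w] using N.gap_one_nonneg)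

theorem centred_or_narrow_neg_one (N : OffCentreShell κ α τ h g l M u v w r) :
    CentredPlane κ α h (u - g) (v - l) (r - τ * (1 - w) ^ 2) ∨
      NarrowBounds κ α (distInt (v - l)) (r - τ * (1 - w) ^ 2) := by
  have hw : (w + (-1 : ℤ)) ^ 2 = (1 - w) ^ 2 := by push_cast; ring
  have := N.centred_or_narrow (-1)
  rw [hw] at this
  simpa [← sub_eq_add_neg] using this N.gap_neg_one_nonneg

end OffCentreShell

/-- A normal shell whose layers `n = -2` and `n = 1` are centred at distances `s'` and `s` from a
lattice row while the layers `n = -1` and `n = 0` are not centred. -/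
structure LayeredShell (κ α τ h g l M u v w r s s' : ℝ) : Prop extends
    NormalShell κ α τ h g l M u v w r where
  kappa_lt : κ < 578 / 1000
  alpha_lt : α < 47 / 100
  one_add_two_mul_le : 1 + 2 * α + κ / 2 ≤ M
  three_mul_shear : 3 * l = 1 + s - s'
  offset : 4 * α * |s| ≤ 2 * κ - 1
  offset' : 4 * α * |s'| ≤ 2 * κ - 1
  exists_shear : ∃ k : ℤ, 4 * κ * |3 * g - h + k| ≤ 2 * (2 * κ - 1)
  zero : NarrowBounds κ α (l - s) (r - τ * w ^ 2)
  zero_le : r - τ * w ^ 2 ≤ κ / 4 + α * (l - s) ^ 2 + M - 1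
  neg_one : NarrowBounds κ α (1 + s - 2 * l) (r - τ * (1 - w) ^ 2)
  neg_one_le : r - τ * (1 - w) ^ 2 ≤ κ / 4 + α * (1 + s - 2 * l) ^ 2 + M - 1
  neg_two : α * (1 + |s'|) ^ 2 + κ / 4 ≤ r - τ * (2 - w) ^ 2
  height : 1 + 3 / 4 * α ≤ 8 * (τ * w)

theorem ReducedBinary.lt_of_four_mul_le {κ α h x : ℝ} (P : ReducedBinary κ α h)
    (hκ : κ < 578 / 1000) (hx : 4 * α * x ≤ 2 * κ - 1) : x < 9 / 100 := by
  by_contra! h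
  linarith [mul_le_mul_of_nonneg_left h P.alpha_pos.le, P.three_quarters_le]

theorem ReducedBinary.mul_sq_le {κ α h s : ℝ} (P : ReducedBinary κ α h) (hκ : κ < 578 / 1000)
    (hs : 4 * α * |s| ≤ 2 * κ - 1) : α * s ^ 2 ≤ 9 / 400 * (2 * κ - 1) := by
  have := mul_le_mul_of_nonneg_left (P.lt_of_four_mul_le hκ hs).le
    (mul_nonneg P.alpha_pos.le (abs_nonneg s))
  rw [← sq_abs]
  linarith

theorem CentredPlane.distInt_lt {κ α h u v ρ : ℝ} (C : CentredPlane κ α h u v ρ)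
    (P : ReducedBinary κ α h) (hκ : κ < 578 / 1000) : distInt v < 9 / 100 :=
  P.lt_of_four_mul_le hκ C.offset

theorem CentredPlane.exists_centre {κ α h u v ρ : ℝ} (C : CentredPlane κ α h u v ρ)
    (P : ReducedBinary κ α h) (hκ : κ < 578 / 1000) : ∃ i j : ℤ, |v + j| = distInt v ∧
      |v + j| < 9 / 100 ∧ 4 * α * |v + j| ≤ 2 * κ - 1 ∧ 4 * κ * |u + i + h * j| ≤ 2 * κ - 1 := by
  obtain ⟨i, j, hj, hi⟩ := C.centre
  exact ⟨i, j, hj, hj ▸ C.distInt_lt P hκ, hj ▸ C.offset, hi⟩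

theorem distInt_eq_abs_of_lt {x d c : ℝ} {j : ℤ} (hd : x + j = d) (hx : distInt x ≤ c)
    (hc : |d| < 1 - c) : distInt x = |d| := by
  rcases le_or_gt |d| (1 / 2) with h | h
  · rw [← distInt_add_intCast x j, hd, distInt_eq_abs h]
  · refine absurd hx (not_le.2 (lt_distInt_iff.2 ?_))
    rcases abs_cases d with ⟨hd', -⟩ | ⟨hd', -⟩
    · exact ⟨j, by linarith, by linarith⟩
    · exact ⟨j + 1, by push_cast; linarith, by push_cast; linarith⟩

namespace OffCentreShell

variable {κ α τ h g l M u v w r : ℝ}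

theorem not_three_narrow (N : OffCentreShell κ α τ h g l M u v w r)
    (h₀ : NarrowBounds κ α (distInt (v - l)) (r - τ * (1 - w) ^ 2))
    (h₁ : NarrowBounds κ α (distInt (v + l)) (r - τ * (1 + w) ^ 2)) : False := by
  have N₀ := N.narrow_zero
  have hshear : l + 279 / 1000 < distInt v :=
    add_lt_distInt N.shear_nonneg N.shear_le_half (by norm_num) (by linarith [h₀.le_offset])
      (by linarith [N₀.le_offset]) (by linarith [h₁.le_offset])
  have hl2 : l ^ 2 ≤ (131 / 1000) ^ 2 :=
    pow_le_pow_left₀ N.shear_nonneg (by linarith [N₀.offset_le]) 2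
  have hd := pow_le_pow_left₀ (distInt_nonneg v) N₀.offset_le 2
  have hκ := N.half_le
  have hα := N.three_quarters_le
  have hτ : (1 - (131 / 1000) ^ 2) * α ≤ τ := by
    linarith [N.reduced_shear, mul_le_mul_of_nonneg_left hl2 N.alpha_pos.le]
  have hM : 1 + τ + 9 / 4 * α + 3 / 8 * κ ≤ M + α * distInt v ^ 2 := by
    linarith [h₁.le N.alpha_pos.le, N.gap_zero_le, N.mul_height_nonneg]
  have hdα := mul_le_mul_of_nonneg_left hd N.alpha_pos.le
  exact N.volume_absurd (2336 / 1000) (1 / 2) (3 / 8) (3685 / 10000)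

theorem centred_one (N : OffCentreShell κ α τ h g l M u v w r) :
    CentredPlane κ α h (u + g) (v + l) (r - τ * (1 + w) ^ 2) := by
  refine N.centred_or_narrow_one.resolve_right fun h₁ => ?_
  rcases N.centred_or_narrow_neg_one with C | h₀
  · linarith [C.lt N.toReducedBinary, h₁.le N.alpha_pos.le, N.mul_height_nonneg]
  · exact N.not_three_narrow h₀ h₁

theorem distInt_zero_eq (N : OffCentreShell κ α τ h g l M u v w r) {j : ℤ}
    (hs : |v + l + j| < 9 / 100) : distInt v = l - (v + l + j) := by
  have N₀ := N.narrow_zero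
  have hl := N.shear_nonneg
  have hl' := N.shear_le_half
  rw [abs_lt] at hs
  have hv : distInt v = |v + j| :=
    distInt_eq_abs_of_lt rfl N₀.offset_le (abs_lt.2 ⟨by linarith, by linarith⟩)
  rw [hv, abs_of_nonpos]
  · ring
  · by_contra! h
    linarith [N₀.le_offset, hv.trans (abs_of_pos h)]

theorem narrow_neg_one (N : OffCentreShell κ α τ h g l M u v w r) :
    NarrowBounds κ α (distInt (v - l)) (r - τ * (1 - w) ^ 2) := by
  refine N.centred_or_narrow_neg_one.resolve_left fun C => ?_
  obtain ⟨-, j, -, hs, -, -⟩ := N.centred_one.exists_centre N.toReducedBinary N.kappa_lt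
  have hd := N.distInt_zero_eq hs
  have N₀ := N.narrow_zero
  rw [abs_lt] at hs
  have : 9 / 100 < distInt (v - l) := lt_distInt_iff.2 ⟨j + 1,
    by push_cast; linarith [N₀.offset_le], by push_cast; linarith [N₀.le_offset]⟩
  linarith [C.distInt_lt N.toReducedBinary N.kappa_lt]

theorem distInt_neg_one_eq (N : OffCentreShell κ α τ h g l M u v w r) {j : ℤ}
    (hs : |v + l + j| < 9 / 100) : distInt (v - l) = 1 + (v + l + j) - 2 * l := by
  have hd := N.distInt_zero_eq hs
  have N₀ := N.narrow_zero
  rw [abs_lt] at hs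
  have hpos : 0 < 1 + (v + l + j) - 2 * l := by linarith [N₀.offset_le]
  rw [← abs_of_pos hpos]
  refine distInt_eq_abs_of_lt (j := j + 1) (by push_cast; ring) N.narrow_neg_one.offset_le ?_
  rw [abs_of_pos hpos]
  linarith [N₀.le_offset]

theorem gap_neg_two_nonneg (N : OffCentreShell κ α τ h g l M u v w r) :
    0 ≤ r - τ * (2 - w) ^ 2 := by
  by_contra! hneg
  have hout : r - τ * (2 - w) ^ 2 + 1 ≤ (κ + α) / 4 := by
    by_contra! h
    exact hneg.not_ge (N.avoids.layer_neg_two.nonneg N.kappa_pos.le N.alpha_pos.le h)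
  have hM := N.one_add_two_mul_le
  have hcentred := N.centred_one.add_one_le N.alpha_pos.le
  have hnarrow := N.narrow_neg_one.le N.alpha_pos.le
  have hκ := N.half_le
  have hα := N.three_quarters_le
  have hκ2 : 0 ≤ (κ - 1 / 2) * (578 / 1000 - κ) :=
    mul_nonneg (by linarith) (by linarith [N.kappa_lt])
  exact N.volume_absurd 2 (1 / 2) (375 / 1000) (508 / 1000)

theorem centred_neg_two (N : OffCentreShell κ α τ h g l M u v w r) :
    CentredPlane κ α h (u - 2 * g) (v - 2 * l) (r - τ * (2 - w) ^ 2) := by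
  refine N.avoids.layer_neg_two.centred N.toReducedBinary N.gap_neg_two_nonneg ?_
  linarith [N.centred_one.lt N.toReducedBinary, N.mul_height_le]

theorem gap_two_neg (N : OffCentreShell κ α τ h g l M u v w r) : r - τ * (2 + w) ^ 2 < 0 := by
  by_contra! hr
  have C : CentredPlane κ α h (u + 2 * g) (v + 2 * l) (r - τ * (2 + w) ^ 2) := by
    refine N.avoids.layer_two.centred N.toReducedBinary hr ?_
    linarith [N.centred_one.lt N.toReducedBinary, N.mul_height_nonneg, N.height_pos]
  obtain ⟨-, j, -, hs, -, -⟩ := N.centred_one.exists_centre N.toReducedBinary N.kappa_lt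
  have hd := N.distInt_zero_eq hs
  have N₀ := N.narrow_zero
  rw [abs_lt] at hs
  have : 9 / 100 < distInt (v + 2 * l) := lt_distInt_iff.2 ⟨j,
    by linarith [N₀.le_offset], by linarith [N₀.offset_le]⟩
  linarith [C.distInt_lt N.toReducedBinary N.kappa_lt]

theorem le_eight_mul_height (N : OffCentreShell κ α τ h g l M u v w r) :
    1 + 3 / 4 * α ≤ 8 * (τ * w) := by
  have hout : r - τ * (2 + w) ^ 2 + 1 ≤ (κ + α) / 4 := by
    by_contra! h
    exact N.gap_two_neg.not_ge (N.avoids.layer_two.nonneg N.kappa_pos.le N.alpha_pos.le h)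
  linarith [N.centred_neg_two.le N.alpha_pos.le]

theorem exists_layeredShell (N : OffCentreShell κ α τ h g l M u v w r) :
    ∃ s s', LayeredShell κ α τ h g l M u v w r s s' := by
  have C₁ := N.centred_one
  have C₂ := N.centred_neg_two
  obtain ⟨i, j, -, hs, hoffset, hi⟩ := C₁.exists_centre N.toReducedBinary N.kappa_lt
  obtain ⟨i', j', hj', hs', hoffset', hi'⟩ := C₂.exists_centre N.toReducedBinary N.kappa_lt
  have N₀ := N.narrow_zero
  have N₁ := N.narrow_neg_one
  have V₀ := N.gap_zero_le
  have V₁ := N.gap_neg_one_le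
  rw [N.distInt_zero_eq hs] at N₀ V₀
  rw [N.distInt_neg_one_eq hs] at N₁ V₁
  have hlo := N₀.le_offset
  have hhi := N₀.offset_le
  rw [abs_lt] at hs hs'
  obtain rfl : j' = j + 1 := by
    have h₁ : j' - j < 2 := by exact_mod_cast (by linarith : (j' - j : ℝ) < 2)
    have h₂ : j - j' < 0 := by exact_mod_cast (by linarith : (j - j' : ℝ) < 0)
    omega
  have hk : |3 * g - h + (i - i' : ℤ)| ≤
      |u + g + i + h * j| + |u - 2 * g + i' + h * (j + 1 : ℤ)| := by
    refine (abs_sub _ _).trans_eq' (congrArg _ ?_)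
    push_cast
    ring
  refine ⟨_, _, N.toNormalShell, N.kappa_lt, N.alpha_lt, N.one_add_two_mul_le, ?_, hoffset,
    hoffset', ⟨i - i', ?_⟩, N₀, V₀, N₁, V₁, ?_, N.le_eight_mul_height⟩
  · push_cast
    ring
  · linarith [mul_le_mul_of_nonneg_left hk N.kappa_pos.le]
  · rw [hj']
    exact C₂.inner

end OffCentreShell

/-- The configuration in which the lattice points near the origin form an almost face-centred
arrangement, `(3g - h, 3l - 1)` being close to a lattice vector; the gap has lower end `r`. -/
structure FaceCentred (κ α τ h g l M r : ℝ) : Prop where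
  kappa_lt : κ < 567 / 1000
  alpha_lt : α < 47 / 100
  lt : M < 23 / 10
  two_mul_height_le : 2 * τ ≤ 15 / 4 * κ - 1 - 5 / 9 * α
  le_ten_mul_height : M + 1 + 3 / 4 * α ≤ 10 * τ
  shear : 4 * α * |3 * l - 1| ≤ 2 * (2 * κ - 1)
  exists_shear : ∃ k : ℤ, 4 * κ * |3 * g - h + k| ≤ 2 * (2 * κ - 1)
  lower : 9 / 4 * τ + α + κ / 4 ≤ r
  upper : r ≤ τ / 4 + α / 9 + (2 * κ - 1) * (1 / 18 + 9 / 400) + κ / 4 + M - 1 +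
    7 / 400 * (4 * τ - 1 - 3 / 4 * α)
  upper' : r ≤ τ / 4 + 4 / 9 * α + (2 * κ - 1) * (1 / 3 + 9 / 400) + 4 * κ - 1

theorem SpaceAvoids.layer_three {κ α τ h g l u v w ρ : ℝ} (H : SpaceAvoids κ α τ h g l u v w ρ) :
    PlaneAvoids κ α h (u + 3 * g) (v + 3 * l) (ρ - τ * (3 + w) ^ 2) := by
  convert H 3 using 1 <;> push_cast
  all_goals ring

namespace LayeredShell

variable {κ α τ h g l M u v w r s s' : ℝ}

theorem abs_offset_lt (L : LayeredShell κ α τ h g l M u v w r s s') : |s| < 9 / 100 :=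
  L.lt_of_four_mul_le L.kappa_lt L.offset

theorem abs_offset_lt' (L : LayeredShell κ α τ h g l M u v w r s s') : |s'| < 9 / 100 :=
  L.lt_of_four_mul_le L.kappa_lt L.offset'

theorem two_mul_height_le (L : LayeredShell κ α τ h g l M u v w r s s') :
    2 * τ ≤ 15 / 4 * κ - 1 - 5 / 9 * α := by
  have hs := abs_le.1 (le_refl |s|)
  have hs' := abs_le.1 (le_refl |s'|)
  have hlt := L.abs_offset_lt
  have hlt' := L.abs_offset_lt'
  have hinner := L.neg_two
  have hw := L.mul_height_le
  have hl := L.three_mul_shear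
  have habs := mul_nonneg L.alpha_pos.le (abs_nonneg s')
  have hsq := mul_nonneg L.alpha_pos.le (sq_nonneg |s'|)
  rcases le_total 0 s with h₀ | h₀
  · have hle : (1 - (1 + s - 2 * l)) ^ 2 ≤ (2 / 3 * (1 + |s'|)) ^ 2 :=
      pow_le_pow_left₀ (by linarith) (by linarith) 2
    linarith [mul_le_mul_of_nonneg_left hle L.alpha_pos.le, L.neg_one.outer_second_row]
  · have hle : (1 - (l - s)) ^ 2 ≤ (2 / 3 * (1 + |s'|)) ^ 2 :=
      pow_le_pow_left₀ (by linarith) (by linarith) 2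
    linarith [mul_le_mul_of_nonneg_left hle L.alpha_pos.le, L.zero.outer_second_row]

theorem le_four_mul_height (L : LayeredShell κ α τ h g l M u v w r s s') :
    1 + 3 / 4 * α ≤ 4 * τ := by
  linarith [L.height, L.mul_height_le]

theorem le_ten_mul_height (L : LayeredShell κ α τ h g l M u v w r s s') :
    M + 1 + 3 / 4 * α ≤ 10 * τ := by
  have H := L.avoids_next.layer_three
  have hκ := L.half_le
  have hα := L.three_quarters_le
  have ht := L.le_four_mul_height
  have hw := L.height
  have hw' := L.mul_height_le
  have hout : r + M - τ * (3 + w) ^ 2 + 1 ≤ (κ + α) / 4 := by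
    by_contra! hnonneg
    have hin := H.le L.toReducedBinary (H.nonneg L.kappa_pos.le L.alpha_pos.le hnonneg)
    have hle : (l - s) ^ 2 ≤ (41 / 100) ^ 2 :=
      pow_le_pow_left₀ (by linarith [L.zero.le_offset]) L.zero.offset_le 2
    have hle' := mul_le_mul_of_nonneg_left hle L.alpha_pos.le
    have hz := L.zero_le
    exact L.volume_absurd (2577 / 1000) (1 / 2) (375 / 1000) (3203 / 10000)
  linarith [L.neg_two, mul_nonneg L.alpha_pos.le (abs_nonneg s'),
    mul_nonneg L.alpha_pos.le (sq_nonneg |s'|)]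

theorem kappa_lt' (L : LayeredShell κ α τ h g l M u v w r s s') : κ < 567 / 1000 := by
  by_contra! hlt
  have hτ := L.le_ten_mul_height
  have hM := L.one_add_two_mul_le
  have hα := L.three_quarters_le
  exact L.volume_absurd (2134 / 1000) (567 / 1000) (425 / 1000) (345 / 1000)

theorem lt (L : LayeredShell κ α τ h g l M u v w r s s') : M < 23 / 10 := by
  by_contra! hlt
  have hτ := L.two_mul_height_le
  have hτ' := L.le_ten_mul_height
  have hα := L.three_quarters_le
  exact L.volume_absurd (23 / 10) (515 / 1000) (386 / 1000) (3589 / 10000)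

theorem lower (L : LayeredShell κ α τ h g l M u v w r s s') : 9 / 4 * τ + α + κ / 4 ≤ r := by
  have hw : (3 / 2) ^ 2 ≤ (2 - w) ^ 2 :=
    pow_le_pow_left₀ (by norm_num) (by linarith [L.height_le_half]) 2
  linarith [mul_le_mul_of_nonneg_left hw L.height_pos.le, L.neg_two,
    mul_nonneg L.alpha_pos.le (abs_nonneg s'), mul_nonneg L.alpha_pos.le (sq_nonneg |s'|)]

theorem upper (L : LayeredShell κ α τ h g l M u v w r s s') :
    r ≤ τ / 4 + α / 9 + (2 * κ - 1) * (1 / 18 + 9 / 400) + κ / 4 + M - 1 +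
      7 / 400 * (4 * τ - 1 - 3 / 4 * α) := by
  have hτ := L.height_pos
  have hκ := L.kappa_lt
  have hheight := L.height
  have hz := L.zero_le
  have hz' := L.neg_one_le
  have hl : l = (1 + s - s') / 3 := by linarith [L.three_mul_shear]
  rw [hl] at hz hz'
  have hw : 1 / 2 - w ≤ 14 / 100 := by
    by_contra! hw
    linarith [mul_le_mul_of_nonneg_left hw.le hτ.le, L.kappa_lt', L.two_mul_height_le,
      L.three_quarters_le]
  have hw' := mul_le_mul_of_nonneg_left hw (mul_nonneg hτ.le (sub_nonneg.2 L.height_le_half))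
  have hq := L.mul_sq_le hκ L.offset
  have hq' := L.mul_sq_le hκ L.offset'
  have hs := mul_le_mul_of_nonneg_left (neg_le_abs s) L.alpha_pos.le
  have ht' := mul_le_mul_of_nonneg_left (le_abs_self s') L.alpha_pos.le
  have hoffset := L.offset
  have hoffset' := L.offset'
  have hss := mul_nonneg L.alpha_pos.le (sq_nonneg (s - s'))
  -- The mean of `hz` and `hz'` bounds `r - τ / 4`, up to the error `τ * (1 / 2 - w) ^ 2`.
  linarith

theorem upper' (L : LayeredShell κ α τ h g l M u v w r s s') :
    r ≤ τ / 4 + 4 / 9 * α + (2 * κ - 1) * (1 / 3 + 9 / 400) + 4 * κ - 1 := by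
  have hout := L.zero.outer_second_row
  have hl : l = (1 + s - s') / 3 := by linarith [L.three_mul_shear]
  rw [hl] at hout
  have hq := L.mul_sq_le L.kappa_lt L.offset
  have hq' := L.mul_sq_le L.kappa_lt L.offset'
  have hs' := mul_le_mul_of_nonneg_left (le_abs_self s) L.alpha_pos.le
  have ht' := mul_le_mul_of_nonneg_left (le_abs_self s') L.alpha_pos.le
  have hw := mul_le_mul_of_nonneg_left L.height_le_half L.mul_height_nonneg
  have hss := mul_nonneg L.alpha_pos.le (sq_nonneg (s - s'))
  linarith [L.offset, L.offset', L.mul_height_le]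

theorem shear (L : LayeredShell κ α τ h g l M u v w r s s') :
    4 * α * |3 * l - 1| ≤ 2 * (2 * κ - 1) := by
  have hl : 3 * l - 1 = s - s' := by linarith [L.three_mul_shear]
  rw [hl]
  linarith [mul_le_mul_of_nonneg_left (abs_sub s s') L.alpha_pos.le, L.offset, L.offset']

theorem faceCentred (L : LayeredShell κ α τ h g l M u v w r s s') :
    FaceCentred κ α τ h g l M r :=
  ⟨L.kappa_lt', L.alpha_lt, L.lt, L.two_mul_height_le, L.le_ten_mul_height, L.shear,
    L.exists_shear, L.lower, L.upper, L.upper'⟩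

end LayeredShell

theorem four_mul_abs_add_le {c x y b b' : ℝ} (hc : 0 ≤ c) (hx : 4 * c * |x| ≤ b)
    (hy : 4 * c * |y| ≤ b') : 4 * c * |x + y| ≤ b + b' := by
  linarith [mul_le_mul_of_nonneg_left (abs_add_le x y) hc]

theorem CentredPlane.exists_near {κ α h u v ρ : ℝ} (C : CentredPlane κ α h u v ρ)
    (P : ReducedBinary κ α h) {x y c : ℝ} {k m : ℤ} (hy : 4 * α * |y + m| ≤ c * (2 * κ - 1))
    (hx : 4 * κ * |x + k + h * m| ≤ c * (2 * κ - 1)) :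
    ∃ i j : ℤ, 4 * α * |v + y + j| ≤ (1 + c) * (2 * κ - 1) ∧
      4 * κ * |u + x + i + h * j| ≤ (1 + c) * (2 * κ - 1) := by
  obtain ⟨i, j, hj, hi⟩ := C.centre
  have offset := C.offset
  rw [← hj] at offset
  refine ⟨i + k, j + m, ?_, ?_⟩
  · convert four_mul_abs_add_le P.alpha_pos.le offset hy using 3 <;> push_cast
    all_goals ring
  · convert four_mul_abs_add_le P.kappa_pos.le hi hx using 3 <;> push_cast
    all_goals ring

namespace PlaneAvoids

variable {κ α h u v ρ : ℝ}

theorem add_two (H : PlaneAvoids κ α h u v ρ) (i j : ℤ) :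
    κ * (2 + |u + i + h * j|) ^ 2 + α * (v + j) ^ 2 ≤ ρ ∨
      ρ + 1 ≤ κ * (2 + |u + i + h * j|) ^ 2 + α * (v + j) ^ 2 := by
  rcases abs_cases (u + i + h * j) with ⟨habs, -⟩ | ⟨habs, -⟩ <;> rw [habs]
  · convert H (i + 2) j using 4 <;> push_cast
    all_goals ring
  · convert H (i - 2) j using 4 <;> push_cast
    all_goals ring

theorem sub_two (H : PlaneAvoids κ α h u v ρ) (i j : ℤ) :
    κ * (2 - |u + i + h * j|) ^ 2 + α * (v + j) ^ 2 ≤ ρ ∨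
      ρ + 1 ≤ κ * (2 - |u + i + h * j|) ^ 2 + α * (v + j) ^ 2 := by
  rcases abs_cases (u + i + h * j) with ⟨habs, -⟩ | ⟨habs, -⟩ <;> rw [habs]
  · convert H (i - 2) j using 4 <;> push_cast
    all_goals ring
  · convert H (i + 2) j using 4 <;> push_cast
    all_goals ring

theorem add_one_le_of_lt_four_mul (H : PlaneAvoids κ α h u v ρ) (P : ReducedBinary κ α h)
    (hρ : ρ < 4 * κ) (i j : ℤ) : ρ + 1 ≤ κ * (2 + |u + i + h * j|) ^ 2 + α * (v + j) ^ 2 := by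
  refine (H.add_two i j).resolve_left fun hle => ?_
  linarith [mul_nonneg P.kappa_pos.le (abs_nonneg (u + i + h * j)),
    mul_nonneg P.kappa_pos.le (sq_nonneg |u + i + h * j|),
    mul_nonneg P.alpha_pos.le (sq_nonneg (v + j))]

theorem add_one_le_of_abs_le (H : PlaneAvoids κ α h u v ρ) (P : ReducedBinary κ α h)
    (hρ : ρ < 4 * α) {i j : ℤ} {x y e : ℝ} (hy : |v + j| ≤ y) (hx : |u + i + h * j| ≤ x)
    (he : 1 - 2 * |h| ≤ e) : ρ + 1 ≤ α * (2 + y) ^ 2 + κ * (x + e) ^ 2 := by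
  -- The row at distance `2 + |v + j|` contains a point displaced by `± (1 - 2 |h|)`.
  obtain ⟨i', j', hj', hi'⟩ : ∃ i' j' : ℤ, |v + j'| = 2 + |v + j| ∧
      |u + i' + h * j'| ≤ |u + i + h * j| + (1 - 2 * |h|) := by
    have abs_shift_le (σ ε : ℤ) (hε : |2 * h * σ - ε| = 1 - 2 * |h|) :
        |u + (i - ε : ℤ) + h * (j + 2 * σ : ℤ)| ≤ |u + i + h * j| + (1 - 2 * |h|) := by
      rw [← hε]
      refine (abs_add_le _ _).trans_eq' (congrArg _ ?_)
      push_cast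
      ring
    have hh := P.abs_le_half
    rcases abs_cases (v + j) with ⟨hv, hv'⟩ | ⟨hv, hv'⟩ <;>
      rcases abs_cases h with ⟨hh', -⟩ | ⟨hh', -⟩
    · exact ⟨i - 1, j + 2 * 1, by push_cast; rw [abs_of_nonneg] <;> linarith, abs_shift_le 1 1
        (by push_cast; rw [abs_of_nonpos] <;> linarith)⟩
    · exact ⟨i - (-1), j + 2 * 1, by push_cast; rw [abs_of_nonneg] <;> linarith, abs_shift_le 1 (-1)
        (by push_cast; rw [abs_of_nonneg] <;> linarith)⟩
    · exact ⟨i - (-1), j + 2 * (-1), by push_cast; rw [abs_of_nonpos] <;> linarith,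
        abs_shift_le (-1) (-1) (by push_cast; rw [abs_of_nonneg] <;> linarith)⟩
    · exact ⟨i - 1, j + 2 * (-1), by push_cast; rw [abs_of_nonpos] <;> linarith, abs_shift_le (-1) 1
        (by push_cast; rw [abs_of_nonpos] <;> linarith)⟩
  have hα := P.alpha_pos.le
  have hκ := P.kappa_pos.le
  have hvalue := H i' j'
  rw [← sq_abs (u + i' + h * j'), ← sq_abs (v + j'), hj'] at hvalue
  have hlow : 4 * α ≤ α * (2 + |v + j|) ^ 2 := by
    linarith [mul_nonneg hα (abs_nonneg (v + j)), mul_nonneg hα (sq_nonneg |v + j|)]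
  have hlow' := mul_nonneg hκ (sq_nonneg |u + i' + h * j'|)
  calc ρ + 1
    _ ≤ α * (2 + |v + j|) ^ 2 + κ * |u + i' + h * j'| ^ 2 := by
      linarith [hvalue.resolve_left (by linarith)]
    _ ≤ α * (2 + y) ^ 2 + κ * (x + e) ^ 2 := by
      gcongr
      exact hi'.trans (add_le_add hx he)

theorem near_absurd (H : PlaneAvoids κ α h u v ρ) (P : ReducedBinary κ α h) {i j : ℤ} {x y e : ℝ}
    (hy : |v + j| ≤ y) (hx : |u + i + h * j| ≤ x) (he : 1 - 2 * |h| ≤ e) (hρ : ρ < 4 * κ)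
    (hrow : α * (2 + y) ^ 2 + κ * (x + e) ^ 2 < ρ + 1)
    (hrow' : 4 * α ≤ ρ → κ * (2 + x) ^ 2 + α * y ^ 2 < ρ + 1) : False := by
  rcases lt_or_ge ρ (4 * α) with hlt | hge
  · exact hrow.not_ge (H.add_one_le_of_abs_le P hlt hy hx he)
  · refine (hrow' hge).not_ge ((H.add_one_le_of_lt_four_mul P hρ i j).trans ?_)
    have hα := P.alpha_pos.le
    have hκ := P.kappa_pos.le
    rw [← sq_abs (v + j)]
    gcongr

end PlaneAvoids

theorem ReducedTernary.height_lt_of_le {κ α τ h l M : ℝ} (P : ReducedTernary κ α τ h l M)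
    (hM : 16 + 15 * α + 3 * κ + 3 * τ ≤ 16 * M) : τ < 8 / 10 := by
  by_contra! hτ
  have hκ := P.half_le
  have hα := P.three_quarters_le
  exact P.volume_absurd (159 / 100) (1 / 2) (375 / 1000) (8 / 10)

namespace Prism

variable {κ α τ h g l M r u v w ρ : ℝ}

theorem sq_div_le (R : Prism κ α τ h g l M r) (P : ReducedTernary κ α τ h l M) :
    (2 * κ - 1) ^ 2 / κ ≤ 128 / 10000 := by
  have hκ := P.half_le
  have hκ' := R.lt
  rw [div_le_iff₀ P.kappa_pos]
  nlinarith only [hκ, hκ']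

theorem le_height (R : Prism κ α τ h g l M r) (P : ReducedTernary κ α τ h l M) :
    741 / 1000 ≤ τ := by
  linarith [R.height, R.sq_div_le P, P.half_le, P.three_quarters_le]

theorem scale_le (R : Prism κ α τ h g l M r) (P : ReducedTernary κ α τ h l M) :
    M ≤ 1645 / 1000 := by
  by_contra! hM
  have hκ := P.half_le
  have hα := P.three_quarters_le
  have hτ := R.le_height P
  exact P.volume_absurd (1645 / 1000) (1 / 2) (3 / 8) (741 / 1000)

theorem alpha_lt (R : Prism κ α τ h g l M r) (P : ReducedTernary κ α τ h l M) :
    α < 43 / 100 := by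
  by_contra! hα
  have hκ := P.half_le
  have hlower := R.lower
  have hupper := R.upper
  have hq := R.sq_div_le P
  have hτ := R.height
  exact P.volume_absurd (155 / 100) (1 / 2) (43 / 100) (768 / 1000)

theorem mul_one_sub_le (R : Prism κ α τ h g l M r) {k : ℝ} (hk : κ ≤ k) :
    k * (1 - 2 * |h|) ≤ k - 1 / 2 := by
  linarith [R.slope, mul_le_mul_of_nonneg_right hk (abs_nonneg h)]

theorem le_layer_zero (R : Prism κ α τ h g l M r) (P : ReducedTernary κ α τ h l M)
    (hlower : 3 + 4 * α + κ + τ - 3 * M ≤ ρ) (hw : 0 ≤ w) (hw' : w ≤ 1 / 2)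
    (H : SpaceAvoids κ α τ h g l u v w ρ) : 9 / 4 * α + 5 / 8 * κ ≤ ρ - τ * w ^ 2 := by
  have hM := R.scale_le P
  have hκ := P.half_le
  have hα := P.three_quarters_le
  have hτ := R.le_height P
  have hτw := mul_le_mul_of_nonneg_left hw' P.height_pos.le
  have hτw2 := mul_le_mul_of_nonneg_left hw' (mul_nonneg P.height_pos.le hw)
  have hnonneg := H.layer_zero.nonneg P.kappa_pos.le P.alpha_pos.le (by linarith)
  by_contra! hlt
  have C := H.layer_zero.centred P.toReducedBinary hnonneg hlt
  have hq : (2 * κ - 1) ^ 2 ≤ (8 / 100) ^ 2 :=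
    pow_le_pow_left₀ (by linarith) (by linarith [R.lt]) 2
  linarith [C.add_one_le P.alpha_pos.le]

theorem not_near (R : Prism κ α τ h g l M r) (P : ReducedTernary κ α τ h l M)
    (hlower : 3 + 4 * α + κ + τ - 3 * M ≤ ρ)
    (hupper : ρ ≤ τ + 7 / 12 * ((2 * κ - 1) ^ 2 / κ) + M - 1) (hw : 0 ≤ w) (hw' : w ≤ 1 / 2)
    (H : SpaceAvoids κ α τ h g l u v w ρ) (i j : ℤ) (hj : 4 * α * |v + j| ≤ 3 * (2 * κ - 1))
    (hi : 4 * κ * |u + i + h * j| ≤ 3 * (2 * κ - 1)) : False := by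
  have hM := R.scale_le P
  have hκ := P.half_le
  have hκ' := R.lt
  have hα := P.three_quarters_le
  have hα' := R.alpha_lt P
  have hτ' := P.height_lt
  have hq := R.sq_div_le P
  have hτw2' := mul_nonneg P.height_pos.le (sq_nonneg w)
  have h₀ := R.le_layer_zero P hlower hw hw' H
  refine H.layer_zero.near_absurd P.toReducedBinary (i := i) (j := j) (y := 16 / 100)
    (x := 12 / 100) (e := 75 / 1000) ?_ ?_ ?_ ?_ ?_ fun _ => ?_
  · exact le_of_mul_le_mul_left (by linarith : 4 * α * |v + j| ≤ 4 * α * (16 / 100))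
      (by linarith)
  · exact le_of_mul_le_mul_left (by linarith : 4 * κ * |u + i + h * j| ≤ 4 * κ * (12 / 100))
      (by linarith)
  · linarith [R.mul_one_sub_le hκ'.le]
  all_goals linarith

theorem odd_absurd (R : Prism κ α τ h g l M r) (P : ReducedTernary κ α τ h l M)
    (hlower : 3 + 4 * α + κ + τ - 3 * M ≤ ρ)
    (hupper : ρ ≤ τ + 7 / 12 * ((2 * κ - 1) ^ 2 / κ) + M - 1) (hw : 0 ≤ w) (hw' : w ≤ 1 / 2)
    (H : SpaceAvoids κ α τ h g l u v w ρ) : False := by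
  have hM := R.scale_le P
  have hκ := P.half_le
  have hα := P.three_quarters_le
  have hτ' := P.height_lt
  have hq := R.sq_div_le P
  have hτw := mul_le_mul_of_nonneg_left hw' P.height_pos.le
  have hτw0 := mul_nonneg P.height_pos.le hw
  have hτw2 := mul_le_mul_of_nonneg_left hw' hτw0
  have hτw2' := mul_nonneg P.height_pos.le (sq_nonneg w)
  obtain ⟨k, hk⟩ := R.exists_shear
  have hnear := R.not_near P hlower hupper hw hw' H
  have h₀ := R.le_layer_zero P hlower hw hw' H
  have h₁ : 9 / 4 * α + 5 / 8 * κ ≤ ρ - τ * (1 - w) ^ 2 := by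
    have hL := H.layer_neg_one
    have hnonneg := hL.nonneg P.kappa_pos.le P.alpha_pos.le (by linarith)
    by_contra! hlt
    obtain ⟨i, j, hj, hi⟩ := (hL.centred P.toReducedBinary hnonneg hlt).exists_near
      P.toReducedBinary (x := g) (y := l) (c := 2) (k := k) (m := 0)
      (by simpa [abs_of_nonneg P.shear_nonneg] using R.shear) (by simpa using hk)
    rw [sub_add_cancel] at hi hj
    exact hnear i j (by linarith) (by linarith)
  have hL := H.layer_one
  have hnonneg := hL.nonneg P.kappa_pos.le P.alpha_pos.le (by linarith)
  have hlt : ρ - τ * (1 + w) ^ 2 < 9 / 4 * α + 5 / 8 * κ := by linarith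
  obtain ⟨i, j, hj, hi⟩ := (hL.centred P.toReducedBinary hnonneg hlt).exists_near
    P.toReducedBinary (x := -g) (y := -l) (c := 2) (k := -k) (m := 0)
    (by simpa [abs_of_nonneg P.shear_nonneg] using R.shear)
    (by simpa [← neg_add, -neg_add_rev] using hk)
  rw [add_neg_cancel_right] at hi hj
  exact hnear i j (by linarith) (by linarith)

theorem lt_of_le (R : Prism κ α τ h g l M r) (P : ReducedTernary κ α τ h l M)
    (hM : 16 + 15 * α + 3 * κ + 3 * τ ≤ 16 * M) : κ < 515 / 1000 := by
  by_contra! hκ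
  have hα := P.three_quarters_le
  have hτ := R.height
  have hq := R.sq_div_le P
  exact P.volume_absurd (1599 / 1000) (515 / 1000) (38625 / 100000) (749 / 1000)

theorem sq_div_le_of_le (R : Prism κ α τ h g l M r) (P : ReducedTernary κ α τ h l M)
    (hM : 16 + 15 * α + 3 * κ + 3 * τ ≤ 16 * M) : (2 * κ - 1) ^ 2 / κ ≤ 18 / 10000 := by
  have hκ := P.half_le
  have hκ' := R.lt_of_le P hM
  rw [div_le_iff₀ P.kappa_pos]
  nlinarith only [hκ, hκ']

theorem alpha_lt_of_le (R : Prism κ α τ h g l M r) (P : ReducedTernary κ α τ h l M)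
    (hM : 16 + 15 * α + 3 * κ + 3 * τ ≤ 16 * M) : α < 39 / 100 := by
  by_contra! hα
  have hκ := P.half_le
  have hτ := R.height
  have hq := R.sq_div_le_of_le P hM
  exact P.volume_absurd (160 / 100) (1 / 2) (39 / 100) (756 / 1000)

theorem centred_layer_neg_two (R : Prism κ α τ h g l M r) (P : ReducedTernary κ α τ h l M)
    (hM : 16 + 15 * α + 3 * κ + 3 * τ ≤ 16 * M) (hlower : 3 + 4 * α + κ + τ ≤ ρ + 2 * M)
    (hupper : ρ ≤ τ * w ^ 2 + (κ + α) / 4 + 2 * M - 1) (hw : 0 ≤ w)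
    (hw' : w ≤ 1 / 2) (H : SpaceAvoids κ α τ h g l u v w ρ) :
    CentredPlane κ α h (u - 2 * g) (v - 2 * l) (ρ - τ * (2 - w) ^ 2) := by
  have hMup := R.scale_le P
  have hκ := P.half_le
  have hα := P.three_quarters_le
  have hτ := R.height
  have hτ' := P.height_lt_of_le hM
  have hq := R.sq_div_le_of_le P hM
  have hτw := mul_le_mul_of_nonneg_left hw' P.height_pos.le
  have hτw0 := mul_nonneg P.height_pos.le hw
  have hτw2 := mul_le_mul_of_nonneg_left hw' hτw0
  have hL := H.layer_neg_two
  exact hL.centred P.toReducedBinary (hL.nonneg P.kappa_pos.le P.alpha_pos.le (by linarith))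
    (by linarith)

theorem even_layers_absurd (R : Prism κ α τ h g l M r) (P : ReducedTernary κ α τ h l M)
    (hM : 16 + 15 * α + 3 * κ + 3 * τ ≤ 16 * M) (hlower : 3 + 4 * α + κ + τ ≤ ρ + 2 * M)
    (hupper : ρ ≤ τ * w ^ 2 + (κ + α) / 4 + 2 * M - 1) (hw : 0 ≤ w)
    (hw' : w ≤ 1 / 2) (H : SpaceAvoids κ α τ h g l u v w ρ) : False := by
  have C := R.centred_layer_neg_two P hM hlower hupper hw hw' H
  obtain ⟨k, hk⟩ := R.exists_shear
  obtain ⟨i, j, hj, hi⟩ := C.exists_near P.toReducedBinary (x := 3 * g) (y := 3 * l) (c := 6)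
    (k := 3 * k) (m := 0)
    (by
      rw [Int.cast_zero, add_zero, abs_of_nonneg (by linarith [P.shear_nonneg])]
      linarith [R.shear])
    (by
      rw [show 3 * g + (3 * k : ℤ) + h * (0 : ℤ) = 3 * (g + k) by push_cast; ring, abs_mul,
        abs_of_pos (three_pos : (0 : ℝ) < 3)]
      linarith)
  have hκ := P.half_le
  have hκ' := R.lt_of_le P hM
  have hα := P.three_quarters_le
  have hα' := R.alpha_lt_of_le P hM
  have hτ := R.height
  have hτ' := P.height_lt_of_le hM
  have hq := R.sq_div_le_of_le P hM
  have hMup := R.scale_le P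
  have hinner := C.le P.alpha_pos.le
  have houter := C.add_one_le P.alpha_pos.le
  have hq' : (2 * κ - 1) ^ 2 ≤ (3 / 100) ^ 2 := pow_le_pow_left₀ (by linarith) (by linarith) 2
  have hw₄₂ : w < 42 / 100 := by
    by_contra! hlt
    have : 0 ≤ τ * ((w - 42 / 100) * (358 / 100 - w)) :=
      mul_nonneg P.height_pos.le (mul_nonneg (by linarith) (by linarith))
    linarith
  have hτw := mul_le_mul_of_nonneg_left hw₄₂.le P.height_pos.le
  refine H.layer_one.near_absurd P.toReducedBinary (i := i) (j := j) (y := 14 / 100)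
    (x := 105 / 1000) (e := 3 / 100) ?_ ?_ ?_ ?_ ?_ fun _ => ?_
  · rw [show v + l + j = v - 2 * l + 3 * l + j by ring]
    exact le_of_mul_le_mul_left (by linarith : _ ≤ 4 * α * (14 / 100)) (by linarith)
  · rw [show u + g + i + h * j = u - 2 * g + 3 * g + i + h * j by ring]
    exact le_of_mul_le_mul_left (by linarith : _ ≤ 4 * κ * (105 / 1000)) (by linarith)
  · linarith [R.mul_one_sub_le hκ'.le]
  all_goals linarith

theorem even_absurd (R : Prism κ α τ h g l M r) (P : ReducedTernary κ α τ h l M)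
    (hlower : 3 + 4 * α + κ + τ - 4 * M ≤ ρ)
    (hupper : ρ ≤ τ + 7 / 12 * ((2 * κ - 1) ^ 2 / κ) - 1) (hw : 0 ≤ w) (hw' : w ≤ 1 / 2)
    (H : SpaceAvoids κ α τ h g l u v w ρ) (H' : SpaceAvoids κ α τ h g l u v w (ρ + 2 * M)) :
    False := by
  have hw2 : τ * w ^ 2 ≤ τ * (1 / 2) ^ 2 := by
    have := P.height_pos.le
    gcongr
  have hneg : ρ - τ * w ^ 2 < 0 := by
    linarith [P.height_lt, R.sq_div_le P, mul_nonneg P.height_pos.le (sq_nonneg w)]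
  have hle : ρ + 1 ≤ τ * w ^ 2 + (κ + α) / 4 := by
    by_contra! hlt
    exact hneg.not_ge (H.layer_zero.nonneg P.kappa_pos.le P.alpha_pos.le (by linarith))
  exact R.even_layers_absurd P (by linarith) (by linarith) (by linarith) hw hw' H'

end Prism

theorem PlaneAvoids.pair_absurd {κ α h u v ρ : ℝ} (H : PlaneAvoids κ α h u v ρ)
    (P : ReducedBinary κ α h) {i j : ℤ} (hρ : ρ < 4 * κ)
    (hρ' : 4 * κ + (κ * (u + i + h * j) ^ 2 + α * (v + j) ^ 2) < ρ + 1)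
    (hx : 8 * κ * |u + i + h * j| < 1) : False := by
  -- The values at `i ± 2` lie on both sides of the gap, but differ by `8 κ |u + i + h j| < 1`.
  have hadd := H.add_one_le_of_lt_four_mul P hρ i j
  rw [← sq_abs (u + i + h * j)] at hρ'
  rcases H.sub_two i j with hsub | hsub <;> linarith

namespace FaceCentred

variable {κ α τ h g l M r u v w ρ : ℝ}

theorem sq_div_le (F : FaceCentred κ α τ h g l M r) (P : ReducedTernary κ α τ h l M) :
    (2 * κ - 1) ^ 2 / κ ≤ 32 / 1000 := by
  have hκ := P.half_le
  have hκ' := F.kappa_lt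
  rw [div_le_iff₀ P.kappa_pos]
  nlinarith only [hκ, hκ']

theorem exists_near (F : FaceCentred κ α τ h g l M r) (P : ReducedTernary κ α τ h l M) {u' v' : ℝ}
    (C : CentredPlane κ α h u v ρ) (hu : u' = u - 3 * g) (hv : v' = v - 3 * l) :
    ∃ i j : ℤ, 4 * κ * |u' + i + h * j| ≤ 3 * (2 * κ - 1) ∧
      κ * (u' + i + h * j) ^ 2 + α * (v' + j) ^ 2 ≤ 42 / 1000 := by
  obtain ⟨k, hk⟩ := F.exists_shear
  obtain ⟨i, j, hj, hi⟩ := C.exists_near P.toReducedBinary (x := -(3 * g)) (y := -(3 * l)) (c := 2)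
    (k := -k) (m := 1)
    (by rw [← abs_neg]; convert F.shear using 3; push_cast; ring)
    (by rw [← abs_neg]; convert hk using 3; push_cast; ring)
  rw [← sub_eq_add_neg, ← hu] at hi
  rw [← sub_eq_add_neg, ← hv] at hj
  rw [show (1 + 2 : ℝ) = 3 by norm_num] at hi hj
  refine ⟨i, j, hi, ?_⟩
  linarith [F.sq_div_le P, form_le_of_four_mul_abs_le P.kappa_pos P.three_quarters_le hj hi]

theorem even_absurd (F : FaceCentred κ α τ h g l M r) (P : ReducedTernary κ α τ h l M)
    (hlower : 3 + 9 * τ + 4 * α + κ - 4 * M ≤ ρ)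
    (hupper : ρ ≤ τ + 4 / 9 * α + (2 * κ - 1) * (2 / 9 + 9 / 100) + κ
      + 7 / 100 * (4 * τ - 1 - 3 / 4 * α) - 1) (hw : 0 ≤ w) (hw' : w ≤ 1 / 2)
    (H : SpaceAvoids κ α τ h g l u v w ρ) (H' : SpaceAvoids κ α τ h g l u v w (ρ + 2 * M)) :
    False := by
  have hκ := P.half_le
  have hκ' := F.kappa_lt
  have hα := P.three_quarters_le
  have hτ := F.two_mul_height_le
  have hM' := F.lt
  have hτ'' := F.le_ten_mul_height
  have hτw := mul_le_mul_of_nonneg_left hw' P.height_pos.le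
  have hτw0 := mul_nonneg P.height_pos.le hw
  have hτw2 := mul_le_mul_of_nonneg_left hw' hτw0
  have hτw2' := mul_nonneg P.height_pos.le (sq_nonneg w)
  have hneg : ρ - τ * w ^ 2 < 0 := by
    by_contra! hnonneg
    linarith [H.layer_zero.le P.toReducedBinary hnonneg]
  have hle : ρ - τ * w ^ 2 + 1 ≤ (κ + α) / 4 := by
    by_contra! hlt
    exact hneg.not_ge (H.layer_zero.nonneg P.kappa_pos.le P.alpha_pos.le hlt)
  have L := H'.layer_three
  have hnonneg : 0 ≤ ρ + 2 * M - τ * (3 + w) ^ 2 := by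
    refine L.nonneg P.kappa_pos.le P.alpha_pos.le ?_
    by_contra! hlt
    linarith
  have C := L.centred P.toReducedBinary hnonneg (by linarith)
  have hinner := C.le P.alpha_pos.le
  have hw₁₀ : w < 1 / 10 := by
    by_contra! hlt
    linarith [mul_le_mul_of_nonneg_left hlt P.height_pos.le]
  have hτw₁₀ := mul_le_mul_of_nonneg_left hw₁₀.le hτw0
  obtain ⟨i, j, -, hij⟩ := F.exists_near P C (u' := u) (v' := v) (by ring) (by ring)
  linarith [H.layer_zero.add_one_le P.kappa_pos.le P.alpha_pos.le hneg i j]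

theorem odd_absurd (F : FaceCentred κ α τ h g l M r) (P : ReducedTernary κ α τ h l M)
    (hlower : 3 + 9 * τ + 4 * α + κ - 3 * M ≤ ρ)
    (hupper : ρ ≤ τ + 4 / 9 * α + (2 * κ - 1) * (2 / 9 + 9 / 100) + κ
      + 7 / 100 * (4 * τ - 1 - 3 / 4 * α) + M - 1)
    (hupper' : ρ ≤ τ + 16 / 9 * α + (2 * κ - 1) * (4 / 3 + 9 / 100) + 16 * κ - 3 * M - 1)
    (hw : 0 ≤ w) (hw' : w ≤ 1 / 2) (H : SpaceAvoids κ α τ h g l u v w ρ) : False := by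
  have hκ := P.half_le
  have hκ' := F.kappa_lt
  have hα := P.three_quarters_le
  have hα' := F.alpha_lt
  have hτ := F.two_mul_height_le
  have hM' := F.lt
  have hτ'' := F.le_ten_mul_height
  have hτw := mul_le_mul_of_nonneg_left hw' P.height_pos.le
  have hτw0 := mul_nonneg P.height_pos.le hw
  have hτw2 := mul_le_mul_of_nonneg_left hw' hτw0
  have hτw2' := mul_nonneg P.height_pos.le (sq_nonneg w)
  have hq : (2 * κ - 1) ^ 2 ≤ 18 / 1000 := by nlinarith only [hκ, hκ']
  have L₁ := H.layer_one
  have L₂ := H.layer_two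
  have hnonneg : 0 ≤ ρ - τ * (2 + w) ^ 2 := by
    refine L₂.nonneg P.kappa_pos.le P.alpha_pos.le ?_
    by_contra! hlt
    have hnonneg₁ := L₁.nonneg P.kappa_pos.le P.alpha_pos.le (by linarith)
    linarith [(L₁.centred P.toReducedBinary hnonneg₁ (by linarith)).add_one_le P.alpha_pos.le]
  have C := L₂.centred P.toReducedBinary hnonneg (by linarith)
  have hinner := C.le P.alpha_pos.le
  obtain ⟨i, j, hi, hij⟩ := F.exists_near P C (u' := u - g) (v' := v - l) (by ring) (by ring)
  refine H.layer_neg_one.pair_absurd P.toReducedBinary (i := i) (j := j) ?_ ?_ ?_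
  · by_contra! hlt
    exact P.volume_absurd (2219 / 1000) (54 / 100) (405 / 1000) (352 / 1000)
  all_goals linarith

end FaceCentred

theorem Prism.not_faceCentred {κ α τ h g l M r r' : ℝ} (R : Prism κ α τ h g l M r)
    (P : ReducedTernary κ α τ h l M) : ¬FaceCentred κ α τ h g l M r' := fun F => by
  linarith [R.shear, F.shear, R.lt, P.half_le, P.three_quarters_le,
    mul_le_mul_of_nonneg_left (neg_abs_le (3 * l - 1)) P.alpha_pos.le]

theorem SpaceAvoids.exists_normal_translate (κ α τ h g l u v w : ℝ) : ∃ u' v' : ℝ, ∀ ρ,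
    SpaceAvoids κ α τ h g l u v w ρ → SpaceAvoids κ α τ h g l u' v' (distInt w) ρ := by
  rcases abs_choice (w - round w) with hw | hw
  · refine ⟨u - g * round w, v - l * round w, fun ρ H n i j => ?_⟩
    rw [distInt, hw]
    convert H (n - round w) i j using 3 <;> push_cast
    all_goals ring
  · refine ⟨-(u - g * round w), -(v - l * round w), fun ρ H n i j => ?_⟩
    rw [distInt, hw]
    convert H (-n - round w) (-i) (-j) using 3 <;> push_cast
    all_goals ring

/-! ### Progressions of gaps -/

/-- The gaps of length `1` with lower ends `ν + j M - 1` all contain no value of the ternary form on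
the translated lattice `(u, v, w) + ℤ³`. -/
def AvoidsProgression (κ α τ h g l M u v w ν : ℝ) : Prop :=
  ∀ j : ℤ, SpaceAvoids κ α τ h g l u v w (ν + j * M - 1)

namespace AvoidsProgression

variable {κ α τ h g l M u v w ν : ℝ}

theorem exists_leastShell (H : AvoidsProgression κ α τ h g l M u v w ν)
    (P : ReducedTernary κ α τ h l M) : ∃ j : ℤ, LeastShell κ α τ h g l M u v w (ν + j * M - 1) := by
  have hM : 0 < M := by linarith [P.one_add_le, P.kappa_pos]
  have hτ := P.height_pos.le
  have hκ := P.kappa_pos.le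
  have hα := P.alpha_pos.le
  obtain ⟨j, hj, hleast⟩ := Int.exists_least_of_bdd
    (P := fun z : ℤ => ∃ n i j : ℤ, κ * (u + g * n + i + h * j) ^ 2 + α * (v + l * n + j) ^ 2 +
      τ * (w + n) ^ 2 ≤ ν + z * M - 1)
    ⟨⌊(1 - ν) / M⌋, by
      rintro z ⟨n, i, j, hz⟩
      have hvalue : 0 ≤ κ * (u + g * n + i + h * j) ^ 2 + α * (v + l * n + j) ^ 2 +
        τ * (w + n) ^ 2 := by positivity
      exact_mod_cast (Int.floor_le _).trans ((div_le_iff₀ hM).2 (by linarith : _ ≤ (z : ℝ) * M))⟩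
    (by
      obtain ⟨z, hz⟩ := exists_int_ge ((κ * (u + g * (0 : ℤ) + (0 : ℤ) + h * (0 : ℤ)) ^ 2 +
        α * (v + l * (0 : ℤ) + (0 : ℤ)) ^ 2 + τ * (w + (0 : ℤ)) ^ 2 + 1 - ν) / M)
      exact ⟨z, 0, 0, 0, by linarith [(div_le_iff₀ hM).1 hz]⟩)
  refine ⟨j, H j, ?_, fun n i k => ?_, hj⟩
  · convert H (j + 1) using 1
    push_cast
    ring
  · have hprev := H (j - 1) n i k
    rw [show ν + (j - 1 : ℤ) * M - 1 = ν + j * M - 1 - M by push_cast; ring] at hprev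
    rcases hprev with hle | hge
    · have hmin := hleast (j - 1) ⟨n, i, k, by push_cast; linarith⟩
      omega
    · linarith

theorem exists_prism_or_faceCentred (H : AvoidsProgression κ α τ h g l M u v w ν)
    (P : ReducedTernary κ α τ h l M) : ∃ j : ℤ,
      Prism κ α τ h g l M (ν + j * M - 1) ∨ FaceCentred κ α τ h g l M (ν + j * M - 1) := by
  obtain ⟨u', v', hnormal⟩ := SpaceAvoids.exists_normal_translate κ α τ h g l u v w
  have H' : AvoidsProgression κ α τ h g l M u' v' (distInt w) ν := fun j => hnormal _ (H j)
  obtain ⟨j, S⟩ := H'.exists_leastShell P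
  have N : NormalShell κ α τ h g l M u' v' (distInt w) (ν + j * M - 1) :=
    { P, S with height_nonneg := distInt_nonneg w, height_le_half := distInt_le_half w }
  refine ⟨j, ?_⟩
  by_cases C : CentredPlane κ α h u' v' (ν + j * M - 1 - τ * distInt w ^ 2)
  · exact .inl (N.prism C)
  · obtain ⟨s, s', L⟩ := OffCentreShell.exists_layeredShell { N with not_centred := C }
    exact .inr L.faceCentred

theorem exists_even_or_odd {ν' r r' : ℝ} {j j' : ℤ}
    (H : AvoidsProgression κ α τ h g l (2 * M) u v w (3 * ν + ν')) (hr : r = ν + j * M - 1)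
    (hr' : r' = ν' + j' * M - 1) : ∃ u' v' w' : ℝ, 0 ≤ w' ∧ w' ≤ 1 / 2 ∧
      (SpaceAvoids κ α τ h g l u' v' w' (3 * r + r' + 3 - 4 * M) ∧
          SpaceAvoids κ α τ h g l u' v' w' (3 * r + r' + 3 - 4 * M + 2 * M) ∨
        SpaceAvoids κ α τ h g l u' v' w' (3 * r + r' + 3 - 3 * M)) := by
  obtain ⟨u', v', hnormal⟩ := SpaceAvoids.exists_normal_translate κ α τ h g l u v w
  have H' (z : ℤ) := hnormal _ (H z)
  refine ⟨u', v', distInt w, distInt_nonneg w, distInt_le_half w, ?_⟩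
  rcases Int.even_or_odd' (3 * j + j') with ⟨c, hc | hc⟩ <;>
    replace hc := congrArg (Int.cast : ℤ → ℝ) hc <;> push_cast at hc
  · refine .inl ⟨?_, ?_⟩
    · convert H' (c - 2) using 1
      push_cast
      linear_combination 3 * hr + hr' + M * hc
    · convert H' (c - 1) using 1
      push_cast
      linear_combination 3 * hr + hr' + M * hc
  · refine .inr ?_
    convert H' (c - 1) using 1
    push_cast
    linear_combination 3 * hr + hr' + M * hc

theorem absurd {u' v' w' u₂ v₂ w₂ ν' : ℝ} (H : AvoidsProgression κ α τ h g l M u v w ν)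
    (H' : AvoidsProgression κ α τ h g l M u' v' w' ν')
    (H₂ : AvoidsProgression κ α τ h g l (2 * M) u₂ v₂ w₂ (3 * ν + ν'))
    (P : ReducedTernary κ α τ h l M) : False := by
  obtain ⟨j, R | F⟩ := H.exists_prism_or_faceCentred P <;>
    obtain ⟨j', R' | F'⟩ := H'.exists_prism_or_faceCentred P
  · obtain ⟨x, y, z, hz, hz', ⟨He, He'⟩ | Ho⟩ :=
      H₂.exists_even_or_odd (j := j) (j' := j') rfl rfl
    · exact R.even_absurd P (by linarith [R.lower, R'.lower]) (by linarith [R.upper, R'.upper])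
        hz hz' He He'
    · exact R.odd_absurd P (by linarith [R.lower, R'.lower]) (by linarith [R.upper, R'.upper])
        hz hz' Ho
  · exact R.not_faceCentred P F'
  · exact R'.not_faceCentred P F
  · obtain ⟨x, y, z, hz, hz', ⟨He, He'⟩ | Ho⟩ :=
      H₂.exists_even_or_odd (j := j) (j' := j') rfl rfl
    · exact F.even_absurd P (by linarith [F.lower, F'.lower]) (by linarith [F.upper, F'.upper])
        hz hz' He He'
    · exact F.odd_absurd P (by linarith [F.lower, F'.lower]) (by linarith [F.upper, F'.upper])
        (by linarith [F.upper', F'.upper']) hz hz' Ho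

end AvoidsProgression

theorem ReducedTernary.of_div {a A t h l d : ℝ} (hd : 0 < d) (ha : 0 < a)
    (hd5 : d ^ 5 = 8 / 3 * a * A * t) (hh : |h| ≤ 1 / 2) (hl : 0 ≤ l ∧ l ≤ 1 / 2)
    (hA : a ≤ a * h ^ 2 + A) (ht : A ≤ t + A * l ^ 2) (hda : d ≤ 2 * a) (hdA : 2 * A < d)
    (had : a + d ≤ 1) : ReducedTernary (a / d) (A / d) (t / d) h l (1 / d) := by
  have hh2 : h ^ 2 ≤ (1 / 2) ^ 2 := sq_le_sq' (neg_le_of_abs_le hh) (le_of_abs_le hh)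
  have ha34 : 3 / 4 * a ≤ A := by linarith [mul_le_mul_of_nonneg_left hh2 ha.le]
  exact {
    half_le := by rw [le_div_iff₀ hd]; linarith
    lt_two_thirds := by rw [div_lt_iff₀ hd]; linarith
    three_quarters_le := by rw [← mul_div_assoc]; gcongr
    lt_half := by rw [div_lt_iff₀ hd]; linarith
    reduced := by rw [div_mul_eq_mul_div]; gcongr; linarith
    abs_le_half := hh
    shear_nonneg := hl.1
    shear_le_half := hl.2
    reduced_shear := by rw [div_mul_eq_mul_div]; gcongr; linarith
    volume := by
      calc 8 / 3 * (1 / d) ^ 2 * (a / d) * (A / d) * (t / d)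
        _ = 8 / 3 * a * A * t / d ^ 5 := by field_simp
        _ = 1 := by rw [← hd5]; exact div_self (by positivity)
    one_add_le := by rw [le_div_iff₀ hd, add_mul, div_mul_cancel₀ _ hd.ne']; linarith }

theorem SpaceAvoids.of_forall {a A t h g l u v w T d : ℝ} (hd : 0 < d)
    (H : ∀ n i j : ℤ, 0 < T - (a * (u + g * n + i + h * j) ^ 2 + A * (v + l * n + j) ^ 2 +
      t * (w + n) ^ 2) → d ≤ T - (a * (u + g * n + i + h * j) ^ 2 + A * (v + l * n + j) ^ 2 +
      t * (w + n) ^ 2)) :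
    SpaceAvoids (a / d) (A / d) (t / d) h g l u v w (T / d - 1) := fun n i j => by
  have hdiv (x y z : ℝ) : a / d * x ^ 2 + A / d * y ^ 2 + t / d * z ^ 2 =
    (a * x ^ 2 + A * y ^ 2 + t * z ^ 2) / d := by ring
  have hvalue := hdiv (u + g * n + i + h * j) (v + l * n + j) (w + n)
  rcases le_or_gt T (a * (u + g * n + i + h * j) ^ 2 + A * (v + l * n + j) ^ 2 + t * (w + n) ^ 2)
    with hle | hlt
  · right
    linarith [div_le_div_of_nonneg_right hle hd.le]
  · left
    have hge := div_le_div_of_nonneg_right (le_sub_comm.1 (H n i j (sub_pos.2 hlt))) hd.le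
    rw [sub_div, div_self hd.ne'] at hge
    linarith

/-! ### The quinary form -/

theorem exists_redQ_eq {a A t : ℝ} (ha : a ≠ 0) (hA : A ≠ 0) (ht : t ≠ 0)
    (lam h₄ h₅ a₂ a₃ a₄ a₅ : ℝ) : ∃ β p q s : ℝ, ∀ x₁ x₂ x₃ x₄ x₅ : ℝ,
    redQ a A t lam h₄ h₅ a₂ a₃ a₄ a₅ x₁ x₂ x₃ x₄ x₅ = x₂ * x₁ + x₂ ^ 2 * β -
      (a * (x₃ + h₄ * x₄ + h₅ * x₅ - x₂ * p) ^ 2 + A * (x₄ + lam * x₅ - x₂ * q) ^ 2 +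
        t * (x₅ - x₂ * s) ^ 2) := by
  obtain ⟨p, hp⟩ : ∃ p, 2 * a * p = a₃ := ⟨a₃ / (2 * a), by field_simp⟩
  obtain ⟨q, hq⟩ : ∃ q, 2 * A * q = a₄ - a₃ * h₄ := ⟨(a₄ - a₃ * h₄) / (2 * A), by field_simp⟩
  obtain ⟨s, hs⟩ : ∃ s, 2 * t * s = a₅ + a₃ * (h₄ * lam - h₅) - a₄ * lam :=
    ⟨(a₅ + a₃ * (h₄ * lam - h₅) - a₄ * lam) / (2 * t), by field_simp⟩
  refine ⟨a₂ + a * p ^ 2 + A * q ^ 2 + t * s ^ 2, p, q, s, fun x₁ x₂ x₃ x₄ x₅ => ?_⟩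
  unfold redQ redPhi
  linear_combination (-x₂ * (x₃ + h₄ * x₄ + h₅ * x₅)) * hp - x₂ * (x₄ + lam * x₅) * hq -
    x₂ * x₅ * hs

/-- Solubility of `0 < Q < d` on the coset `c + ℤ⁵`, for the reduced form `Q` with the given
parameters. -/
def Soluble (a A t lam h₄ h₅ a₂ a₃ a₄ a₅ d c₁ c₂ c₃ c₄ c₅ : ℝ) : Prop :=
  ∃ x₁ x₂ x₃ x₄ x₅ : ℝ,
    (∃ k : ℤ, x₁ - c₁ = k) ∧ (∃ k : ℤ, x₂ - c₂ = k) ∧ (∃ k : ℤ, x₃ - c₃ = k) ∧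
    (∃ k : ℤ, x₄ - c₄ = k) ∧ (∃ k : ℤ, x₅ - c₅ = k) ∧
    0 < redQ a A t lam h₄ h₅ a₂ a₃ a₄ a₅ x₁ x₂ x₃ x₄ x₅ ∧
    redQ a A t lam h₄ h₅ a₂ a₃ a₄ a₅ x₁ x₂ x₃ x₄ x₅ < d

theorem exists_spaceAvoids_of_not_soluble {a A t lam h₄ h₅ a₂ a₃ a₄ a₅ d c₁ c₂ c₃ c₄ c₅ : ℝ}
    (ha : a ≠ 0) (hA : A ≠ 0) (ht : t ≠ 0) (hd : 0 < d) (hc₂ : ∃ n : ℤ, (n : ℝ) = c₂)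
    (hQ : ¬Soluble a A t lam h₄ h₅ a₂ a₃ a₄ a₅ d c₁ c₂ c₃ c₄ c₅) :
    ∃ (β : ℝ) (u v w : ℤ → ℝ), ∀ k z : ℤ, SpaceAvoids (a / d) (A / d) (t / d) h₄ h₅ lam
      (u k) (v k) (w k) ((k * c₁ + k ^ 2 * β + k * z) / d - 1) := by
  obtain ⟨β, p, q, s, hform⟩ := exists_redQ_eq ha hA ht lam h₄ h₅ a₂ a₃ a₄ a₅
  obtain ⟨c, rfl⟩ := hc₂
  refine ⟨β, fun k => c₃ + h₄ * c₄ + h₅ * c₅ - k * p, fun k => c₄ + lam * c₅ - k * q,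
    fun k => c₅ - k * s, fun k z => .of_forall hd fun n i j hpos => ?_⟩
  have hvalue : redQ a A t lam h₄ h₅ a₂ a₃ a₄ a₅ (c₁ + z) k (c₃ + i) (c₄ + j) (c₅ + n) =
      k * c₁ + k ^ 2 * β + k * z - (a * (c₃ + h₄ * c₄ + h₅ * c₅ - k * p + h₅ * n + i + h₄ * j) ^ 2 +
        A * (c₄ + lam * c₅ - k * q + lam * n + j) ^ 2 + t * (c₅ - k * s + n) ^ 2) := by
    rw [hform]
    ring
  rw [← hvalue] at hpos ⊢
  by_contra! hlt
  exact hQ ⟨_, _, _, _, _, ⟨z, by ring⟩, ⟨k - c, by push_cast; ring⟩, ⟨i, by ring⟩, ⟨j, by ring⟩,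
    ⟨n, by ring⟩, hpos, hlt⟩

theorem exists_avoidsProgression_of_not_soluble
    {a A t lam h₄ h₅ a₂ a₃ a₄ a₅ d c₁ c₂ c₃ c₄ c₅ : ℝ}
    (ha : a ≠ 0) (hA : A ≠ 0) (ht : t ≠ 0) (hd : 0 < d) (hc₂ : ∃ n : ℤ, (n : ℝ) = c₂)
    (hQ : ¬Soluble a A t lam h₄ h₅ a₂ a₃ a₄ a₅ d c₁ c₂ c₃ c₄ c₅) :
    ∃ (ν ν' : ℝ) (u v w : ℤ → ℝ),
      AvoidsProgression (a / d) (A / d) (t / d) h₄ h₅ lam (1 / d) (u 1) (v 1) (w 1) ν ∧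
      AvoidsProgression (a / d) (A / d) (t / d) h₄ h₅ lam (1 / d) (u (-1)) (v (-1)) (w (-1)) ν' ∧
      AvoidsProgression (a / d) (A / d) (t / d) h₄ h₅ lam (2 * (1 / d)) (u 2) (v 2) (w 2)
        (3 * ν + ν') := by
  obtain ⟨β, u, v, w, H⟩ := exists_spaceAvoids_of_not_soluble ha hA ht hd hc₂ hQ
  refine ⟨(c₁ + β) / d, (-c₁ + β) / d, u, v, w, fun j => ?_, fun j => ?_, fun j => ?_⟩
  · convert H 1 j using 1
    push_cast
    ring
  · convert H (-1) (-j) using 1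
    push_cast
    ring
  · convert H 2 j using 1
    push_cast
    ring

theorem thm7_general {a A t lam h₄ h₅ a₂ a₃ a₄ a₅ d c₁ c₂ c₃ c₄ c₅ : ℝ}
    (ha : 0 < a) (hA : 0 < A) (ht : 0 < t) (hh₄ : |h₄| ≤ 1 / 2) (hlam : 0 ≤ lam ∧ lam ≤ 1 / 2)
    (hAC : A ≤ t + A * lam ^ 2) (haA : a ≤ a * h₄ ^ 2 + A)
    (hd : d = (8 / 3 * a * A * t) ^ ((1 : ℝ) / 5)) (hda : d ≤ 2 * a) (hAd : 2 * A < d)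
    (had : a + d ≤ 1) (hc₂ : ∃ n : ℤ, (n : ℝ) = c₂) :
    Soluble a A t lam h₄ h₅ a₂ a₃ a₄ a₅ d c₁ c₂ c₃ c₄ c₅ := by
  have hvol : 0 < 8 / 3 * a * A * t := by positivity
  have hpos : 0 < d := hd ▸ Real.rpow_pos_of_pos hvol _
  have hd5 : d ^ 5 = 8 / 3 * a * A * t := by
    rw [hd, ← Real.rpow_natCast, ← Real.rpow_mul hvol.le]
    norm_num
  have P := ReducedTernary.of_div hpos ha hd5 hh₄ hlam haA hAC hda hAd had
  by_contra hQ
  obtain ⟨ν, ν', u, v, w, H₁, Hneg₁, H₂⟩ :=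
    exists_avoidsProgression_of_not_soluble ha.ne' hA.ne' ht.ne' hpos hc₂ hQ
  exact H₁.absurd Hneg₁ H₂ P

theorem thm7 (a A t lam h₄ h₅ a₂ a₃ a₄ a₅ d : ℝ) (m K : ℤ)
    (ha : 0 < a) (hA : 0 < A) (ht : 0 < t)
    (ha₂ : -1/2 < a₂ ∧ a₂ ≤ 1/2) (ha₃ : -1/2 < a₃ ∧ a₃ ≤ 1/2)
    (ha₄ : -1/2 < a₄ ∧ a₄ ≤ 1/2) (ha₅ : -1/2 < a₅ ∧ a₅ ≤ 1/2)
    (hh₄ : -1/2 < h₄ ∧ h₄ ≤ 1/2) (hh₅ : -1/2 < h₅ ∧ h₅ ≤ 1/2)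
    (hlam : 0 ≤ lam ∧ lam ≤ 1/2) (hAC : A ≤ t + A * lam^2)
    (hmin_le : ∀ u v w : ℤ, ¬(u = 0 ∧ v = 0 ∧ w = 0) →
      a ≤ redPhi a A t lam h₄ h₅ (u : ℝ) (v : ℝ) (w : ℝ))
    (hmin_eq : ∃ u v w : ℤ, ¬(u = 0 ∧ v = 0 ∧ w = 0) ∧
      redPhi a A t lam h₄ h₅ (u : ℝ) (v : ℝ) (w : ℝ) = a)
    (hd : d = ((8/3) * a * A * t) ^ ((1 : ℝ)/5))
    (hm : (m : ℝ) < d / a ∧ d / a ≤ (m : ℝ) + 1)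
    (hK : (K : ℝ) < (d + ((m : ℝ)^2 - 1) * a / 4) / A ∧
          (d + ((m : ℝ)^2 - 1) * a / 4) / A ≤ (K : ℝ) + 1)
    (ha' : a < 1/2) (hd1 : d ≤ 1) (had : a + d ≤ 1)
    (hmK : m = 1 ∧ K = 2)
    (c₁ c₂ c₃ c₄ c₅ : ℝ) (hc₂ : ∃ n : ℤ, (n : ℝ) = c₂) :
    ∃ x₁ x₂ x₃ x₄ x₅ : ℝ,
      (∃ k : ℤ, x₁ - c₁ = k) ∧ (∃ k : ℤ, x₂ - c₂ = k) ∧ (∃ k : ℤ, x₃ - c₃ = k) ∧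
      (∃ k : ℤ, x₄ - c₄ = k) ∧ (∃ k : ℤ, x₅ - c₅ = k) ∧
      0 < redQ a A t lam h₄ h₅ a₂ a₃ a₄ a₅ x₁ x₂ x₃ x₄ x₅ ∧
      redQ a A t lam h₄ h₅ a₂ a₃ a₄ a₅ x₁ x₂ x₃ x₄ x₅ < d := by
  obtain ⟨rfl, rfl⟩ := hmK
  norm_num [div_le_iff₀ ha, lt_div_iff₀ hA] at hm hK
  exact thm7_general ha hA ht (abs_le.2 ⟨by linarith [hh₄.1], hh₄.2⟩) hlam hAC
    (by simpa [redPhi] using hmin_le 0 1 0 (by simp)) hd hm.2 hK.1 had hc₂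
end

section
/- Theorem 8: With the reduced form Q and parameters as in the context but with d = ((32/3)·|D|)^{1/5} (so d⁵ = (8/3)aAt), and with m, K defined from this d, suppose the reals c_1, …, c_5 satisfy c_2 ∈ ℤ, and suppose a < 1/2, d ≤ 1, a + d ≤ 1, and (m, K) = (1,1). Then there exist x_1, …, x_5 with x_i − c_i ∈ ℤ for every i such that 0 < Q(x_1,…,x_5) < d. -/
/-! Setting `x₂ = 1`, the coordinate `x₁` moves `Q` by arbitrary integers, so the claim can only
fail if the function `r = fract (-Q)` of `(x₃, x₄, x₅)` takes all its values in `[0, 1 - d]`. This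
function is quadratic modulo `1` with the polar form `B` of `φ`. As `m = K = 1` gives `d ≤ 2 * a`
and `d ≤ 2 * A`, the reduction inequalities force `1 / 2 ≤ d`.

If `1 / 2 < d`, the oscillation of `r` is less than `1 / 2`. This determines the integers in its
second differences, and a bounded function cannot have a nonzero constant step; hence `B` is
rational. If `B v v = p / k` in lowest terms, the steps of `r` along `v` take exactly the values
`(j - (k - 1) / 2) / k` for `0 ≤ j < k`, and for `B v v = 2 * a` small oscillation leaves only
`2 / 3` and `3 / 5`. A vector having integral product with such a `v` has integral square, which
contradicts `1 / 2 < 2 * A < 1`.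

If `d = 1 / 2`, all the inequalities are equalities, which determines `φ` up to `h₄` and `h₅`. A
step of `r` along a vector `v` with `B v v = 1 / 2` is then either `±1 / 4` or between endpoints of
`[0, 1 / 2]`, and comparing two orthogonal such vectors gives a parity contradiction. -/

theorem exists_image_card_mul_eq_image_range_add {ι : Type*} {I : Finset ι} {s : ι → ℝ}
    (hinj : Set.InjOn s I) (hlt : ∀ i ∈ I, ∀ j ∈ I, s i - s j < 1)
    (hint : ∀ i ∈ I, ∀ j ∈ I, ∃ z : ℤ, I.card * (s i - s j) = z) :
    ∃ c : ℝ, I.image (fun i ↦ I.card * s i) =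
      (Finset.range I.card).image (fun j : ℕ ↦ (j : ℝ) + c) := by
  rcases I.eq_empty_or_nonempty with rfl | hI
  · exact ⟨0, by simp⟩
  have hcard : (0 : ℝ) < I.card := mod_cast hI.card_pos
  obtain ⟨i₀, hi₀, hmin⟩ := I.exists_min_image s hI
  refine ⟨I.card * s i₀, Finset.eq_of_subset_of_card_le ?_ ?_⟩
  · intro y hy
    obtain ⟨i, hi, rfl⟩ := Finset.mem_image.mp hy
    obtain ⟨z, hz⟩ := hint i hi i₀ hi₀
    have hz₀ : (0 : ℝ) ≤ z := hz ▸ mul_nonneg hcard.le (sub_nonneg.mpr (hmin i hi))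
    have hz₁ : (z : ℝ) < I.card :=
      hz ▸ mul_lt_of_lt_one_right hcard (hlt i hi i₀ hi₀)
    lift z to ℕ using mod_cast hz₀
    refine Finset.mem_image.mpr ⟨z, Finset.mem_range.mpr (mod_cast hz₁), ?_⟩
    push_cast at hz
    linarith
  · rw [Finset.card_image_of_injOn fun i hi j hj hij ↦ hinj hi hj (mul_left_cancel₀ hcard.ne' hij)]
    exact Finset.card_image_le.trans_eq (Finset.card_range _)

theorem image_card_mul_eq_image_range_sub {ι : Type*} {I : Finset ι} {s : ι → ℝ}
    (hinj : Set.InjOn s I) (hlt : ∀ i ∈ I, ∀ j ∈ I, s i - s j < 1)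
    (hint : ∀ i ∈ I, ∀ j ∈ I, ∃ z : ℤ, I.card * (s i - s j) = z) (hsum : ∑ i ∈ I, s i = 0) :
    I.image (fun i ↦ I.card * s i) =
      (Finset.range I.card).image (fun j : ℕ ↦ (j : ℝ) - (I.card - 1) / 2) := by
  rcases I.eq_empty_or_nonempty with rfl | hI
  · simp
  have hcard : (I.card : ℝ) ≠ 0 := mod_cast hI.card_pos.ne'
  obtain ⟨c, hc⟩ := exists_image_card_mul_eq_image_range_add hinj hlt hint
  have hinj_mul : Set.InjOn (fun i ↦ I.card * s i) I := fun i hi j hj hij ↦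
    hinj hi hj (mul_left_cancel₀ hcard hij)
  have hinj_add : Set.InjOn (fun j : ℕ ↦ (j : ℝ) + c) (Finset.range I.card) :=
    fun i _ j _ hij ↦ by simpa using hij
  have hsum_image := congrArg (fun S : Finset ℝ ↦ ∑ y ∈ S, y) hc
  simp only [Finset.sum_image hinj_mul, Finset.sum_image hinj_add, ← Finset.mul_sum, hsum,
    Finset.sum_add_distrib, Finset.sum_const, Finset.card_range, nsmul_eq_mul] at hsum_image
  have hgauss : (∑ j ∈ Finset.range I.card, (j : ℝ)) * 2 = I.card * (I.card - 1) := by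
    rw [← Nat.cast_pred hI.card_pos, ← Nat.cast_sum]
    exact_mod_cast Finset.sum_range_id_mul_two I.card
  have hc_eq : c = -((I.card - 1) / 2) := mul_left_cancel₀ hcard (by linarith)
  rw [hc, hc_eq]
  simp only [sub_eq_add_neg]

theorem eq_of_sub_eq_intCast {x y : ℝ} {k : ℤ} (hk : x - y = k) (hlt : |x - y| < 1) : x = y := by
  have hk0 : k = 0 := Int.abs_lt_one_iff.mp (by rw [hk] at hlt; exact_mod_cast hlt)
  rwa [hk0, Int.cast_zero, sub_eq_zero] at hk

theorem eq_zero_of_forall_nat_mul_le {c L : ℝ} (h : ∀ n : ℕ, |n * c| ≤ L) : c = 0 := by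
  by_contra hc
  obtain ⟨n, hn⟩ := exists_nat_gt (L / |c|)
  have hlt : L < n * |c| := (div_lt_iff₀ (abs_pos.mpr hc)).mp hn
  have hle : n * |c| ≤ L := by simpa [abs_mul] using h n
  exact hlt.not_ge hle

theorem step_eq_zero_of_forall_sub_le {f : ℕ → ℝ} {c L : ℝ} (hf : ∀ n, f (n + 1) = f n + c)
    (hL : ∀ m n, f m - f n ≤ L) : c = 0 := by
  have hlin (n : ℕ) : f n = f 0 + n * c := by
    induction n with
    | zero => simp
    | succ n ih => rw [hf, ih]; push_cast; ring
  refine eq_zero_of_forall_nat_mul_le (L := L) fun n ↦ abs_le.mpr ⟨?_, ?_⟩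
  · linarith [hL 0 n, hlin n]
  · linarith [hL n 0, hlin n]

/-- `r : G → ℝ` is a quadratic function modulo `1` with polar form `B`: every mixed second
difference of `r` agrees with `B` up to an integer. The functions of interest are `fract ∘ F` for a
quadratic polynomial `F`. The polar form is data, as `r` determines it only modulo `1`. -/
def IsQuadraticModOne {G : Type*} [AddCommGroup G] (B : G →+ G →+ ℝ) (r : G → ℝ) : Prop :=
  ∀ x v w, ∃ k : ℤ, (r (x + w + v) - r (x + w)) - (r (x + v) - r x) = B v w + k

namespace IsQuadraticModOne

variable {G : Type*} [AddCommGroup G] {B : G →+ G →+ ℝ} {r : G → ℝ} {L : ℝ} {x v v' w : G}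

theorem comp {H : Type*} [AddCommGroup H] (h : IsQuadraticModOne B r) (f : H →+ G) (x : G) :
    IsQuadraticModOne ((B.comp f).compl₂ f) (fun y ↦ r (x + f y)) := by
  intro y v w
  simpa [add_assoc] using h (x + f y) (f v) (f w)

theorem map_add_smul (h : IsQuadraticModOne B r) (x v : G) :
    IsQuadraticModOne ((B.comp (zmultiplesHom G v)).compl₂ (zmultiplesHom G v))
      (fun n : ℤ ↦ r (x + n • v)) :=
  h.comp (zmultiplesHom G v) x

theorem step_add_eq (h : IsQuadraticModOne B r) (hr : ∀ x y, r x - r y ≤ L) {m : ℤ}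
    (hm : |r (x + v) - r x + B v w - m| < 1 - L) :
    r (x + w + v) - r (x + w) = r (x + v) - r x + B v w - m := by
  obtain ⟨k, hk⟩ := h x v w
  refine eq_of_sub_eq_intCast (k := k + m) (by push_cast; linarith) ?_
  rw [abs_lt] at hm ⊢
  constructor <;> linarith [hr (x + w + v) (x + w), hr (x + w) (x + w + v)]

theorem eq_intCast (h : IsQuadraticModOne B r) (hr : ∀ x y, r x - r y ≤ L) {m : ℤ}
    (hm : |B v w - m| < 1 - 2 * L) : B v w = m := by
  have hstep (x : G) : r (x + w + v) - r (x + w) = r (x + v) - r x + B v w - m := by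
    refine h.step_add_eq hr ?_
    rw [abs_lt] at hm ⊢
    constructor <;> linarith [hr (x + v) x, hr x (x + v)]
  refine sub_eq_zero.mp (step_eq_zero_of_forall_sub_le (L := 2 * L)
    (f := fun n ↦ r (n • w + v) - r (n • w)) (fun n ↦ ?_) fun m n ↦ ?_)
  · rw [succ_nsmul, hstep, add_sub_assoc]
  · linarith [hr (m • w + v) (m • w), hr (n • w) (n • w + v)]

theorem exists_eq_ratCast (h : IsQuadraticModOne B r) (hr : ∀ x y, r x - r y ≤ L) (hL : L < 1 / 2)
    (v w : G) : ∃ q : ℚ, B v w = q := by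
  obtain ⟨n, hn⟩ := exists_nat_one_div_lt (show 0 < 1 - 2 * L by linarith)
  obtain ⟨k, hk, -, hround⟩ := Real.exists_nat_abs_mul_sub_round_le (B v w) n.succ_pos
  have hle : 1 / ((n.succ : ℝ) + 1) ≤ 1 / ((n : ℝ) + 1) := by
    push_cast; gcongr; linarith
  have hint : B (k • v) w = round (k * B v w) :=
    h.eq_intCast hr (by simpa using (hround.trans hle).trans_lt hn)
  refine ⟨round (k * B v w) / k, ?_⟩
  push_cast
  rw [eq_div_iff (by positivity), ← hint]
  simp [mul_comm]

theorem map_add_eq_self (h : IsQuadraticModOne B r) (hr : ∀ x y, r x - r y ≤ L) {m : ℤ}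
    (hm : B v v = m) (hlt : |r (x + v) - r x| < 1 - L) : r (x + v) = r x := by
  have hconst (n : ℕ) : r (x + n • v + v) - r (x + n • v) = r (x + v) - r x := by
    induction n with
    | zero => simp
    | succ n ih =>
      have hstep := h.step_add_eq hr (x := x + n • v) (w := v) (m := m) (v := v)
        (by simpa [ih, hm] using hlt)
      rw [succ_nsmul, ← add_assoc, hstep, ih, hm, add_sub_cancel_right]
  refine sub_eq_zero.mp (step_eq_zero_of_forall_sub_le (f := fun n ↦ r (x + n • v)) (fun n ↦ ?_)
    fun m n ↦ hr _ _)
  rw [succ_nsmul, ← add_assoc]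
  linarith [hconst n]

theorem map_add_nsmul_eq_self (h : IsQuadraticModOne B r) (hr : ∀ x y, r x - r y ≤ L)
    (hL : L < 1 / 2) {p : ℤ} {k : ℕ} (hp : k * B v v = p) (x : G) : r (x + k • v) = r x := by
  have hB : B (k • v) (k • v) = (k * p : ℤ) := by simp [← hp]
  refine h.map_add_eq_self hr hB ?_
  exact abs_lt.mpr ⟨by linarith [hr x (x + k • v)], by linarith [hr (x + k • v) x]⟩

theorem image_step_eq_image_range (h : IsQuadraticModOne B r) (hr : ∀ x y, r x - r y ≤ L)
    (hL : L < 1 / 2) {p : ℤ} {k : ℕ} (hpk : IsCoprime p k) (hp : k * B v v = p) (x : G) :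
    (Finset.range k).image (fun i : ℕ ↦ k * (r (x + i • v + v) - r (x + i • v))) =
      (Finset.range k).image (fun j : ℕ ↦ (j : ℝ) - (k - 1) / 2) := by
  have hstep (i j : ℕ) : ∃ n : ℤ, k * ((r (x + i • v + v) - r (x + i • v)) -
      (r (x + j • v + v) - r (x + j • v))) = ((i - j) * p + k * n : ℤ) := by
    obtain ⟨n, hn⟩ := h (x + j • v) v ((i - j : ℤ) • v)
    rw [add_assoc x, ← natCast_zsmul v j, ← add_zsmul, add_sub_cancel, natCast_zsmul,
      natCast_zsmul, map_zsmul, zsmul_eq_mul] at hn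
    refine ⟨n, ?_⟩
    rw [hn, mul_add, mul_left_comm, hp]
    push_cast
    ring
  have hinj : Set.InjOn (fun i : ℕ ↦ r (x + i • v + v) - r (x + i • v)) (Finset.range k) := by
    intro i hi j hj hij
    obtain ⟨n, hn⟩ := hstep i j
    rw [sub_eq_zero.mpr hij, mul_zero] at hn
    have hzero : ((i : ℤ) - j) * p + k * n = 0 := by exact_mod_cast hn.symm
    have hdvd : (k : ℤ) ∣ i - j := hpk.symm.dvd_of_dvd_mul_right
      ((Int.dvd_iff_dvd_of_dvd_add (hzero ▸ dvd_zero _)).mpr (dvd_mul_right _ n))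
    have habs : |(i : ℤ) - j| < k := by
      simp only [Finset.coe_range, Set.mem_Iio] at hi hj
      rw [abs_lt]; omega
    have := Int.eq_zero_of_abs_lt_dvd hdvd habs
    omega
  have hsum : ∑ i ∈ Finset.range k, (r (x + i • v + v) - r (x + i • v)) = 0 := by
    have htel := Finset.sum_range_sub (fun i : ℕ ↦ r (x + i • v)) k
    simpa [succ_nsmul, add_assoc, h.map_add_nsmul_eq_self hr hL hp x] using htel
  have himage := image_card_mul_eq_image_range_sub hinj
    (fun i _ j _ ↦ by linarith [hr (x + i • v + v) (x + i • v), hr (x + j • v) (x + j • v + v)])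
    (fun i _ j _ ↦ by
      obtain ⟨n, hn⟩ := hstep i j
      exact ⟨_, by rw [Finset.card_range, hn]⟩) hsum
  simpa only [Finset.card_range] using himage

theorem exists_mul_step_eq (h : IsQuadraticModOne B r) (hr : ∀ x y, r x - r y ≤ L)
    (hL : L < 1 / 2) {p : ℤ} {k : ℕ} (hk : 0 < k) (hpk : IsCoprime p k) (hp : k * B v v = p)
    (x : G) : ∃ j : ℤ, k * (r (x + v) - r x) = j - (k - 1) / 2 := by
  have hmem : k * (r (x + v) - r x) ∈
      (Finset.range k).image (fun i : ℕ ↦ k * (r (x + i • v + v) - r (x + i • v))) :=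
    Finset.mem_image.mpr ⟨0, Finset.mem_range.mpr hk, by simp⟩
  rw [h.image_step_eq_image_range hr hL hpk hp, Finset.mem_image] at hmem
  obtain ⟨j, -, hj⟩ := hmem
  exact ⟨j, hj.symm⟩

theorem exists_step_eq (h : IsQuadraticModOne B r) (hr : ∀ x y, r x - r y ≤ L) (hL : L < 1 / 2)
    {p : ℤ} {k : ℕ} (hk : 0 < k) (hpk : IsCoprime p k) (hp : k * B v v = p) :
    ∃ x, k * (r (x + v) - r x) = (k - 1) / 2 := by
  have hmem : ((k : ℝ) - 1) / 2 ∈ (Finset.range k).image (fun j : ℕ ↦ (j : ℝ) - (k - 1) / 2) :=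
    Finset.mem_image.mpr ⟨k - 1, Finset.mem_range.mpr (by omega), by
      rw [Nat.cast_pred hk]; ring⟩
  rw [← h.image_step_eq_image_range hr hL hpk hp 0, Finset.mem_image] at hmem
  obtain ⟨i, -, hi⟩ := hmem
  exact ⟨0 + i • v, hi⟩

theorem two_mul_num_eq_den_add_one (h : IsQuadraticModOne B r) (hr : ∀ x y, r x - r y ≤ L)
    (hL : L < 1 / 2) {p : ℤ} {k : ℕ} (hk : 0 < k) (hpk : IsCoprime p k) (hp : k * B v v = p)
    (hv : B v v ∈ Set.Ioo (1 / 2) 1) : 2 * p = k + 1 := by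
  obtain ⟨hlo, hhi⟩ := hv
  obtain ⟨x, hx⟩ := h.exists_step_eq hr hL hk hpk hp
  have hk₀ : (0 : ℝ) < k := mod_cast hk
  have hx₀ : 0 ≤ r (x + v) - r x := by
    have : (1 : ℝ) ≤ k := mod_cast hk
    exact nonneg_of_mul_nonneg_right (by linarith) hk₀
  have hnext := h.step_add_eq hr (x := x) (v := v) (w := v) (m := 1) (by
    push_cast; rw [abs_lt]; constructor <;> linarith [hr (x + v) x])
  have htwo : k * (r (x + v + v) - r x) = p - 1 := by
    push_cast at hnext
    linear_combination k * hnext + 2 * hx + hp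
  have hlower : (k : ℝ) < 2 * p := by linarith [mul_lt_mul_of_pos_left hlo hk₀]
  have hupper : 2 * (p : ℝ) < k + 2 := by
    linarith [mul_lt_mul_of_pos_left ((hr (x + v + v) x).trans_lt hL) hk₀]
  have hlower' : (k : ℤ) < 2 * p := mod_cast hlower
  have hupper' : 2 * p < k + 2 := mod_cast hupper
  omega

theorem den_lt_six (h : IsQuadraticModOne B r) (hr : ∀ x y, r x - r y ≤ L)
    (hL : L < 1 / 2) {p : ℤ} {k : ℕ} (hk : 2 ≤ k) (hpk : IsCoprime p k) (hp : k * B v v = p)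
    (hpk' : 2 * p = k + 1) : k < 6 := by
  have hk₂ : (2 : ℝ) ≤ k := mod_cast hk
  have hp' : 2 * (p : ℝ) = k + 1 := mod_cast hpk'
  obtain ⟨x, hx⟩ := h.exists_step_eq hr hL (by omega) hpk hp
  have hB : B v v = 1 / 2 + 1 / (2 * k) := by field_simp; linarith
  have hM : r (x + v) - r x = 1 / 2 - 1 / (2 * k) := by field_simp; linarith
  have hinv : 1 / (2 * (k : ℝ)) ≤ 1 / 4 := by
    rw [div_le_div_iff₀ (by positivity) (by positivity)]; linarith
  have hinv₀ : 0 < 1 / (2 * (k : ℝ)) := by positivity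
  -- Going back from the maximal step, the previous two steps are `-1 / k` and
  -- `1 / 2 - 3 / (2 * k)`, so the three together have sum `1 - 3 / k`.
  have hprev := h.step_add_eq hr (x := x) (v := v) (w := -v) (m := 0) (by
    rw [map_neg, hM, hB, Int.cast_zero, abs_lt]; constructor <;> linarith)
  have hprev' := h.step_add_eq hr (x := x + -v) (v := v) (w := -v) (m := -1) (by
    rw [hprev, map_neg, hM, hB, abs_lt]; push_cast; constructor <;> linarith)
  simp only [map_neg, hM, hB, neg_add_cancel_right, Int.cast_zero] at hprev hprev'
  have hthree : 1 - 6 * (1 / (2 * (k : ℝ))) < 1 / 2 := by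
    push_cast at hprev'
    linarith [hr (x + v) (x + -v + -v)]
  have : (k : ℝ) < 6 := by
    have h12 : 1 / 12 < 1 / (2 * (k : ℝ)) := by linarith
    rw [div_lt_div_iff₀ (by positivity) (by positivity)] at h12
    linarith
  exact_mod_cast this

theorem apply_self_eq (h : IsQuadraticModOne B r) (hr : ∀ x y, r x - r y ≤ L) (hL : L < 1 / 2)
    (hv : B v v ∈ Set.Ioo (1 / 2) 1) : B v v = 2 / 3 ∨ B v v = 3 / 5 := by
  obtain ⟨q, hq⟩ := h.exists_eq_ratCast hr hL v v
  have hpk := Rat.isCoprime_num_den q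
  have hp : q.den * B v v = q.num := by rw [hq]; exact_mod_cast q.den_mul_eq_num
  have hnum := h.two_mul_num_eq_den_add_one hr hL q.pos hpk hp hv
  have hden : 2 ≤ q.den := by
    by_contra! hlt
    have hden₁ : q.den = 1 := by have := q.pos; omega
    have hnum₁ : q.num = 1 := by omega
    rw [hden₁, hnum₁] at hp
    norm_num at hp
    exact hv.2.ne hp
  have hsix := h.den_lt_six hr hL hden hpk hp hnum
  obtain ⟨hden', hnum'⟩ | ⟨hden', hnum'⟩ :
      q.den = 3 ∧ q.num = 2 ∨ q.den = 5 ∧ q.num = 3 := by omega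
  · left; rw [hden', hnum'] at hp; push_cast at hp; linarith
  · right; rw [hden', hnum'] at hp; push_cast at hp; linarith

theorem exists_mul_apply_eq (h : IsQuadraticModOne B r) (hr : ∀ x y, r x - r y ≤ L)
    (hL : L < 1 / 2) {p : ℤ} {k : ℕ} (hk : 0 < k) (hpk : IsCoprime p k) (hp : k * B v v = p)
    (w : G) : ∃ l : ℤ, k * B v w = l := by
  obtain ⟨i, hi⟩ := h.exists_mul_step_eq hr hL hk hpk hp 0
  obtain ⟨j, hj⟩ := h.exists_mul_step_eq hr hL hk hpk hp (0 + w)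
  obtain ⟨n, hn⟩ := h 0 v w
  refine ⟨j - i - k * n, ?_⟩
  push_cast
  linear_combination hj - hi - k * hn

theorem exists_apply_self_eq_intCast (h : IsQuadraticModOne B r) (hr : ∀ x y, r x - r y ≤ L)
    (hL : L < 1 / 4) (v : G) : ∃ n : ℤ, B v v = n := by
  obtain ⟨q, hq⟩ := h.exists_eq_ratCast hr (by linarith) v v
  obtain ⟨x, hx⟩ := h.exists_step_eq hr (by linarith) q.pos (Rat.isCoprime_num_den q)
    (by rw [hq]; exact_mod_cast q.den_mul_eq_num)
  have hden₀ : (0 : ℝ) < q.den := mod_cast q.pos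
  have hden : (q.den : ℝ) < 2 := by
    linarith [mul_lt_mul_of_pos_left ((hr (x + v) x).trans_lt hL) hden₀]
  have hden₁ : q.den = 1 := by
    have : q.den < 2 := mod_cast hden
    have := q.pos
    omega
  exact ⟨q.num, by rw [hq]; exact_mod_cast (Rat.coe_int_num_of_den_eq_one hden₁).symm⟩

theorem exists_apply_self_eq_intCast_of_apply_eq (h : IsQuadraticModOne B r)
    (hr : ∀ x y, r x - r y ≤ L) (hL : L < 1 / 2) {p : ℤ} {k : ℕ} (hk : 2 ≤ k)
    (hpk : IsCoprime p k) (hp : k * B v v = p) {m : ℤ} (hm : B v w = m) :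
    ∃ n : ℤ, B w w = n := by
  obtain ⟨x, hx⟩ := h.exists_step_eq hr hL (by omega) hpk hp
  have hstep_ge : 1 / 4 ≤ r (x + v) - r x := by
    have hk₂ : (2 : ℝ) ≤ k := mod_cast hk
    nlinarith
  have hstep (i : ℤ) : r (x + i • w + v) - r (x + i • w) = r (x + v) - r x := by
    have hB : B v (i • w) = (i * m : ℤ) := by simp [hm]
    have habs : |r (x + v) - r x| < 1 - L :=
      abs_lt.mpr ⟨by linarith [hr x (x + v)], by linarith [hr (x + v) x]⟩
    rw [h.step_add_eq hr (m := i * m) (by rwa [hB, add_sub_cancel_right]), hB, add_sub_cancel_right]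
  have hosc (i j : ℤ) : r (x + v + i • w) - r (x + v + j • w) ≤ L - (r (x + v) - r x) := by
    rw [add_right_comm x v, add_right_comm x v]
    linarith [hstep j, hr (x + i • w + v) (x + j • w)]
  simpa using (h.map_add_smul (x + v) w).exists_apply_self_eq_intCast hosc (by linarith) 1

theorem exists_gram_eq (h : IsQuadraticModOne B r) (hr : ∀ x y, r x - r y ≤ L)
    (hL : L < 1 / 2) {p : ℤ} {k : ℕ} (hk : 2 ≤ k) (hpk : IsCoprime p k) (hp : k * B v v = p)
    (hv : B v v ≠ 0) (hvw : B w v = B v w) :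
    ∃ n c : ℤ, B w w - B v w ^ 2 / B v v = n - c ^ 2 / B v v := by
  obtain ⟨l, hl⟩ := h.exists_mul_apply_eq hr hL (by omega) hpk hp w
  obtain ⟨s, t, hst⟩ := hpk
  have hk₀ : (k : ℝ) ≠ 0 := by positivity
  -- Subtracting a multiple of `v` from `w` preserves the left-hand side and can be used to make
  -- `B v w` an integer.
  have hst' : (s : ℝ) * p + t * k = 1 := mod_cast hst
  have hortho : B v (w - (l * s) • v) = (l * t : ℤ) := by
    refine mul_left_cancel₀ hk₀ ?_
    simp only [map_sub, map_zsmul, zsmul_eq_mul]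
    push_cast
    linear_combination hl - l * s * hp - l * hst'
  obtain ⟨n, hn⟩ := h.exists_apply_self_eq_intCast_of_apply_eq hr hL hk ⟨s, t, hst⟩ hp hortho
  refine ⟨n, l * t, ?_⟩
  rw [← Int.cast_pow, ← hn, Int.cast_pow, ← hortho]
  simp only [map_sub, map_zsmul, zsmul_eq_mul, AddMonoidHom.sub_apply, AddMonoidHom.smul_apply, hvw]
  field_simp
  ring

theorem gram_notMem_Ioo (h : IsQuadraticModOne B r) (hr : ∀ x y, r x - r y ≤ L)
    (hL : L < 1 / 2) (hv : B v v ∈ Set.Ioo (1 / 2) 1) (hvw : B w v = B v w) :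
    B w w - B v w ^ 2 / B v v ∉ Set.Ioo (1 / 2) 1 := by
  rintro ⟨hgram, hgram'⟩
  have hv₀ : B v v ≠ 0 := by linarith [hv.1]
  rcases h.apply_self_eq hr hL hv with hB | hB
  · obtain ⟨n, c, hnc⟩ := h.exists_gram_eq hr hL (p := 2) (k := 3) (by norm_num)
      ⟨-1, 1, by norm_num⟩ (by rw [hB]; norm_num) hv₀ hvw
    rw [hnc, hB] at hgram hgram'
    have hlt : (1 : ℝ) < 2 * n - 3 * c ^ 2 := by linarith
    have hlt' : 2 * n - 3 * (c : ℝ) ^ 2 < 2 := by linarith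
    norm_cast at hlt hlt'
    omega
  · obtain ⟨n, c, hnc⟩ := h.exists_gram_eq hr hL (p := 3) (k := 5) (by norm_num)
      ⟨2, -1, by norm_num⟩ (by rw [hB]; norm_num) hv₀ hvw
    rw [hnc, hB] at hgram hgram'
    have hlt : (1 : ℝ) < 3 * n - 5 * c ^ 2 := by linarith
    have hlt' : 3 * n - 5 * (c : ℝ) ^ 2 < 3 := by linarith
    norm_cast at hlt hlt'
    have hmod : c ^ 2 % 3 = 0 ∨ c ^ 2 % 3 = 1 := by
      rcases (by omega : c % 3 = 0 ∨ c % 3 = 1 ∨ c % 3 = 2) with hc | hc | hc <;>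
        simp [pow_two, Int.mul_emod, hc]
    omega

theorem abs_step_eq_or_endpoints (h : IsQuadraticModOne B r)
    (hr : ∀ x, r x ∈ Set.Icc 0 (1 / 2)) (hv : B v v = 1 / 2) (x : G) :
    |r (x + v) - r x| = 1 / 4 ∨
      (r x = 0 ∨ r x = 1 / 2) ∧ (r (x + v) = 0 ∨ r (x + v) = 1 / 2) := by
  obtain ⟨n, hn⟩ := h x v v
  rw [hv] at hn
  have hx := hr x
  have hxv := hr (x + v)
  have hxvv := hr (x + v + v)
  simp only [Set.mem_Icc] at hx hxv hxvv
  by_cases hlt : |r (x + (v + v)) - r x| < 1 - 1 / 2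
  · have hB : B (v + v) (v + v) = (2 : ℤ) := by simp [hv]; norm_num
    have hper := h.map_add_eq_self (fun x y ↦ by linarith [(hr x).2, (hr y).1]) hB hlt
    rw [← add_assoc] at hper
    have hn_lo : (-2 : ℝ) < n := by linarith
    have hn_hi : (n : ℝ) < 1 := by linarith
    norm_cast at hn_lo hn_hi
    left
    rw [abs_eq (by norm_num)]
    obtain rfl | rfl : n = 0 ∨ n = -1 := by omega
    · right; push_cast at hn; linarith
    · left; push_cast at hn; linarith
  · rw [not_lt, le_abs', ← add_assoc] at hlt
    have hmid : 2 * r (x + v) = -n := by rcases hlt with hlt | hlt <;> linarith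
    have hn_lo : (-2 : ℝ) < n := by linarith
    have hn_hi : (n : ℝ) < 1 := by linarith
    norm_cast at hn_lo hn_hi
    refine .inr ⟨hlt.symm.imp (fun _ ↦ by linarith) (fun _ ↦ by linarith), ?_⟩
    obtain rfl | rfl : n = 0 ∨ n = -1 := by omega
    · left; push_cast at hmid; linarith
    · right; push_cast at hmid; linarith

theorem exists_four_mul_apply_eq (h : IsQuadraticModOne B r) (hr : ∀ x, r x ∈ Set.Icc 0 (1 / 2))
    (hv : B v v = 1 / 2) (w : G) : ∃ n : ℤ, 4 * B v w = n := by
  have hstep (x : G) : ∃ n : ℤ, 4 * (r (x + v) - r x) = n := by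
    rcases h.abs_step_eq_or_endpoints hr hv x with hx | ⟨hx | hx, hxv | hxv⟩
    · rcases (abs_eq (by norm_num)).mp hx with hx | hx
      exacts [⟨1, by rw [hx]; norm_num⟩, ⟨-1, by rw [hx]; norm_num⟩]
    exacts [⟨0, by rw [hx, hxv]; norm_num⟩, ⟨2, by rw [hx, hxv]; norm_num⟩,
      ⟨-2, by rw [hx, hxv]; norm_num⟩, ⟨0, by rw [hx, hxv]; norm_num⟩]
  obtain ⟨i, hi⟩ := hstep 0
  obtain ⟨j, hj⟩ := hstep (0 + w)
  obtain ⟨k, hk⟩ := h 0 v w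
  refine ⟨j - i - 4 * k, ?_⟩
  push_cast
  linear_combination hj - hi - 4 * hk

theorem step_add_eq_self_of_orthogonal (h : IsQuadraticModOne B r)
    (hr : ∀ x, r x ∈ Set.Icc 0 (1 / 2)) (hvw : B v w = 0) {x : G}
    (hx : |r (x + v) - r x| = 1 / 4) : r (x + w + v) - r (x + w) = r (x + v) - r x := by
  have hosc (x y : G) : r x - r y ≤ 1 / 2 := by linarith [(hr x).2, (hr y).1]
  have hstep := h.step_add_eq hosc (x := x) (w := w) (m := 0) (by rw [hvw]; norm_num [hx])
  simpa only [hvw, Int.cast_zero, add_zero, sub_zero] using hstep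

theorem abs_step_eq_of_orthogonal (h : IsQuadraticModOne B r)
    (hr : ∀ x, r x ∈ Set.Icc 0 (1 / 2)) (hv' : B v' v' = 1 / 2) (hv'v : B v' v = 0) {x : G}
    (hx : |r (x + v) - r x| = 1 / 4) : |r (x + v') - r x| = 1 / 4 := by
  rcases h.abs_step_eq_or_endpoints hr hv' x with hquarter | ⟨hend, -⟩
  · exact hquarter
  have hmid : r (x + v) = 1 / 4 := by
    have hxv := hr (x + v)
    simp only [Set.mem_Icc] at hxv
    rcases (abs_eq (by norm_num)).mp hx with hx | hx <;> rcases hend with hend | hend <;> linarith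
  have hquarter : |r (x + v + v') - r (x + v)| = 1 / 4 :=
    (h.abs_step_eq_or_endpoints hr hv' (x + v)).resolve_right fun ⟨hend', _⟩ ↦ by
      rw [hmid] at hend'; norm_num at hend'
  have hback := h.step_add_eq_self_of_orthogonal hr (w := -v) (by simp [hv'v]) hquarter
  rw [add_neg_cancel_right] at hback
  rwa [hback]

theorem exists_four_mul_eq (h : IsQuadraticModOne B r) (hr : ∀ x, r x ∈ Set.Icc 0 (1 / 2))
    (hv : B v v = 1 / 2) (hv' : B v' v' = 1 / 2) (hvv' : B v v' = 0) (hv'v : B v' v = 0) (x : G) :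
    ∃ k : ℤ, 4 * r x = k := by
  suffices r x = 0 ∨ r x = 1 / 4 ∨ r x = 1 / 2 by
    rcases this with hx | hx | hx
    exacts [⟨0, by rw [hx]; norm_num⟩, ⟨1, by rw [hx]; norm_num⟩, ⟨2, by rw [hx]; norm_num⟩]
  rcases h.abs_step_eq_or_endpoints hr hv x with hx | ⟨hx | hx, -⟩
  · have hx' := h.abs_step_eq_of_orthogonal hr hv' hv'v hx
    have hsquare := h.step_add_eq_self_of_orthogonal hr hvv' hx
    have h₀ := hr x
    have h₁ := hr (x + v)
    have h₂ := hr (x + v')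
    have h₃ := hr (x + v' + v)
    simp only [Set.mem_Icc] at h₀ h₁ h₂ h₃
    rcases (abs_eq (by norm_num)).mp hx with hx | hx <;>
      rcases (abs_eq (by norm_num)).mp hx' with hx' | hx'
    · left; linarith
    · right; left; linarith
    · right; left; linarith
    · right; right; linarith
  exacts [.inl hx, .inr (.inr hx)]

theorem exists_two_mul_sub_eq (h : IsQuadraticModOne B r) (hr : ∀ x, r x ∈ Set.Icc 0 (1 / 2))
    (hv : B v v = 1 / 2) (hv' : B v' v' = 1 / 2) (hvv' : B v v' = 0) (hv'v : B v' v = 0) (x : G) :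
    ∃ k : ℤ, 2 * (r (x + v) - r (x + v')) = k := by
  by_cases hx : |r (x + v) - r x| = 1 / 4
  · have hx' := h.abs_step_eq_of_orthogonal hr hv' hv'v hx
    rcases (abs_eq (by norm_num)).mp hx with hx | hx <;>
      rcases (abs_eq (by norm_num)).mp hx' with hx' | hx'
    exacts [⟨0, by push_cast; linarith⟩, ⟨1, by push_cast; linarith⟩,
      ⟨-1, by push_cast; linarith⟩, ⟨0, by push_cast; linarith⟩]
  · have hx' : |r (x + v') - r x| ≠ 1 / 4 := mt (h.abs_step_eq_of_orthogonal hr hv hvv') hx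
    obtain ⟨-, hend⟩ := (h.abs_step_eq_or_endpoints hr hv x).resolve_left hx
    obtain ⟨-, hend'⟩ := (h.abs_step_eq_or_endpoints hr hv' x).resolve_left hx'
    rcases hend with hxv | hxv <;> rcases hend' with hxv' | hxv' <;> rw [hxv, hxv']
    exacts [⟨0, by norm_num⟩, ⟨-1, by norm_num⟩, ⟨1, by norm_num⟩, ⟨0, by norm_num⟩]

theorem apply_self_ne_of_orthogonal (h : IsQuadraticModOne B r)
    (hr : ∀ x, r x ∈ Set.Icc 0 (1 / 2)) (hv : B v v = 1 / 2) (hv' : B v' v' = 1 / 2)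
    (hvv' : B v v' = 0) (hv'v : B v' v = 0) (hv'w : B v' w = 1 / 4) :
    B w w ≠ 2 * B v w ^ 2 + 1 / 2 := by
  intro hww
  have hfour := h.exists_four_mul_eq hr hv hv' hvv' hv'v
  have htwo := h.exists_two_mul_sub_eq hr hv hv' hvv' hv'v
  obtain ⟨n, hn⟩ : ∃ n : ℤ, 4 * B w w = n := by
    obtain ⟨k, hk⟩ := h 0 w w
    obtain ⟨k₀, hk₀⟩ := hfour 0
    obtain ⟨k₁, hk₁⟩ := hfour (0 + w)
    obtain ⟨k₂, hk₂⟩ := hfour (0 + w + w)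
    refine ⟨k₂ - 2 * k₁ + k₀ - 4 * k, ?_⟩
    push_cast
    linear_combination hk₂ - 2 * hk₁ + hk₀ - 4 * hk
  obtain ⟨j, hj⟩ : ∃ j : ℤ, 2 * (B v w - B v' w) = j := by
    obtain ⟨k, hk⟩ := h 0 v w
    obtain ⟨k', hk'⟩ := h 0 v' w
    obtain ⟨k₀, hk₀⟩ := htwo 0
    obtain ⟨k₁, hk₁⟩ := htwo (0 + w)
    refine ⟨k₁ - k₀ - 2 * k + 2 * k', ?_⟩
    push_cast
    linear_combination hk₁ - hk₀ - 2 * hk + 2 * hk'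
  have hvw : B v w = (2 * j + 1) / 4 := by linarith
  have hparity : (2 * j + 1 : ℝ) ^ 2 = 2 * n - 4 := by rw [← hn, hww, hvw]; ring
  norm_cast at hparity
  have hodd : Odd ((2 * j + 1) ^ 2) := Odd.pow ⟨j, rfl⟩
  exact Int.not_odd_iff_even.mpr ⟨n - 2, by linarith⟩ hodd

end IsQuadraticModOne

theorem isQuadraticModOne_fract {G : Type*} [AddCommGroup G] {B : G →+ G →+ ℝ} {F : G → ℝ}
    (hF : ∀ x v w, (F (x + w + v) - F (x + w)) - (F (x + v) - F x) = B v w) :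
    IsQuadraticModOne B (fun x ↦ Int.fract (F x)) := by
  intro x v w
  refine ⟨⌊F (x + w)⌋ - ⌊F (x + w + v)⌋ + ⌊F (x + v)⌋ - ⌊F x⌋, ?_⟩
  simp only [Int.fract, ← hF x v w]
  push_cast
  ring

/-- The polar form `(v, w) ↦ φ (v + w) - φ v - φ w` of the ternary form `φ = redPhi`, as a
biadditive map on the integer lattice. -/
noncomputable def redPolar (a A t lam h₄ h₅ : ℝ) : ℤ × ℤ × ℤ →+ ℤ × ℤ × ℤ →+ ℝ :=
  .mk' (fun v ↦ .mk' (fun w ↦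
    2 * (a * (v.1 + h₄ * v.2.1 + h₅ * v.2.2) * (w.1 + h₄ * w.2.1 + h₅ * w.2.2) +
      A * (v.2.1 + lam * v.2.2) * (w.2.1 + lam * w.2.2) + t * v.2.2 * w.2.2))
    fun w w' ↦ by simp only [Prod.fst_add, Prod.snd_add]; push_cast; ring)
    fun v v' ↦ AddMonoidHom.ext fun w ↦ by
      simp only [AddMonoidHom.mk'_apply, AddMonoidHom.add_apply, Prod.fst_add, Prod.snd_add]
      push_cast
      ring

theorem redPolar_apply (a A t lam h₄ h₅ : ℝ) (v w : ℤ × ℤ × ℤ) :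
    redPolar a A t lam h₄ h₅ v w =
      2 * (a * (v.1 + h₄ * v.2.1 + h₅ * v.2.2) * (w.1 + h₄ * w.2.1 + h₅ * w.2.2) +
        A * (v.2.1 + lam * v.2.2) * (w.2.1 + lam * w.2.2) + t * v.2.2 * w.2.2) :=
  rfl

theorem isQuadraticModOne_fract_neg_redQ (a A t lam h₄ h₅ a₂ a₃ a₄ a₅ c₁ c₃ c₄ c₅ : ℝ) :
    IsQuadraticModOne (redPolar a A t lam h₄ h₅) (fun v ↦ Int.fract
      (-redQ a A t lam h₄ h₅ a₂ a₃ a₄ a₅ c₁ 1 (c₃ + v.1) (c₄ + v.2.1) (c₅ + v.2.2))) :=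
  isQuadraticModOne_fract fun x v w ↦ by
    simp only [redPolar_apply, redQ, redPhi, Prod.fst_add, Prod.snd_add]
    push_cast
    ring

theorem IsQuadraticModOne.not_forall_mem_Icc_half {h₄ h₅ : ℝ} {r : ℤ × ℤ × ℤ → ℝ}
    (h : IsQuadraticModOne (redPolar (1 / 4) (1 / 4) (3 / 16) (1 / 2) h₄ h₅) r) :
    ¬ ∀ x, r x ∈ Set.Icc 0 (1 / 2) := by
  intro hr
  have hv : redPolar (1 / 4) (1 / 4) (3 / 16) (1 / 2) h₄ h₅ (1, 0, 0) (1, 0, 0) = 1 / 2 := by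
    norm_num [redPolar_apply]
  obtain ⟨n₄, hn₄⟩ : ∃ n : ℤ, 2 * h₄ = n :=
    (h.exists_four_mul_apply_eq hr hv (0, 1, 0)).imp fun n hn ↦ by
      rw [← hn, redPolar_apply]; push_cast; ring
  obtain ⟨n₅, hn₅⟩ : ∃ n : ℤ, 2 * h₅ = n :=
    (h.exists_four_mul_apply_eq hr hv (0, 0, 1)).imp fun n hn ↦ by
      rw [← hn, redPolar_apply]; push_cast; ring
  -- One of `h₄`, `h₅`, `h₅ - h₄` is an integer, so `e₂`, `e₃` or `e₃ - e₂` becomes orthogonal to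
  -- `e₁` after adding a multiple of `e₁`.
  rcases n₄.even_or_odd' with ⟨i, rfl | rfl⟩
  · have hi : h₄ = i := by push_cast at hn₄; linarith
    refine h.apply_self_ne_of_orthogonal hr hv (v' := (-i, 1, 0)) (w := (0, 0, 1))
      ?_ ?_ ?_ ?_ ?_ <;> simp only [redPolar_apply, hi] <;>
      push_cast <;> ring
  rcases n₅.even_or_odd' with ⟨j, rfl | rfl⟩
  · have hj : h₅ = j := by push_cast at hn₅; linarith
    refine h.apply_self_ne_of_orthogonal hr hv (v' := (-j, 0, 1)) (w := (0, 1, 0))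
      ?_ ?_ ?_ ?_ ?_ <;> simp only [redPolar_apply, hj] <;>
      push_cast <;> ring
  · have hij : h₅ = h₄ + j - i := by push_cast at hn₄ hn₅; linarith
    refine h.apply_self_ne_of_orthogonal hr hv (v' := (i - j, -1, 1)) (w := (0, 0, 1))
      ?_ ?_ ?_ ?_ ?_ <;> simp only [redPolar_apply, hij] <;>
      push_cast <;> ring

theorem IsQuadraticModOne.two_mul_notMem_Ioo {a A t lam h₄ h₅ L : ℝ} {r : ℤ × ℤ × ℤ → ℝ}
    (h : IsQuadraticModOne (redPolar a A t lam h₄ h₅) r) (hr : ∀ x y, r x - r y ≤ L)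
    (hL : L < 1 / 2) (ha : 2 * a ∈ Set.Ioo (1 / 2) 1) : 2 * A ∉ Set.Ioo (1 / 2) 1 := by
  have hvv : redPolar a A t lam h₄ h₅ (1, 0, 0) (1, 0, 0) = 2 * a := by simp [redPolar_apply]
  have hvw : redPolar a A t lam h₄ h₅ (1, 0, 0) (0, 1, 0) = 2 * a * h₄ := by
    simp [redPolar_apply, mul_assoc]
  have hwv : redPolar a A t lam h₄ h₅ (0, 1, 0) (1, 0, 0) = 2 * a * h₄ := by
    simp [redPolar_apply, mul_assoc]
  have hww : redPolar a A t lam h₄ h₅ (0, 1, 0) (0, 1, 0) = 2 * a * h₄ ^ 2 + 2 * A := by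
    rw [redPolar_apply]; push_cast; ring
  have hgram : 2 * a * h₄ ^ 2 + 2 * A - (2 * a * h₄) ^ 2 / (2 * a) = 2 * A := by
    have : a ≠ 0 := by linarith [ha.1]
    field_simp
    ring
  have hnot := h.gram_notMem_Ioo hr hL (by rwa [hvv]) (hwv.trans hvw.symm)
  rwa [hvv, hvw, hww, hgram] at hnot

theorem three_fourths_mul_le {A t lam : ℝ} (hA : 0 ≤ A) (hlam : 0 ≤ lam ∧ lam ≤ 1 / 2)
    (hAC : A ≤ t + A * lam ^ 2) : 3 / 4 * A ≤ t := by
  have hsq : lam ^ 2 ≤ 1 / 4 := by nlinarith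
  nlinarith

theorem le_sq_of_two_mul_mul_sq_le {a A d : ℝ} (hd : 0 < d) (hda : d ≤ 2 * a)
    (hpow : 2 * a * A ^ 2 ≤ d ^ 5) : A ≤ d ^ 2 := by
  refine le_of_abs_le (abs_le_of_sq_le_sq (le_of_mul_le_mul_left ?_ hd) (by positivity))
  calc d * A ^ 2 ≤ 2 * a * A ^ 2 := by gcongr
    _ ≤ d ^ 5 := hpow
    _ = d * (d ^ 2) ^ 2 := by ring

theorem le_two_mul_cube_of_two_mul_mul_sq_le {a A d : ℝ} (ha : 0 ≤ a) (hd : 0 < d)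
    (hdA : d ≤ 2 * A) (hpow : 2 * a * A ^ 2 ≤ d ^ 5) : a ≤ 2 * d ^ 3 := by
  refine le_of_mul_le_mul_left ?_ (by positivity : 0 < d ^ 2 / 2)
  calc d ^ 2 / 2 * a = 2 * a * (d / 2) ^ 2 := by ring
    _ ≤ 2 * a * A ^ 2 := by gcongr; linarith
    _ ≤ d ^ 5 := hpow
    _ = d ^ 2 / 2 * (2 * d ^ 3) := by ring

theorem IsQuadraticModOne.exists_one_sub_lt {a A t lam h₄ h₅ d : ℝ} {r : ℤ × ℤ × ℤ → ℝ}
    (h : IsQuadraticModOne (redPolar a A t lam h₄ h₅) r) (hr : ∀ x, 0 ≤ r x) (ha : 0 < a)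
    (hA : 0 < A) (hlam : 0 ≤ lam ∧ lam ≤ 1 / 2) (hAC : A ≤ t + A * lam ^ 2)
    (hd : 0 < d) (hpow : d ^ 5 = 8 / 3 * a * A * t) (hda : d ≤ 2 * a) (hdA : d ≤ 2 * A)
    (had : a + d ≤ 1) : ∃ x, 1 - d < r x := by
  by_contra! hle
  have hpow_ge : 2 * a * A ^ 2 ≤ d ^ 5 := by
    rw [hpow]
    linarith [mul_le_mul_of_nonneg_left (three_fourths_mul_le hA.le hlam hAC) (mul_pos ha hA).le]
  have hA_le := le_sq_of_two_mul_mul_sq_le hd hda hpow_ge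
  have hd_ge : 1 / 2 ≤ d := le_of_mul_le_mul_left (by linarith) hd
  rcases hd_ge.eq_or_lt with rfl | hd_gt
  · have ha_le := le_two_mul_cube_of_two_mul_mul_sq_le ha.le hd hdA hpow_ge
    obtain rfl : a = 1 / 4 := by linarith
    obtain rfl : A = 1 / 4 := by linarith
    obtain rfl : t = 3 / 16 := by linarith
    obtain rfl : lam = 1 / 2 := by nlinarith
    exact h.not_forall_mem_Icc_half fun x ↦ ⟨hr x, (hle x).trans (by norm_num)⟩
  · have hA_lt : A < 1 / 2 := by nlinarith
    exact h.two_mul_notMem_Ioo (L := 1 - d) (fun x y ↦ by linarith [hle x, hr y]) (by linarith)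
      ⟨by linarith, by linarith⟩ ⟨by linarith, by linarith⟩

theorem thm8_general (a A t lam h₄ h₅ a₂ a₃ a₄ a₅ d : ℝ) (ha : 0 < a) (hA : 0 < A)
    (hlam : 0 ≤ lam ∧ lam ≤ 1 / 2) (hAC : A ≤ t + A * lam ^ 2)
    (hd : d = ((8 / 3) * a * A * t) ^ ((1 : ℝ) / 5)) (hda : d ≤ 2 * a) (hdA : d ≤ 2 * A)
    (had : a + d ≤ 1) (c₁ c₂ c₃ c₄ c₅ : ℝ) (hc₂ : ∃ n : ℤ, (n : ℝ) = c₂) :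
    ∃ x₁ x₂ x₃ x₄ x₅ : ℝ,
      (∃ k : ℤ, x₁ - c₁ = k) ∧ (∃ k : ℤ, x₂ - c₂ = k) ∧ (∃ k : ℤ, x₃ - c₃ = k) ∧
      (∃ k : ℤ, x₄ - c₄ = k) ∧ (∃ k : ℤ, x₅ - c₅ = k) ∧
      0 < redQ a A t lam h₄ h₅ a₂ a₃ a₄ a₅ x₁ x₂ x₃ x₄ x₅ ∧
      redQ a A t lam h₄ h₅ a₂ a₃ a₄ a₅ x₁ x₂ x₃ x₄ x₅ < d := by
  have ht : 0 < t := by linarith [three_fourths_mul_le hA.le hlam hAC]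
  have hd_pos : 0 < d := by rw [hd]; positivity
  have hpow : d ^ 5 = 8 / 3 * a * A * t := by
    rw [hd, ← Real.rpow_mul_natCast (by positivity)]
    norm_num
  obtain ⟨n, rfl⟩ := hc₂
  obtain ⟨v, hv⟩ :=
    (isQuadraticModOne_fract_neg_redQ a A t lam h₄ h₅ a₂ a₃ a₄ a₅ c₁ c₃ c₄ c₅).exists_one_sub_lt
      (fun _ ↦ Int.fract_nonneg _) ha hA hlam hAC hd_pos hpow hda hdA had
  set y := -redQ a A t lam h₄ h₅ a₂ a₃ a₄ a₅ c₁ 1 (c₃ + v.1) (c₄ + v.2.1) (c₅ + v.2.2)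
  have hQ : redQ a A t lam h₄ h₅ a₂ a₃ a₄ a₅ (c₁ + (⌊y⌋ + 1 : ℤ)) 1 (c₃ + v.1) (c₄ + v.2.1)
      (c₅ + v.2.2) = 1 - Int.fract y := by
    simp only [y, Int.fract, redQ]
    push_cast
    ring
  refine ⟨_, 1, _, _, _, ⟨⌊y⌋ + 1, add_sub_cancel_left c₁ _⟩, ⟨1 - n, by push_cast; rfl⟩,
    ⟨v.1, add_sub_cancel_left c₃ _⟩, ⟨v.2.1, add_sub_cancel_left c₄ _⟩,
    ⟨v.2.2, add_sub_cancel_left c₅ _⟩, ?_, ?_⟩ <;> rw [hQ]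
  · linarith [Int.fract_lt_one y]
  · linarith

theorem thm8 (a A t lam h₄ h₅ a₂ a₃ a₄ a₅ d : ℝ) (m K : ℤ)
    (ha : 0 < a) (hA : 0 < A) (ht : 0 < t)
    (ha₂ : -1/2 < a₂ ∧ a₂ ≤ 1/2) (ha₃ : -1/2 < a₃ ∧ a₃ ≤ 1/2)
    (ha₄ : -1/2 < a₄ ∧ a₄ ≤ 1/2) (ha₅ : -1/2 < a₅ ∧ a₅ ≤ 1/2)
    (hh₄ : -1/2 < h₄ ∧ h₄ ≤ 1/2) (hh₅ : -1/2 < h₅ ∧ h₅ ≤ 1/2)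
    (hlam : 0 ≤ lam ∧ lam ≤ 1/2) (hAC : A ≤ t + A * lam^2)
    (hmin_le : ∀ u v w : ℤ, ¬(u = 0 ∧ v = 0 ∧ w = 0) →
      a ≤ redPhi a A t lam h₄ h₅ (u : ℝ) (v : ℝ) (w : ℝ))
    (hmin_eq : ∃ u v w : ℤ, ¬(u = 0 ∧ v = 0 ∧ w = 0) ∧
      redPhi a A t lam h₄ h₅ (u : ℝ) (v : ℝ) (w : ℝ) = a)
    (hd : d = ((8/3) * a * A * t) ^ ((1 : ℝ)/5))
    (hm : (m : ℝ) < d / a ∧ d / a ≤ (m : ℝ) + 1)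
    (hK : (K : ℝ) < (d + ((m : ℝ)^2 - 1) * a / 4) / A ∧
          (d + ((m : ℝ)^2 - 1) * a / 4) / A ≤ (K : ℝ) + 1)
    (ha' : a < 1/2) (hd1 : d ≤ 1) (had : a + d ≤ 1)
    (hmK : m = 1 ∧ K = 1)
    (c₁ c₂ c₃ c₄ c₅ : ℝ) (hc₂ : ∃ n : ℤ, (n : ℝ) = c₂) :
    ∃ x₁ x₂ x₃ x₄ x₅ : ℝ,
      (∃ k : ℤ, x₁ - c₁ = k) ∧ (∃ k : ℤ, x₂ - c₂ = k) ∧ (∃ k : ℤ, x₃ - c₃ = k) ∧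
      (∃ k : ℤ, x₄ - c₄ = k) ∧ (∃ k : ℤ, x₅ - c₅ = k) ∧
      0 < redQ a A t lam h₄ h₅ a₂ a₃ a₄ a₅ x₁ x₂ x₃ x₄ x₅ ∧
      redQ a A t lam h₄ h₅ a₂ a₃ a₄ a₅ x₁ x₂ x₃ x₄ x₅ < d := by
  obtain ⟨rfl, rfl⟩ := hmK
  have hda : d ≤ 2 * a := by have := (div_le_iff₀ ha).mp hm.2; push_cast at this; linarith
  have hdA : d ≤ 2 * A := by have := (div_le_iff₀ hA).mp hK.2; push_cast at this; linarith
  exact thm8_general a A t lam h₄ h₅ a₂ a₃ a₄ a₅ d ha hA hlam hAC hd hda hdA had c₁ c₂ c₃ c₄ c₅ hc₂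
end

section
/- Lemma 3 (Dumir): Let α, β, γ be real numbers with γ > 1, and let m be the unique integer with m < γ ≤ m + 1. If 1/4 < β ≤ γ + m²/4, then for every real number x_0 there exists a real x with x − x_0 ∈ ℤ such that 0 < −(x + α)² + β ≤ γ. Moreover, if in addition β < γ + m²/4, then x can be chosen so that 0 < −(x + α)² + β < γ. -/
/-!
Every residue class modulo `1` contains, for each natural number `k`, a point `y` with
`k / 2 ≤ |y| ≤ (k + 1) / 2`. Such a `y` satisfies `0 < β - y ^ 2 ≤ γ` as soon as
`((k + 1) / 2) ^ 2 < β ≤ γ + (k / 2) ^ 2`. The gap between the lower end for `k + 1` and the upper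
end for `k` is `((k + 2) / 2) ^ 2 - (γ + (k / 2) ^ 2) = k + 1 - γ`, which is negative for
`k < m < γ`, so the ranges of `β` for `k = 0, …, m` cover all of `1 / 4 < β ≤ γ + (m / 2) ^ 2`.
-/

section ArchimedeanField

variable {K : Type*} [Field K] [LinearOrder K] [IsStrictOrderedRing K]

theorem exists_int_abs_add_mem_Icc_half [Archimedean K] (k : ℕ) (c : K) :
    ∃ n : ℤ, |c + n| ∈ Set.Icc ((k : K) / 2) ((k + 1) / 2) := by
  obtain ⟨n, ⟨h_lower, h_upper⟩, -⟩ :=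
    existsUnique_add_zsmul_mem_Ioc (zero_lt_one' K) c (((k : K) - 1) / 2)
  rw [zsmul_one] at h_lower h_upper
  rcases le_or_gt ((k : K) / 2) (c + n) with h | h
  · refine ⟨n, ?_⟩
    rw [abs_of_nonneg ((by positivity : (0 : K) ≤ k / 2).trans h)]
    exact ⟨h, by linarith⟩
  · -- `y ↦ |y - k|` maps `((k - 1) / 2, k / 2)` onto `(k / 2, (k + 1) / 2)`.
    refine ⟨n - k, ?_⟩
    push_cast
    rw [abs_of_nonpos (by linarith [k.cast_nonneg (α := K)])]
    constructor <;> linarith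

theorem exists_le_half_sq_lt_and_lt_add_half_sq {β γ : K} {m : ℕ} (hm : m < γ) (hβ : 1 / 4 < β) :
    ∃ k ≤ m, (((k : K) + 1) / 2) ^ 2 < β ∧ (k < m → β < γ + ((k : K) / 2) ^ 2) := by
  classical
  let P : ℕ → Prop := fun k ↦ (((k : K) + 1) / 2) ^ 2 < β
  have hP₀ : P 0 := by norm_num [P, hβ]
  refine ⟨Nat.findGreatest P m, Nat.findGreatest_le m, Nat.findGreatest_spec m.zero_le hP₀, ?_⟩
  intro hk
  have h_not : ¬P (Nat.findGreatest P m + 1) :=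
    Nat.findGreatest_is_greatest (Nat.lt_succ_self _) hk
  generalize Nat.findGreatest P m = k at hk h_not ⊢
  have hkm : (k : K) + 1 ≤ m := mod_cast hk
  calc
    β ≤ (((k + 1 : ℕ) + 1 : K) / 2) ^ 2 := not_lt.mp h_not
    _ = (k + 1) + ((k : K) / 2) ^ 2 := by push_cast; ring
    _ < γ + ((k : K) / 2) ^ 2 := by gcongr; exact hkm.trans_lt hm

theorem dumir_lemma3_general [Archimedean K] (α β γ : K) (m : ℕ) (hm : m < γ)
    (hβ₁ : 1 / 4 < β) (hβ₂ : β ≤ γ + (m : K) ^ 2 / 4) (x₀ : K) :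
    ∃ x : K, (∃ n : ℤ, x - x₀ = n) ∧ 0 < -(x + α) ^ 2 + β ∧ -(x + α) ^ 2 + β ≤ γ ∧
      (β < γ + (m : K) ^ 2 / 4 → -(x + α) ^ 2 + β < γ) := by
  obtain ⟨k, hkm, hk_lower, hk_upper⟩ := exists_le_half_sq_lt_and_lt_add_half_sq hm hβ₁
  obtain ⟨n, h_lower, h_upper⟩ := exists_int_abs_add_mem_Icc_half k (x₀ + α)
  have h_sq_lower : ((k : K) / 2) ^ 2 ≤ (x₀ + n + α) ^ 2 := by
    rw [add_right_comm, ← sq_abs (x₀ + α + n)]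
    gcongr
  have h_sq_upper : (x₀ + n + α) ^ 2 ≤ (((k : K) + 1) / 2) ^ 2 := by
    rw [add_right_comm, ← sq_abs (x₀ + α + n)]
    gcongr
  refine ⟨x₀ + n, ⟨n, by ring⟩, by linarith, ?_⟩
  rcases hkm.eq_or_lt with rfl | hlt
  · exact ⟨by linarith, fun h ↦ by linarith⟩
  · have h_strict : -(x₀ + n + α) ^ 2 + β < γ := by linarith [hk_upper hlt]
    exact ⟨h_strict.le, fun _ ↦ h_strict⟩

end ArchimedeanField

/-- Lemma 3 (Dumir): for reals `α, β, γ` with `γ > 1`, `m` the integer with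
`m < γ ≤ m+1`, and `1/4 < β ≤ γ + m²/4`, the inequality `0 < −(x+α)² + β ≤ γ` is
soluble with `x ≡ x₀ (mod 1)` for every real `x₀`; strict inequality in
`β ≤ γ + m²/4` gives strict inequality in the conclusion. -/
theorem dumir_lemma3 (α β γ : ℝ) (hγ : 1 < γ) (m : ℤ)
    (hm₁ : (m : ℝ) < γ) (hm₂ : γ ≤ (m : ℝ) + 1)
    (hβ₁ : 1/4 < β) (hβ₂ : β ≤ γ + (m : ℝ)^2/4) :
    (∀ x₀ : ℝ, ∃ x : ℝ, (∃ n : ℤ, x - x₀ = n) ∧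
      0 < -(x + α)^2 + β ∧ -(x + α)^2 + β ≤ γ) ∧
    (β < γ + (m : ℝ)^2/4 → ∀ x₀ : ℝ, ∃ x : ℝ, (∃ n : ℤ, x - x₀ = n) ∧
      0 < -(x + α)^2 + β ∧ -(x + α)^2 + β < γ) := by
  lift m to ℕ using by exact_mod_cast (by linarith : (0 : ℝ) ≤ m)
  choose x hx hpos hle hlt using dumir_lemma3_general α β γ m hm₁ hβ₁ hβ₂
  exact ⟨fun x₀ ↦ ⟨x x₀, hx x₀, hpos x₀, hle x₀⟩, fun h x₀ ↦ ⟨x x₀, hx x₀, hpos x₀, hlt x₀ h⟩⟩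
end
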